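/- The equation Y² = 3³·5·X⁵ − 2⁴·5 (that is, Y² = 135X⁵ − 80) has no rational solutions (X, Y) ∈ ℚ × ℚ. -/

import Mathlib

/-!
Write `X = p / (w²d)` in lowest terms with `d` squarefree. Clearing denominators shows that `d`
divides `15` and that `5r² = d(27p⁵ - 16(w²d)⁵)` for some integer `r`. So, up to the factor `27`, a
fifth power is the norm of an explicit element of `ℤ[√-5]`, and since the class number `2` of that
ring is prime to `5`, the element is essentially the fifth power of some `a + b√-5`.

For `d = 5` and `d = 3` this is impossible modulo `5` and modulo `25`. For `d = 15` it leads to an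
equation `R² - 5S² = t⁵`, excluded by infinite descent in `ℤ[√5]`. For `d = 1` it leads to the Thue
equation `F(a, b) = 36w⁵`, where `F` is an irreducible binary quintic form and `F(a, b)` is, up to a
constant, the norm of `aξ - 5b` for an algebraic integer `ξ` of degree five. The field `ℚ(ξ)` has
class number one, so `aξ - 5b` is a known constant times one of finitely many representatives of the
units modulo fifth powers, times a fifth power; each of these possibilities is excluded by
congruences modulo suitable primes.
-/

/-! ## Quadratic orders `ℤ[√d]` with `|d| ≤ 5` -/

theorem exists_four_mul_sq_sub_mul_le {n : ℤ} (hn : 0 < n) (x : ℤ) :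
    ∃ q : ℤ, 4 * (x - q * n) ^ 2 ≤ n ^ 2 := by
  refine ⟨(2 * x + n) / (2 * n), ?_⟩
  have hdiv := Int.emod_add_mul_ediv (2 * x + n) (2 * n)
  have hnonneg := Int.emod_nonneg (2 * x + n) (show 2 * n ≠ 0 by lia)
  have hlt := Int.emod_lt_of_pos (2 * x + n) (show 0 < 2 * n by lia)
  set q := (2 * x + n) / (2 * n)
  set r := (2 * x + n) % (2 * n)
  have hr : 2 * (x - q * n) = r - n := by linarith
  calc 4 * (x - q * n) ^ 2 = (r - n) ^ 2 := by rw [← hr]; ring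
    _ ≤ n ^ 2 := by nlinarith

/-- If `y` is far from the multiples of `n`, then `2 * y` is close to an odd multiple of `n`. -/
theorem exists_sq_add_five_mul_sq_lt {n : ℤ} (hn : 0 < n) (x y : ℤ) :
    ∃ k q₁ q₂ : ℤ, (k = 1 ∨ k = 2) ∧
      (k * x - q₁ * n) ^ 2 + 5 * (k * y - q₂ * n) ^ 2 < n ^ 2 := by
  obtain ⟨a, ha⟩ := exists_four_mul_sq_sub_mul_le hn x
  obtain ⟨b, hb⟩ := exists_four_mul_sq_sub_mul_le hn y
  by_cases hclose : 20 * (y - b * n) ^ 2 < 3 * n ^ 2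
  · exact ⟨1, a, b, Or.inl rfl, by rw [one_mul, one_mul]; linarith⟩
  obtain ⟨c, hc⟩ := exists_four_mul_sq_sub_mul_le hn (2 * x)
  push Not at hclose
  set r := y - b * n with hr
  rcases le_total 0 r with hr0 | hr0
  · refine ⟨2, c, 2 * b + 1, Or.inr rfl, ?_⟩
    rw [show 2 * y - (2 * b + 1) * n = 2 * r - n by rw [hr]; ring]
    have hle : 2 * r ≤ n := by nlinarith
    have hge : 3 * n ≤ 8 * r := by nlinarith
    nlinarith
  · refine ⟨2, c, 2 * b - 1, Or.inr rfl, ?_⟩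
    rw [show 2 * y - (2 * b - 1) * n = 2 * r + n by rw [hr]; ring]
    have hle : -2 * r ≤ n := by nlinarith
    have hge : 3 * n ≤ -8 * r := by nlinarith
    nlinarith

section Zsqrtd

open Zsqrtd

variable {d : ℤ}

theorem zsqrtd_isDomain (hsq : ∀ n : ℤ, d ≠ n * n) : IsDomain (ℤ√d) := by
  have : NoZeroDivisors (ℤ√d) := ⟨fun {a b} hab => by
    have hnorm := congrArg norm hab
    rw [norm_mul, norm_zero, mul_eq_zero] at hnorm
    exact hnorm.imp (norm_eq_zero hsq a).1 (norm_eq_zero hsq b).1⟩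
  exact NoZeroDivisors.to_isDomain _

theorem zsqrtd_norm_pow (z : ℤ√d) (n : ℕ) : (z ^ n).norm = z.norm ^ n :=
  map_pow normMonoidHom z n

theorem zsqrtd_norm_two_pow (n : ℕ) : ((2 : ℤ√d) ^ n).norm = 4 ^ n := by
  rw [zsqrtd_norm_pow, show (2 : ℤ√d).norm = 4 from norm_natCast 2]

theorem exists_abs_norm_mul_sub_mul_lt (hd : |d| ≤ 5) (hsq : ∀ n : ℤ, d ≠ n * n)
    {α : ℤ√d} (hα : α ≠ 0) (β : ℤ√d) :
    ∃ (k : ℤ) (q : ℤ√d), (k = 1 ∨ k = 2) ∧ |((k : ℤ√d) * β - q * α).norm| < |α.norm| := by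
  have hpos : 0 < |α.norm| := abs_pos.2 fun h => hα ((norm_eq_zero hsq α).1 h)
  obtain ⟨k, q₁, q₂, hk, hlt⟩ :=
    exists_sq_add_five_mul_sq_lt hpos (β * star α).re (β * star α).im
  obtain ⟨σ, hσ⟩ : ∃ σ : ℤ, |α.norm| = σ * α.norm := by
    rcases abs_choice α.norm with h | h
    · exact ⟨1, by rw [h, one_mul]⟩
    · exact ⟨-1, by rw [h, neg_one_mul]⟩
  refine ⟨k, ⟨q₁ * σ, q₂ * σ⟩, hk, lt_of_mul_lt_mul_right ?_ hpos.le⟩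
  set r₁ := k * (β * star α).re - q₁ * |α.norm|
  set r₂ := k * (β * star α).im - q₂ * |α.norm|
  have hmul : ((k : ℤ√d) * β - (⟨q₁ * σ, q₂ * σ⟩ : ℤ√d) * α) * star α = ⟨r₁, r₂⟩ := by
    rw [sub_mul, mul_assoc, mul_assoc, ← norm_eq_mul_conj]
    simp only [r₁, r₂, hσ]
    ext <;> simp <;> ring
  have hnorm := congrArg norm hmul
  rw [norm_mul, norm_conj, norm_def ⟨r₁, r₂⟩] at hnorm
  rw [← abs_mul, hnorm, ← sq, abs_lt]
  obtain ⟨hd₁, hd₂⟩ := abs_le.1 hd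
  constructor <;> nlinarith [sq_nonneg r₁, sq_nonneg r₂]

/-- A Dedekind–Hasse argument: `α` is a nonzero element of minimal norm in `I`. -/
theorem exists_mem_forall_dvd_two_mul (hd : |d| ≤ 5) (hsq : ∀ n : ℤ, d ≠ n * n)
    {I : Ideal (ℤ√d)} (hI : I ≠ ⊥) : ∃ α ∈ I, ∀ β ∈ I, α ∣ 2 * β := by
  obtain ⟨α, ⟨hα, hα0⟩, hmin⟩ : ∃ α : ℤ√d, (α ∈ I ∧ α ≠ 0) ∧
      ∀ β, β ∈ I ∧ β ≠ 0 → α.norm.natAbs ≤ β.norm.natAbs :=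
    exists_minimalFor_of_wellFoundedLT (fun β : ℤ√d => β ∈ I ∧ β ≠ 0) (fun β => β.norm.natAbs)
      (Submodule.exists_mem_ne_zero_of_ne_bot hI) |>.imp fun α hα =>
        ⟨hα.1, fun β hβ => (le_total _ _).elim id (hα.2 hβ)⟩
  refine ⟨α, hα, fun β hβ => ?_⟩
  obtain ⟨k, q, hk, hlt⟩ := exists_abs_norm_mul_sub_mul_lt hd hsq hα0 β
  have hzero : (k : ℤ√d) * β - q * α = 0 := by
    by_contra hne
    have := hmin _ ⟨I.sub_mem (I.mul_mem_left _ hβ) (I.mul_mem_left _ hα), hne⟩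
    rw [Int.abs_eq_natAbs, Int.abs_eq_natAbs] at hlt
    lia
  have hdvd : α ∣ (k : ℤ√d) * β := ⟨q, by linear_combination hzero⟩
  rcases hk with rfl | rfl
  · exact (by simpa using hdvd : α ∣ β).mul_left 2
  · exact_mod_cast hdvd

theorem two_mem_of_mem_of_star_mem {γ : ℤ√d} {p : ℤ} {n : ℕ} (hp : p ≠ 0)
    (hN : γ.norm = p ^ n) (hcop : ∀ l : ℤ, Prime l → l ∣ γ.re → l ∣ d * γ.im → l ∣ p → l ∣ 2)
    (P : Ideal (ℤ√d)) [hP : P.IsPrime] (hγ : γ ∈ P) (hγ' : star γ ∈ P) : (2 : ℤ√d) ∈ P := by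
  have hprime : (P.comap (Int.castRingHom (ℤ√d))).IsPrime := hP.comap _
  obtain ⟨l, hl⟩ := IsPrincipalIdealRing.principal (P.comap (Int.castRingHom (ℤ√d)))
  have hmem (m : ℤ) : (m : ℤ√d) ∈ P ↔ l ∣ m := by
    have : (m : ℤ√d) ∈ P ↔ m ∈ P.comap (Int.castRingHom (ℤ√d)) := by simp [Ideal.mem_comap]
    rw [this, hl, Ideal.submodule_span_eq, Ideal.mem_span_singleton]
  have hlp : l ∣ p := by
    refine (hmem p).1 (hP.mem_of_pow_mem n ?_)
    rw [← Int.cast_pow, ← hN, norm_eq_mul_conj]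
    exact P.mul_mem_right _ hγ
  have hl_prime : Prime l := by
    rw [hl, Ideal.submodule_span_eq] at hprime
    exact (Ideal.span_singleton_prime (by rintro rfl; exact hp (zero_dvd_iff.1 hlp))).1 hprime
  have hre : l ∣ 2 * γ.re := by
    rw [← hmem, show ((2 * γ.re : ℤ) : ℤ√d) = γ + star γ by ext <;> simp [two_mul]]
    exact P.add_mem hγ hγ'
  have him : l ∣ 2 * (d * γ.im) := by
    rw [← hmem, show ((2 * (d * γ.im) : ℤ) : ℤ√d) = sqrtd * (γ - star γ) by
      ext <;> simp; ring]
    exact P.mul_mem_left _ (P.sub_mem hγ hγ')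
  suffices l ∣ 2 by exact_mod_cast (hmem 2).2 this
  rcases hl_prime.dvd_or_dvd hre with h2 | hre
  · exact h2
  rcases hl_prime.dvd_or_dvd him with h2 | him
  · exact h2
  · exact hcop l hl_prime hre him hlp

/-- `α` is the generator up to `2` of the ideal `(γ, p)`, whose `n`-th power is `(γ)` away from
`2`. -/
theorem exists_pow_eq_mul_dvd_two_pow (hd : |d| ≤ 5) (hsq : ∀ n : ℤ, d ≠ n * n)
    {γ : ℤ√d} {p : ℤ} {n : ℕ} (hp : p ≠ 0) (hN : γ.norm = p ^ n)
    (hcop : ∀ l : ℤ, Prime l → l ∣ γ.re → l ∣ d * γ.im → l ∣ p → l ∣ 2) :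
    ∃ (α δ : ℤ√d) (e : ℕ), α ^ n = γ * δ ∧ δ ∣ 2 ^ e := by
  have := zsqrtd_isDomain hsq
  have hγ : γ ≠ 0 := by
    rintro rfl
    exact pow_ne_zero n hp (hN.symm.trans norm_zero)
  have hpow : (p : ℤ√d) ^ n = γ * star γ := by
    rw [← norm_eq_mul_conj, hN, Int.cast_pow]
  obtain ⟨α, hα, hdvd⟩ := exists_mem_forall_dvd_two_mul hd hsq (I := Ideal.span {γ, (p : ℤ√d)})
    fun h => hγ ((Submodule.eq_bot_iff _).1 h γ (Ideal.subset_span (by simp)))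
  have hαγ : α ∣ 2 * γ := hdvd γ (Ideal.subset_span (by simp))
  have hαp : α ∣ 2 * (p : ℤ√d) := hdvd p (Ideal.subset_span (by simp))
  obtain ⟨x, y, hxy⟩ := Ideal.mem_span_pair.1 hα
  obtain ⟨δ, hδ⟩ : γ ∣ α ^ n := by
    have hsub : γ ∣ α ^ n - (y * p) ^ n :=
      (Dvd.intro_left x (by rw [← hxy]; ring)).trans (sub_dvd_pow_sub_pow α (y * p) n)
    refine (dvd_sub_left ?_).1 hsub
    rw [mul_pow, hpow]
    exact (dvd_mul_right γ _).mul_left _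
  have hδγ : δ ∣ (2 * γ) ^ n := (Dvd.intro_left γ hδ.symm).trans (pow_dvd_pow_of_dvd hαγ n)
  have hδγ' : δ ∣ 2 ^ n * star γ := by
    refine (mul_dvd_mul_iff_left hγ).1 ?_
    rw [← hδ, mul_left_comm, ← hpow, ← mul_pow]
    exact pow_dvd_pow_of_dvd hαp n
  have hrad : (2 : ℤ√d) ∈ (Ideal.span {δ}).radical := by
    rw [Ideal.radical_eq_sInf, Ideal.mem_sInf]
    rintro P ⟨hle, hP⟩
    have hmem {z : ℤ√d} (hz : δ ∣ z) : z ∈ P := hle (Ideal.mem_span_singleton.2 hz)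
    rcases hP.mem_or_mem (hP.mem_of_pow_mem n (hmem hδγ)) with h2 | hγP
    · exact h2
    rcases hP.mem_or_mem (hmem hδγ') with h2 | hγP'
    · exact hP.mem_of_pow_mem n h2
    · exact two_mem_of_mem_of_star_mem hp hN hcop P hγP hγP'
  obtain ⟨e, he⟩ := hrad
  exact ⟨α, δ, e, hδ, Ideal.mem_span_singleton.1 he⟩

theorem exists_natAbs_norm_eq_two_pow {δ : ℤ√d} {e : ℕ} (hδ : δ ∣ 2 ^ e) :
    ∃ f, δ.norm.natAbs = 2 ^ f := by
  have hdvd : δ.norm ∣ ((2 : ℤ√d) ^ e).norm := map_dvd normMonoidHom hδ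
  rw [zsqrtd_norm_two_pow, ← Int.natAbs_dvd_natAbs, Int.natAbs_pow] at hdvd
  have hdvd' : δ.norm.natAbs ∣ 2 ^ (2 * e) := by rw [pow_mul]; exact hdvd
  obtain ⟨f, -, hf⟩ := (Nat.dvd_prime_pow Nat.prime_two).1 hdvd'
  exact ⟨f, hf⟩

end Zsqrtd

/-! ## Fifth powers in `ℤ[√5]` and `ℤ[√-5]` -/

section Zsqrtd

open Zsqrtd

variable {d : ℤ}

theorem not_mul_self_of_eq_five_or_neg_five (hd : d = 5 ∨ d = -5) (n : ℤ) : d ≠ n * n := by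
  intro h
  have hle : n ≤ 2 := by rcases hd with rfl | rfl <;> nlinarith
  have hge : -2 ≤ n := by rcases hd with rfl | rfl <;> nlinarith
  interval_cases n <;> lia

theorem abs_le_five_of_eq_five_or_neg_five (hd : d = 5 ∨ d = -5) : |d| ≤ 5 := by
  rcases hd with rfl | rfl <;> norm_num

theorem two_dvd_or_odd_of_even_norm (hd : Odd d) {δ : ℤ√d} (hδ : Even δ.norm) :
    2 ∣ δ ∨ Odd δ.re ∧ Odd δ.im := by
  rw [show (2 : ℤ√d) = ((2 : ℤ) : ℤ√d) by norm_num, intCast_dvd]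
  simp only [norm_def, Int.even_sub, Int.even_mul, or_self, ← even_iff_two_dvd,
    ← Int.not_even_iff_odd] at hδ hd ⊢
  tauto

theorem natAbs_norm_ne_two_pow_of_odd {δ : ℤ√(-5)} (hre : Odd δ.re) (him : Odd δ.im) (f : ℕ) :
    δ.norm.natAbs ≠ 2 ^ f := by
  obtain ⟨x, hx⟩ := Int.eight_dvd_sq_sub_one_of_odd hre
  obtain ⟨y, hy⟩ := Int.eight_dvd_sq_sub_one_of_odd him
  have hN : δ.norm = 8 * (x + 5 * y) + 6 := by
    rw [norm_def]
    linear_combination hx + 5 * hy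
  have hpos := norm_nonneg (by norm_num) δ
  rcases f with _ | _ | _ | f
  · lia
  · lia
  · lia
  · rw [pow_add]; lia

theorem eight_dvd_pow_three_of_odd {δ : ℤ√5} (hre : Odd δ.re) (him : Odd δ.im) : 8 ∣ δ ^ 3 := by
  obtain ⟨x, hx⟩ := Int.eight_dvd_sq_sub_one_of_odd hre
  obtain ⟨y, hy⟩ := Int.eight_dvd_sq_sub_one_of_odd him
  refine ⟨⟨δ.re * (x + 15 * y + 2), δ.im * (3 * x + 5 * y + 1)⟩, ?_⟩
  ext <;> simp [pow_succ]
  · linear_combination δ.re * hx + 15 * δ.re * hy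
  · linear_combination 3 * δ.im * hx + 5 * δ.im * hy

theorem norm_pow_even_eq_one_of_natAbs {δ : ℤ√d} (hδ : δ.norm.natAbs = 1) {n : ℕ} (hn : Even n) :
    (δ ^ n).norm = 1 := by
  rw [zsqrtd_norm_pow]
  rcases Int.natAbs_eq_iff.1 hδ with h | h <;> simp [h, hn]

theorem natAbs_norm_eq_four_of_odd {δ : ℤ√5} {f : ℕ} (hre : Odd δ.re) (him : Odd δ.im)
    (hN : δ.norm.natAbs = 2 ^ f) : δ.norm.natAbs = 4 := by
  obtain ⟨x, hx⟩ := Int.eight_dvd_sq_sub_one_of_odd hre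
  obtain ⟨y, hy⟩ := Int.eight_dvd_sq_sub_one_of_odd him
  have hmod : δ.norm = 8 * (x - 5 * y) - 4 := by
    rw [norm_def]
    linear_combination hx - 5 * hy
  rcases f with _ | _ | _ | f
  · lia
  · lia
  · lia
  · rw [pow_add] at hN; lia

theorem exists_pow_six_eq_two_pow_mul_of_odd {δ : ℤ√5} {f : ℕ} (hre : Odd δ.re) (him : Odd δ.im)
    (hN : δ.norm.natAbs = 2 ^ f) : ∃ (j : ℕ) (ε : ℤ√5), δ ^ 6 = 2 ^ j * ε ∧ ε.norm = 1 := by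
  obtain ⟨ε, hε⟩ := eight_dvd_pow_three_of_odd hre him
  refine ⟨6, ε ^ 2, ?_, norm_pow_even_eq_one_of_natAbs ?_ even_two⟩
  · linear_combination (δ ^ 3 + 8 * ε) * hε
  · have hnorm := congrArg (fun z => (norm z).natAbs) hε
    simp only [zsqrtd_norm_pow, norm_mul, show (8 : ℤ√5).norm = 64 from rfl, Int.natAbs_pow,
      Int.natAbs_mul, natAbs_norm_eq_four_of_odd hre him hN] at hnorm
    lia

theorem exists_pow_six_eq_two_pow_mul (hd : d = 5 ∨ d = -5) {f : ℕ} {δ : ℤ√d}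
    (hN : δ.norm.natAbs = 2 ^ f) : ∃ (j : ℕ) (ε : ℤ√d), δ ^ 6 = 2 ^ j * ε ∧ ε.norm = 1 := by
  induction f using Nat.strong_induction_on generalizing δ with
  | _ f ih =>
  rcases Nat.eq_zero_or_pos f with rfl | hf
  · exact ⟨0, δ ^ 6, by ring, norm_pow_even_eq_one_of_natAbs hN (by decide)⟩
  have heven : Even δ.norm := by
    rw [← Int.natAbs_even, hN]
    exact (even_two.pow_of_ne_zero hf.ne')
  have hodd : Odd d := by rcases hd with rfl | rfl <;> decide
  rcases two_dvd_or_odd_of_even_norm hodd heven with ⟨δ', rfl⟩ | ⟨hre, him⟩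
  · have h4 : (2 : ℤ√d).norm = 4 := norm_natCast 2
    rw [norm_mul, Int.natAbs_mul, h4] at hN
    obtain ⟨g, rfl⟩ : ∃ g, f = g + 2 := by
      rcases f with _ | _ | g
      · lia
      · lia
      · exact ⟨g, rfl⟩
    obtain ⟨j, ε, hj, hε⟩ := ih g (by lia) (δ := δ') (by rw [pow_add] at hN; lia)
    exact ⟨j + 6, ε, by rw [mul_pow, hj]; ring, hε⟩
  · rcases hd with rfl | rfl
    · exact exists_pow_six_eq_two_pow_mul_of_odd hre him hN
    · exact absurd hN (natAbs_norm_ne_two_pow_of_odd hre him f)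

theorem re_pow_five (z : ℤ√d) :
    (z ^ 5).re = z.re * (z.re ^ 4 + 10 * d * z.re ^ 2 * z.im ^ 2 + 5 * d ^ 2 * z.im ^ 4) := by
  simp only [pow_succ, pow_zero, one_mul, re_mul, im_mul]
  ring

theorem im_pow_five (z : ℤ√d) :
    (z ^ 5).im = z.im * (5 * z.re ^ 4 + 10 * d * z.re ^ 2 * z.im ^ 2 + d ^ 2 * z.im ^ 4) := by
  simp only [pow_succ, pow_zero, one_mul, re_mul, im_mul]
  ring

theorem two_dvd_of_two_pow_five_dvd_pow_five (hd : d = 5 ∨ d = -5) {α : ℤ√d}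
    (hα : 2 ^ 5 ∣ α ^ 5) : 2 ∣ α := by
  have hmod : ∀ x y : ZMod 32,
      (x * (x ^ 4 + 10 * 5 * x ^ 2 * y ^ 2 + 5 * 25 * y ^ 4) = 0 ∨
        x * (x ^ 4 + 10 * (-5) * x ^ 2 * y ^ 2 + 5 * 25 * y ^ 4) = 0) →
      (y * (5 * x ^ 4 + 10 * 5 * x ^ 2 * y ^ 2 + 25 * y ^ 4) = 0 ∨
        y * (5 * x ^ 4 + 10 * (-5) * x ^ 2 * y ^ 2 + 25 * y ^ 4) = 0) →
      16 * x = 0 ∧ 16 * y = 0 := by decide +kernel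
  have hd2 : d ^ 2 = 25 := by rcases hd with rfl | rfl <;> norm_num
  rw [show (2 : ℤ√d) ^ 5 = ((32 : ℤ) : ℤ√d) by norm_num, intCast_dvd, re_pow_five, im_pow_five,
    hd2] at hα
  have hdvd (z : ℤ) : 16 * (z : ZMod 32) = 0 → (2 : ℤ) ∣ z := fun hz => by
    have := (ZMod.intCast_zmod_eq_zero_iff_dvd (16 * z) 32).1 (by exact_mod_cast hz)
    lia
  have hzero {z : ℤ} (hz : 32 ∣ z) : (z : ZMod 32) = 0 :=
    (ZMod.intCast_zmod_eq_zero_iff_dvd z 32).2 hz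
  obtain ⟨hre, him⟩ := hmod α.re α.im
    (by rcases hd with rfl | rfl
        exacts [Or.inl (mod_cast hzero hα.1), Or.inr (mod_cast hzero hα.1)])
    (by rcases hd with rfl | rfl
        exacts [Or.inl (mod_cast hzero hα.2), Or.inr (mod_cast hzero hα.2)])
  rw [show (2 : ℤ√d) = ((2 : ℤ) : ℤ√d) by norm_num, intCast_dvd]
  exact ⟨hdvd _ hre, hdvd _ him⟩

theorem five_dvd_of_pow_five_eq {a p : ℤ} {j : ℕ} (hp : p ≠ 0) (h : a ^ 5 = 4 ^ j * p ^ 5) :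
    5 ∣ j := by
  have hval := congrArg (fun z => padicValNat 2 z.natAbs) h
  have hp' : p.natAbs ^ 5 ≠ 0 := pow_ne_zero 5 (Int.natAbs_ne_zero.2 hp)
  have h4 : (4 : ℤ).natAbs ^ j = 2 ^ (2 * j) := by rw [pow_mul]; rfl
  simp only [Int.natAbs_mul, Int.natAbs_pow, h4, padicValNat.pow, padicValNat_self,
    padicValNat.mul (pow_ne_zero (2 * j) two_ne_zero) hp'] at hval
  lia

theorem exists_eq_pow_five_of_pow_five_eq_two_pow_mul (hd : d = 5 ∨ d = -5) {α γ : ℤ√d} {p : ℤ}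
    {j : ℕ} (hp : p ≠ 0) (hN : γ.norm = p ^ 5) (h : α ^ 5 = 2 ^ j * γ) : ∃ β, γ = β ^ 5 := by
  have := zsqrtd_isDomain (not_mul_self_of_eq_five_or_neg_five hd)
  induction j using Nat.strong_induction_on generalizing α with
  | _ j ih =>
  have hnorm := congrArg norm h
  rw [zsqrtd_norm_pow, norm_mul, zsqrtd_norm_two_pow, hN] at hnorm
  obtain ⟨k, rfl⟩ := five_dvd_of_pow_five_eq hp hnorm
  rcases k with _ | k
  · exact ⟨α, by rw [h]; ring⟩
  obtain ⟨α, rfl⟩ := two_dvd_of_two_pow_five_dvd_pow_five hd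
    (by rw [h]; exact (pow_dvd_pow 2 (by lia)).mul_right γ)
  refine ih (5 * k) (by lia) (α := α) (mul_left_cancel₀ (pow_ne_zero 5 (two_ne_zero' (ℤ√d))) ?_)
  rw [← mul_pow, h]
  ring

theorem exists_mul_eq_pow_five_of_norm_eq_pow_five (hd : d = 5 ∨ d = -5) {γ : ℤ√d} {p : ℤ}
    (hp : p ≠ 0) (hN : γ.norm = p ^ 5)
    (hcop : ∀ l : ℤ, Prime l → l ∣ γ.re → l ∣ d * γ.im → l ∣ p → l ∣ 2) :
    ∃ ε β : ℤ√d, ε.norm = 1 ∧ γ * ε = β ^ 5 := by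
  obtain ⟨α, δ, e, hα, hδ⟩ := exists_pow_eq_mul_dvd_two_pow (abs_le_five_of_eq_five_or_neg_five hd)
    (not_mul_self_of_eq_five_or_neg_five hd) hp hN hcop
  obtain ⟨f, hf⟩ := exists_natAbs_norm_eq_two_pow hδ
  obtain ⟨j, ε, hj, hε⟩ := exists_pow_six_eq_two_pow_mul hd hf
  obtain ⟨β, hβ⟩ := exists_eq_pow_five_of_pow_five_eq_two_pow_mul hd (α := α * δ) (γ := γ * ε)
    (j := j) hp (by rw [norm_mul, hN, hε, mul_one]) (by linear_combination δ ^ 5 * hα + γ * hj)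
  exact ⟨ε, β, hε, hβ⟩

theorem exists_eq_pow_five_of_norm_eq_pow_five_neg_five {γ : ℤ√(-5)} {p : ℤ} (hp : p ≠ 0)
    (hN : γ.norm = p ^ 5)
    (hcop : ∀ l : ℤ, Prime l → l ∣ γ.re → l ∣ 5 * γ.im → l ∣ p → l ∣ 2) :
    ∃ β, γ = β ^ 5 := by
  obtain ⟨ε, β, hε, hβ⟩ := exists_mul_eq_pow_five_of_norm_eq_pow_five (Or.inr rfl) hp hN
    fun l hl hre him => hcop l hl hre (by rwa [neg_mul, dvd_neg] at him)
  have hε' : ε.re ^ 2 + 5 * ε.im ^ 2 = 1 := by rw [← hε, norm_def]; ring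
  have him : ε.im = 0 := by nlinarith [sq_nonneg ε.re]
  have hre : ε.re = 1 ∨ ε.re = -1 := sq_eq_one_iff.1 (by simpa [him] using hε')
  rcases hre with hre | hre
  · obtain rfl : ε = 1 := by ext <;> simp [hre, him]
    exact ⟨β, by rw [← hβ, mul_one]⟩
  · obtain rfl : ε = -1 := by ext <;> simp [hre, him]
    exact ⟨-β, by linear_combination -hβ⟩

theorem isFundamental_nine_four :
    Pell.IsFundamental (Pell.Solution₁.mk 9 4 (by norm_num) : Pell.Solution₁ 5) := by
  refine ⟨by simp, by simp, fun {b} hb => ?_⟩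
  by_contra! hlt
  rw [Pell.Solution₁.x_mk] at hlt
  have hprop := b.prop
  have hle : b.y ≤ 4 := by nlinarith
  have hge : -4 ≤ b.y := by nlinarith
  generalize b.x = x at *
  generalize b.y = y at *
  interval_cases x <;> interval_cases y <;> lia

theorem five_dvd_im_pow_five (z : ℤ√5) : 5 ∣ (z ^ 5).im :=
  ⟨z.im * (z.re ^ 4 + 10 * z.re ^ 2 * z.im ^ 2 + 5 * z.im ^ 4), by rw [im_pow_five]; ring⟩

theorem not_five_dvd_re_of_norm_eq_one {z : ℤ√5} (hz : z.norm = 1) : ¬ 5 ∣ z.re := by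
  rintro ⟨x, hx⟩
  rw [norm_def, hx] at hz
  have : (5 : ℤ) ∣ 1 := ⟨x * (5 * x) - z.im * z.im, by linarith⟩
  lia

theorem exists_eq_pow_five_mul_fundamental_pow {ε : ℤ√5} (hε : ε.norm = 1) :
    ∃ (κ : ℤ√5) (r : ℕ), r < 5 ∧ κ.norm = 1 ∧ ε = κ ^ 5 * ⟨9, 4⟩ ^ r := by
  let a : Pell.Solution₁ 5 := Pell.Solution₁.mk 9 4 (by norm_num)
  let b : Pell.Solution₁ 5 := Pell.Solution₁.mk ε.re ε.im (by rw [← hε, norm_def]; ring)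
  obtain ⟨n, hn⟩ := isFundamental_nine_four.eq_zpow_or_neg_zpow b
  have hsplit : a ^ n = (a ^ (n / 5)) ^ 5 * a ^ (n % 5).toNat := by
    have hmod : ((n % 5).toNat : ℤ) = n % 5 := Int.toNat_of_nonneg (Int.emod_nonneg n (by norm_num))
    rw [← zpow_natCast, ← zpow_natCast a, ← zpow_mul, ← zpow_add, hmod]
    congr 1
    lia
  have hr : (n % 5).toNat < 5 := by lia
  obtain ⟨c, hc⟩ : ∃ c : Pell.Solution₁ 5, b = c ^ 5 * a ^ (n % 5).toNat := by
    rcases hn with hn | hn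
    · exact ⟨a ^ (n / 5), hn.trans hsplit⟩
    · exact ⟨-a ^ (n / 5), by rw [Odd.neg_pow (by decide), neg_mul, ← hsplit]; exact hn⟩
  refine ⟨c, _, hr, norm_eq_one_iff_mem_unitary.2 c.2, ?_⟩
  exact congrArg (fun s : Pell.Solution₁ 5 => (s : ℤ√5)) hc

theorem exists_eq_pow_five_of_norm_eq_one {ε : ℤ√5} (hε : ε.norm = 1) (him : 5 ∣ ε.im) :
    ∃ κ : ℤ√5, κ.norm = 1 ∧ ε = κ ^ 5 := by
  obtain ⟨κ, r, hr, hκ, rfl⟩ := exists_eq_pow_five_mul_fundamental_pow hε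
  have hκre : ¬ 5 ∣ (κ ^ 5).re :=
    not_five_dvd_re_of_norm_eq_one (by rw [zsqrtd_norm_pow, hκ, one_pow])
  have hκim := five_dvd_im_pow_five κ
  have hr0 : r = 0 := by
    by_contra hr0
    have hr1 : 1 ≤ r := Nat.one_le_iff_ne_zero.2 hr0
    generalize κ ^ 5 = z at *
    interval_cases r <;> simp [pow_succ] at him <;> lia
  exact ⟨κ, hκ, by rw [hr0, pow_zero, mul_one]⟩

theorem exists_eq_pow_five_of_norm_eq_pow_five_five {γ : ℤ√5} {p : ℤ} (hp : p ≠ 0)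
    (hN : γ.norm = p ^ 5) (him : 5 ∣ γ.im) (hre : ¬ 5 ∣ γ.re)
    (hcop : ∀ l : ℤ, Prime l → l ∣ γ.re → l ∣ 5 * γ.im → l ∣ p → l ∣ 2) :
    ∃ β, γ = β ^ 5 := by
  obtain ⟨ε, β, hε, hβ⟩ := exists_mul_eq_pow_five_of_norm_eq_pow_five (Or.inl rfl) hp hN hcop
  have hεim : 5 ∣ ε.im := by
    have h5 := five_dvd_im_pow_five β
    rw [← hβ, im_mul] at h5
    have hmul : 5 ∣ γ.re * ε.im := (dvd_add_left (him.mul_right _)).1 h5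
    exact ((show Prime (5 : ℤ) by norm_num).dvd_or_dvd hmul).resolve_left hre
  obtain ⟨κ, hκ, rfl⟩ := exists_eq_pow_five_of_norm_eq_one hε hεim
  have hinv : κ * star κ = 1 := by rw [← norm_eq_mul_conj, hκ, Int.cast_one]
  exact ⟨β * star κ, by rw [mul_pow, ← hβ, mul_assoc, ← mul_pow, hinv, one_pow, mul_one]⟩

/-- The cofactor of `a` in the first coordinate of `(a + b√d) ^ 5`, for `d = ±5`. -/
def reQuartic (d a b : ℤ) : ℤ := a ^ 4 + 10 * d * a ^ 2 * b ^ 2 + 125 * b ^ 4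

/-- The cofactor of `5 * b` in the second coordinate of `(a + b√d) ^ 5`, for `d = ±5`. -/
def imQuartic (d a b : ℤ) : ℤ := a ^ 4 + 2 * d * a ^ 2 * b ^ 2 + 5 * b ^ 4

theorem exists_eq_of_sq_add_five_mul_sq_eq_pow_five {u v p : ℤ} (hp : p ≠ 0)
    (h : u ^ 2 + 5 * v ^ 2 = p ^ 5)
    (hcop : ∀ l : ℤ, Prime l → l ∣ u → l ∣ 5 * v → l ∣ p → l ∣ 2) :
    ∃ a b : ℤ, u = a * reQuartic (-5) a b ∧ v = 5 * b * imQuartic (-5) a b ∧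
      a ^ 2 + 5 * b ^ 2 = p := by
  have hN : (⟨u, v⟩ : ℤ√(-5)).norm = p ^ 5 := by rw [norm_def, ← h]; ring
  obtain ⟨β, hβ⟩ := exists_eq_pow_five_of_norm_eq_pow_five_neg_five hp hN hcop
  refine ⟨β.re, β.im, ?_, ?_, ?_⟩
  · rw [show u = (β ^ 5).re from congrArg re hβ, re_pow_five, reQuartic]; ring
  · rw [show v = (β ^ 5).im from congrArg im hβ, im_pow_five, imQuartic]; ring
  · have hodd : Odd 5 := by decide
    rw [hβ, zsqrtd_norm_pow, hodd.pow_inj, norm_def] at hN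
    linear_combination hN

theorem exists_eq_of_sq_sub_five_mul_sq_eq_pow_five {u v p : ℤ} (hp : p ≠ 0)
    (h : u ^ 2 - 5 * v ^ 2 = p ^ 5) (hcop : IsCoprime u v) (hv : 5 ∣ v) :
    ∃ a b : ℤ, u = a * reQuartic 5 a b ∧ v = 5 * b * imQuartic 5 a b := by
  have hN : (⟨u, v⟩ : ℤ√5).norm = p ^ 5 := by rw [norm_def, ← h]; ring
  have hprime : Prime (5 : ℤ) := by norm_num
  have hu : ¬ 5 ∣ u := fun hu => hprime.not_isUnit (hcop.isUnit_of_dvd' hu hv)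
  obtain ⟨β, hβ⟩ := exists_eq_pow_five_of_norm_eq_pow_five_five hp hN hv hu
    fun l hl hlu hlv _ => by
      rcases hl.dvd_or_dvd hlv with hl5 | hlv
      · exact absurd (((hl.associated_of_dvd hprime hl5).dvd_iff_dvd_left).1 hlu) hu
      · exact absurd (hcop.isUnit_of_dvd' hlu hlv) hl.not_isUnit
  refine ⟨β.re, β.im, ?_, ?_⟩
  · rw [show u = (β ^ 5).re from congrArg re hβ, re_pow_five, reQuartic]; ring
  · rw [show v = (β ^ 5).im from congrArg im hβ, im_pow_five, imQuartic]; ring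

end Zsqrtd

/-! ## A descent for `R² - 5S² = t⁵` -/

theorem exists_eq_mul_pow_of_mul_eq_mul_pow {n : ℕ} (hn : Odd n) {κ A B c : ℤ} (hκ : κ ≠ 0)
    (h : A * B = κ * c ^ n) (hAB : IsCoprime A B) (hB : IsCoprime B κ) :
    ∃ m t, A = κ * m ^ n ∧ B = t ^ n := by
  obtain ⟨A, rfl⟩ : κ ∣ A := hB.symm.dvd_of_dvd_mul_right ⟨_, h⟩
  have hmul : A * B = c ^ n := mul_left_cancel₀ hκ (by rw [← h, mul_assoc])
  have hcop : IsCoprime A B := hAB.of_mul_left_right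
  obtain ⟨m, rfl⟩ := Int.eq_pow_of_mul_eq_pow_odd_left hcop hn hmul
  obtain ⟨t, rfl⟩ := Int.eq_pow_of_mul_eq_pow_odd_right hcop hn hmul
  exact ⟨m, t, rfl, rfl⟩

theorem isCoprime_three_iff {n : ℤ} : IsCoprime n 3 ↔ ¬ 3 ∣ n := by
  rw [isCoprime_comm, Int.prime_three.coprime_iff_not_dvd]

theorem isCoprime_five_iff {n : ℤ} : IsCoprime n 5 ↔ ¬ 5 ∣ n := by
  rw [isCoprime_comm, (show Prime (5 : ℤ) by norm_num).coprime_iff_not_dvd]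

theorem isCoprime_sq_add_mul_sq {a b : ℤ} (d : ℤ) (hab : IsCoprime a b) :
    IsCoprime (a ^ 2 + d * b ^ 2) b := by
  rw [show d * b ^ 2 = b * (d * b) by ring]
  exact hab.pow_left.add_mul_left_left (d * b)

theorem odd_add_or_odd_of_isCoprime {a b : ℤ} (h : IsCoprime a b) :
    Odd (a + b) ∨ Odd a ∧ Odd b := by
  have : ¬ (Even a ∧ Even b) := fun ⟨ha, hb⟩ =>
    Int.prime_two.not_isUnit (h.isUnit_of_dvd' ha.two_dvd hb.two_dvd)
  simp only [← Int.not_even_iff_odd, Int.even_add]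
  tauto

section imQuartic

variable {d a b : ℤ}

theorem imQuartic_eq_sq_sub_five_mul_sq (hd : d = 5 ∨ d = -5) :
    imQuartic d a b = (a ^ 2 + d * b ^ 2) ^ 2 - 5 * (2 * b ^ 2) ^ 2 := by
  rcases hd with rfl | rfl <;> (rw [imQuartic]; ring)

theorem isCoprime_imQuartic (h : IsCoprime a b) : IsCoprime b (imQuartic d a b) := by
  have := h.symm.pow_right (n := 4) |>.add_mul_left_right (2 * d * a ^ 2 * b + 5 * b ^ 3)
  rwa [show a ^ 4 + b * (2 * d * a ^ 2 * b + 5 * b ^ 3) = imQuartic d a b by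
    rw [imQuartic]; ring] at this

theorem odd_imQuartic (h : Odd (a + b)) : Odd (imQuartic d a b) := by
  have h5 : ¬ Even (5 : ℤ) := by decide
  simp only [imQuartic, ← Int.not_even_iff_odd, Int.even_add, Int.even_mul, Int.even_pow,
    even_two] at h ⊢
  tauto

theorem isCoprime_imQuartic_three (hd : d = 5 ∨ d = -5) (h : IsCoprime a b) :
    IsCoprime (imQuartic d a b) 3 := by
  rw [isCoprime_three_iff]
  intro hdvd
  have hmod : ∀ x y : ZMod 3, (x ^ 4 + 2 * 5 * x ^ 2 * y ^ 2 + 5 * y ^ 4 = 0 ∨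
      x ^ 4 + 2 * (-5) * x ^ 2 * y ^ 2 + 5 * y ^ 4 = 0) → x = 0 ∧ y = 0 := by decide
  have hiff (z : ℤ) : (z : ZMod 3) = 0 ↔ 3 ∣ z := ZMod.intCast_zmod_eq_zero_iff_dvd z 3
  have hzero := (hiff _).2 hdvd
  have := hmod a b (by
    rcases hd with rfl | rfl <;> simp only [imQuartic] at hzero <;> push_cast at hzero
    exacts [Or.inl hzero, Or.inr hzero])
  exact Int.prime_three.not_isUnit (h.isUnit_of_dvd' ((hiff a).1 this.1) ((hiff b).1 this.2))

theorem isCoprime_imQuartic_five (hd : d = 5 ∨ d = -5) (ha : ¬ 5 ∣ a) :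
    IsCoprime (imQuartic d a b) 5 := by
  obtain ⟨c, rfl⟩ : 5 ∣ d := by rcases hd with rfl | rfl <;> decide
  have := ((isCoprime_five_iff.2 ha).pow_left (m := 4)).add_mul_left_left
    (2 * c * a ^ 2 * b ^ 2 + b ^ 4)
  rwa [show a ^ 4 + 5 * (2 * c * a ^ 2 * b ^ 2 + b ^ 4) = imQuartic (5 * c) a b by
    rw [imQuartic]; ring] at this

theorem isCoprime_imQuartic_thirty (hd : d = 5 ∨ d = -5) (h : IsCoprime a b) (ha : ¬ 5 ∣ a)
    (hpar : Odd (a + b)) : IsCoprime (imQuartic d a b) 30 :=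
  ((Int.isCoprime_two_right.2 (odd_imQuartic hpar)).mul_right
    (isCoprime_imQuartic_three hd h)).mul_right (isCoprime_imQuartic_five hd ha)

end imQuartic

theorem exists_imQuartic_eq_pow_five {R S t m κ : ℤ} {N : ℕ} (h : R ^ 2 - 5 * S ^ 2 = t ^ 5)
    (hcop : IsCoprime R S) (hpar : Odd (R + S)) (hκ : κ ∣ 30 ^ N) (hS : S = 25 * κ * m ^ 5) :
    ∃ u v t' m' : ℤ, IsCoprime u v ∧ Odd (u + v) ∧ imQuartic 5 u v = t' ^ 5 ∧
      v = 5 * κ * m' ^ 5 ∧ S = 5 * v * imQuartic 5 u v := by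
  have h5S : 5 ∣ S := ⟨5 * κ * m ^ 5, by rw [hS]; ring⟩
  have hprime : Prime (5 : ℤ) := by norm_num
  have h5R : ¬ 5 ∣ R := fun h5R => hprime.not_isUnit (hcop.isUnit_of_dvd' h5R h5S)
  have ht : t ≠ 0 := by
    rintro rfl
    exact h5R (hprime.dvd_of_dvd_pow (n := 2) ⟨S ^ 2, by linear_combination h⟩)
  obtain ⟨u, v, hu, hv⟩ := exists_eq_of_sq_sub_five_mul_sq_eq_pow_five ht h hcop h5S
  have huv : IsCoprime u v := (hcop.of_isCoprime_of_dvd_left ⟨_, hu⟩).of_isCoprime_of_dvd_right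
    ⟨5 * imQuartic 5 u v, by rw [hv]; ring⟩
  have hodd : Odd (u + v) := by
    have h125 : ¬ Even (125 : ℤ) := by decide
    have h5 : ¬ Even (5 : ℤ) := by decide
    simp only [hu, hv, reQuartic, imQuartic, ← Int.not_even_iff_odd, Int.even_add,
      Int.even_mul, Int.even_pow] at hpar ⊢
    tauto
  have h30 := isCoprime_imQuartic_thirty (Or.inl rfl) huv (fun h5 => h5R (hu ▸ h5.mul_right _)) hodd
  have hκ' : 5 * κ ∣ 30 ^ (N + 1) := by
    rw [pow_succ', mul_comm 5]
    exact (mul_dvd_mul hκ (by norm_num : (5 : ℤ) ∣ 30)).trans (by rw [mul_comm])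
  obtain ⟨m', t', hm', ht'⟩ := exists_eq_mul_pow_of_mul_eq_mul_pow (n := 5) (by decide)
    (κ := 5 * κ) (c := m) (ne_zero_of_dvd_ne_zero (by positivity) hκ')
    (mul_left_cancel₀ (by norm_num : (5 : ℤ) ≠ 0) (by linear_combination hS - hv))
    (isCoprime_imQuartic huv) (h30.pow_right.of_isCoprime_of_dvd_right hκ')
  exact ⟨u, v, t', m', huv, hodd, ht', hm', hv⟩

theorem abs_lt_abs_of_two_mul_sq_eq {u v b : ℤ} (hb : b ≠ 0)
    (h : 2 * b ^ 2 = 5 * v * imQuartic 5 u v) : |v| < |b| := by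
  have hv : 0 < |v| := abs_pos.2 (by rintro rfl; simp [hb] at h)
  have hQ : 5 * v ^ 4 ≤ imQuartic 5 u v := by
    rw [imQuartic]
    nlinarith [sq_nonneg (u ^ 2), sq_nonneg (u * v)]
  have habs : 2 * |b| ^ 2 = 5 * |v| * imQuartic 5 u v := by
    have hQ0 : 0 ≤ imQuartic 5 u v := le_trans (by positivity) hQ
    have := congrArg abs h
    rwa [abs_mul, abs_mul, abs_mul, abs_of_nonneg hQ0, abs_pow] at this
  rw [← Even.pow_abs (n := 4) (by decide) v] at hQ
  have hv2 : |v| ^ 2 ≤ |v| ^ 5 := pow_le_pow_right₀ hv (by norm_num)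
  by_contra! hle
  have hb2 : |b| ^ 2 ≤ |v| ^ 2 := pow_le_pow_left₀ (abs_nonneg b) hle 2
  nlinarith [mul_le_mul_of_nonneg_left hQ hv.le, pow_pos hv 2]

theorem imQuartic_ne_pow_five {u v t m κ : ℤ} {N : ℕ} (hcop : IsCoprime u v) (hpar : Odd (u + v))
    (hκ : κ ∣ 30 ^ N) (hv : v = 5 * κ * m ^ 5) (hv0 : v ≠ 0) : imQuartic 5 u v ≠ t ^ 5 := by
  induction hn : v.natAbs using Nat.strong_induction_on generalizing u v t m κ N with
  | _ n ih =>
  intro h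
  have hodd : Odd (u ^ 2 + 5 * v ^ 2) := by
    have h5 : ¬ Even (5 : ℤ) := by decide
    simp only [← Int.not_even_iff_odd, Int.even_add, Int.even_mul, Int.even_pow] at hpar ⊢
    tauto
  have hcop' : IsCoprime (u ^ 2 + 5 * v ^ 2) (2 * v ^ 2) :=
    (Int.isCoprime_two_right.2 hodd).mul_right (isCoprime_sq_add_mul_sq 5 hcop).pow_right
  have hκ' : 2 * κ ^ 2 ∣ 30 ^ (1 + N * 2) := by
    rw [pow_add, pow_mul]
    exact mul_dvd_mul (by norm_num) (pow_dvd_pow_of_dvd hκ 2)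
  obtain ⟨u', v', t', m', hcop', hpar', ht', hm', hv'⟩ := exists_imQuartic_eq_pow_five
    (R := u ^ 2 + 5 * v ^ 2) (S := 2 * v ^ 2) (m := m ^ 2)
    (by rw [← h, imQuartic_eq_sq_sub_five_mul_sq (Or.inl rfl)]) hcop'
    (hodd.add_even (even_two_mul _)) hκ' (by rw [hv]; ring)
  have hlt : v'.natAbs < n := by
    have := abs_lt_abs_of_two_mul_sq_eq hv0 hv'
    rw [Int.abs_eq_natAbs, Int.abs_eq_natAbs] at this
    lia
  refine ih v'.natAbs hlt hcop' hpar' hκ' hm' ?_ rfl ht'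
  rintro rfl
  simp [hv0] at hv'

theorem sq_sub_five_mul_sq_ne_pow_five {R S t m κ : ℤ} {N : ℕ} (hcop : IsCoprime R S)
    (hpar : Odd (R + S)) (hκ : κ ∣ 30 ^ N) (hS : S = 25 * κ * m ^ 5) (hS0 : S ≠ 0) :
    R ^ 2 - 5 * S ^ 2 ≠ t ^ 5 := by
  intro h
  obtain ⟨u, v, t', m', huv, hodd, ht', hm', hv⟩ :=
    exists_imQuartic_eq_pow_five h hcop hpar hκ hS
  refine imQuartic_ne_pow_five huv hodd hκ hm' ?_ ht'
  rintro rfl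
  simp [hS0] at hv

/-! ## Sums `r² + 5s²` and fifth powers -/

theorem isUnit_of_pow_five_dvd {l c : ℤ} (hc : c ∣ 900) (h : l ^ 5 ∣ c) : IsUnit l := by
  have hdvd : l.natAbs ^ 5 ∣ 900 := by
    rw [← Int.natAbs_pow]
    exact Int.natAbs_dvd_natAbs.2 (h.trans hc)
  have hlt : l.natAbs < 4 := lt_of_pow_lt_pow_left₀ 5 (by norm_num)
    ((Nat.le_of_dvd (by norm_num) hdvd).trans_lt (by norm_num))
  rw [Int.isUnit_iff_natAbs_eq]
  generalize l.natAbs = n at *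
  interval_cases n <;> revert hdvd <;> decide

section

variable {a b p w c : ℤ}

theorem isCoprime_of_sq_add_five_mul_sq_eq (hpw : IsCoprime p w) (hp : p ≠ 0)
    (hab : a ^ 2 + 5 * b ^ 2 = p) (hc : c ∣ 900)
    (hdvd : ∀ l, l ∣ a → l ∣ b → l ^ 5 ∣ c * w ^ 5) : IsCoprime a b := by
  refine isCoprime_of_prime_dvd (fun ⟨ha, hb⟩ => hp (by rw [← hab, ha, hb]; ring)) ?_
  intro l hl hla hlb
  have hlp : l ∣ p := by
    rw [← hab]
    exact dvd_add (dvd_pow hla two_ne_zero) ((dvd_pow hlb two_ne_zero).mul_left 5)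
  have hlw : IsCoprime (l ^ 5) (w ^ 5) := (hpw.of_isCoprime_of_dvd_left hlp).pow
  exact hl.not_isUnit (isUnit_of_pow_five_dvd hc (hlw.dvd_of_dvd_mul_right (hdvd l hla hlb)))

theorem pow_five_dvd_mul_reQuartic {d l : ℤ} (ha : l ∣ a) (hb : l ∣ b) :
    l ^ 5 ∣ a * reQuartic d a b := by
  obtain ⟨a, rfl⟩ := ha
  obtain ⟨b, rfl⟩ := hb
  exact ⟨a * reQuartic d a b, by simp only [reQuartic]; ring⟩

theorem pow_five_dvd_mul_imQuartic {d l : ℤ} (ha : l ∣ a) (hb : l ∣ b) :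
    l ^ 5 ∣ 5 * b * imQuartic d a b := by
  obtain ⟨a, rfl⟩ := ha
  obtain ⟨b, rfl⟩ := hb
  exact ⟨5 * b * imQuartic d a b, by simp only [imQuartic]; ring⟩

theorem not_five_dvd_of_sq_add_five_mul_sq_eq (hp : ¬ 5 ∣ p) (hab : a ^ 2 + 5 * b ^ 2 = p) :
    ¬ 5 ∣ a := fun h =>
  hp (hab ▸ dvd_add (dvd_pow h two_ne_zero) (dvd_mul_right 5 (b ^ 2)))

end

/-- Multiplying `r + 100w⁵√-5` by `2 + √-5`, of norm `9`, makes its norm `(3p)⁵`. -/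
theorem twentySeven_mul_pow_five_ne_of_three_dvd {p r w : ℤ} (hpw : IsCoprime p w) (h5 : ¬ 5 ∣ p)
    (h3 : ¬ 3 ∣ w) (hrw : 3 ∣ r + w ^ 5) : 27 * p ^ 5 ≠ r ^ 2 + 5 * (100 * w ^ 5) ^ 2 := by
  intro h
  have hp : p ≠ 0 := by rintro rfl; exact h5 (dvd_zero 5)
  have hcop : IsCoprime (3 * p) (5 ^ 3 * w ^ 5) :=
    ((isCoprime_five_iff.2 (by decide)).pow_right.mul_right
      (isCoprime_three_iff.2 h3).symm.pow_right).mul_left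
      ((isCoprime_five_iff.2 h5).pow_right.mul_right hpw.pow_right)
  obtain ⟨a, b, -, hb, -⟩ := exists_eq_of_sq_add_five_mul_sq_eq_pow_five
    (u := 2 * r - 500 * w ^ 5) (v := r + 200 * w ^ 5) (p := 3 * p)
    (mul_ne_zero three_ne_zero hp) (by linear_combination -9 * h) (fun l hl hlu hlv hlp => by
      have hdvd : l ∣ 2 ^ 2 * (3 ^ 2 * (5 ^ 3 * w ^ 5)) := by
        have := dvd_sub (hlv.mul_left 2) (hlu.mul_left 5)
        rwa [show 2 * (5 * (r + 200 * w ^ 5)) - 5 * (2 * r - 500 * w ^ 5) =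
          2 ^ 2 * (3 ^ 2 * (5 ^ 3 * w ^ 5)) by ring] at this
      rcases hl.dvd_or_dvd hdvd with h2 | hdvd
      · exact hl.dvd_of_dvd_pow h2
      rcases hl.dvd_or_dvd hdvd with hl3 | hdvd
      · have hassoc := hl.associated_of_dvd Int.prime_three (hl.dvd_of_dvd_pow hl3)
        have h3u := hassoc.dvd_iff_dvd_left.1 hlu
        exact absurd (Int.prime_three.dvd_of_dvd_pow (n := 5) (by lia)) h3
      · exact absurd (hcop.isUnit_of_dvd' hlp hdvd) hl.not_isUnit)
  obtain ⟨x, rfl⟩ : 5 ∣ r := ⟨b * imQuartic (-5) a b - 40 * w ^ 5, by linear_combination hb⟩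
  have hdvd : 5 ∣ 27 * p ^ 5 := ⟨5 * x ^ 2 + (100 * w ^ 5) ^ 2, by rw [h]; ring⟩
  have hprime : Prime (5 : ℤ) := by norm_num
  exact h5 (hprime.dvd_of_dvd_pow ((hprime.dvd_or_dvd hdvd).resolve_left (by decide)))

theorem twentySeven_mul_pow_five_ne {p r w : ℤ} (hpw : IsCoprime p w) (h5 : ¬ 5 ∣ p)
    (h3 : ¬ 3 ∣ w) : 27 * p ^ 5 ≠ r ^ 2 + 5 * (100 * w ^ 5) ^ 2 := by
  intro h
  have hdvd : 3 ∣ (r + w ^ 5) * (-r + w ^ 5) :=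
    ⟨16667 * w ^ 10 - 9 * p ^ 5, by linear_combination h⟩
  rcases Int.prime_three.dvd_or_dvd hdvd with hrw | hrw
  · exact twentySeven_mul_pow_five_ne_of_three_dvd hpw h5 h3 hrw h
  · exact twentySeven_mul_pow_five_ne_of_three_dvd hpw h5 h3 hrw (by rw [h]; ring)

section reQuartic

variable {a b m t : ℤ}

theorem isCoprime_reQuartic {d : ℤ} (hab : IsCoprime a b) (ha : ¬ 5 ∣ a) :
    IsCoprime a (reQuartic d a b) := by
  have hcop : IsCoprime a (5 ^ 3 * b ^ 4) :=
    (isCoprime_five_iff.2 ha).pow_right.mul_right hab.pow_right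
  have := hcop.add_mul_left_right (a ^ 3 + 10 * d * a * b ^ 2)
  rwa [show 5 ^ 3 * b ^ 4 + a * (a ^ 3 + 10 * d * a * b ^ 2) = reQuartic d a b by
    rw [reQuartic]; ring] at this

theorem isCoprime_reQuartic_three (hab : IsCoprime a b) : IsCoprime (reQuartic (-5) a b) 3 := by
  rw [isCoprime_three_iff]
  intro hdvd
  have hmod : ∀ x y : ZMod 3, x ^ 4 + 10 * (-5) * x ^ 2 * y ^ 2 + 125 * y ^ 4 = 0 →
      x = 0 ∧ y = 0 := by decide
  have hiff (z : ℤ) : (z : ZMod 3) = 0 ↔ 3 ∣ z := ZMod.intCast_zmod_eq_zero_iff_dvd z 3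
  have := hmod a b (mod_cast (hiff _).2 hdvd)
  exact Int.prime_three.not_isUnit (hab.isUnit_of_dvd' ((hiff a).1 this.1) ((hiff b).1 this.2))

theorem odd_reQuartic {d : ℤ} (h : Odd (a + b)) : Odd (reQuartic d a b) := by
  have h10 : Even (10 : ℤ) := by decide
  have h125 : ¬ Even (125 : ℤ) := by decide
  simp only [reQuartic, ← Int.not_even_iff_odd, Int.even_add, Int.even_mul, Int.even_pow] at h ⊢
  tauto

theorem exists_reQuartic_eq_four_mul (ha : Odd a) (hb : Odd b) :
    ∃ c, reQuartic (-5) a b = 4 * c := by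
  obtain ⟨x, hx⟩ := Int.eight_dvd_sq_sub_one_of_odd ha
  obtain ⟨y, hy⟩ := Int.eight_dvd_sq_sub_one_of_odd hb
  refine ⟨19 + 16 * x ^ 2 - 800 * x * y + 2000 * y ^ 2 - 96 * x + 400 * y, ?_⟩
  rw [reQuartic, show a ^ 4 = (a ^ 2) ^ 2 by ring, show b ^ 4 = (b ^ 2) ^ 2 by ring,
    show a ^ 2 = 8 * x + 1 by lia, show b ^ 2 = 8 * y + 1 by lia]
  ring

/-- Modulo `25` this reads `4ᵉt⁵ = κ⁴m²⁰`, and `11` and `14` are not fifth powers. -/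
theorem five_dvd_of_reQuartic_eq {κ e : ℤ} (hκ : κ = 12 ∧ e = 1 ∨ κ = 3 ∧ e = 4)
    (ha : a = κ * m ^ 5) (h : reQuartic (-5) a b = e * t ^ 5) : 5 ∣ a := by
  have hmod : ∀ t m : ZMod 25, ((12 * m ^ 5) ^ 4 = 1 * t ^ 5 → 5 * m = 0) ∧
      ((3 * m ^ 5) ^ 4 = 4 * t ^ 5 → 5 * m = 0) := by decide +kernel
  have hre : (a : ZMod 25) ^ 4 = e * (t : ZMod 25) ^ 5 := by
    have h50 : (-50 : ZMod 25) = 0 := by decide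
    have h125 : (125 : ZMod 25) = 0 := by decide
    have := congrArg (Int.cast : ℤ → ZMod 25) h
    rw [reQuartic] at this
    push_cast at this
    rwa [h50, h125, zero_mul, zero_mul, zero_mul, add_zero, add_zero] at this
  have hm : (5 * m : ZMod 25) = 0 := by
    rw [ha] at hre
    push_cast at hre
    rcases hκ with ⟨rfl, rfl⟩ | ⟨rfl, rfl⟩
    · exact (hmod t m).1 (mod_cast hre)
    · exact (hmod t m).2 (mod_cast hre)
  have hdvd : (25 : ℤ) ∣ 5 * m := (ZMod.intCast_zmod_eq_zero_iff_dvd _ 25).1 (mod_cast hm)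
  rw [ha]
  exact (dvd_pow (by lia) (by norm_num)).mul_left κ

end reQuartic

theorem pow_five_ne_five_mul_sq_add {p r w : ℤ} (hpw : IsCoprime p w) (h3 : ¬ 3 ∣ p)
    (h5 : ¬ 5 ∣ p) : p ^ 5 ≠ 5 * r ^ 2 + 144 * w ^ 10 := by
  intro h
  have hp : p ≠ 0 := by rintro rfl; exact h5 (dvd_zero 5)
  have hcop : IsCoprime p (3 * w ^ 5) := (isCoprime_three_iff.2 h3).mul_right hpw.pow_right
  obtain ⟨a, b, ha, -, hab⟩ := exists_eq_of_sq_add_five_mul_sq_eq_pow_five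
    (u := 2 ^ 2 * (3 * w ^ 5)) (v := r) hp (by linear_combination -h) fun l hl hlu _ hlp => by
      rcases hl.dvd_or_dvd hlu with h2 | hlw
      · exact hl.dvd_of_dvd_pow h2
      · exact absurd (hcop.isUnit_of_dvd' hlp hlw) hl.not_isUnit
  have hmul : a * reQuartic (-5) a b = 12 * w ^ 5 := by rw [← ha]; ring
  have hab_cop : IsCoprime a b := isCoprime_of_sq_add_five_mul_sq_eq (c := 12) hpw hp hab
    (by norm_num) fun l hla hlb => hmul ▸ pow_five_dvd_mul_reQuartic hla hlb
  have h5a : ¬ 5 ∣ a := not_five_dvd_of_sq_add_five_mul_sq_eq h5 hab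
  have hcopa := isCoprime_reQuartic (d := -5) hab_cop h5a
  have hcop3 := isCoprime_reQuartic_three hab_cop
  rcases odd_add_or_odd_of_isCoprime hab_cop with hpar | ⟨ha, hb⟩
  · have hcop12 : IsCoprime (reQuartic (-5) a b) (2 ^ 2 * 3) :=
      (Int.isCoprime_two_right.2 (odd_reQuartic hpar)).pow_right.mul_right hcop3
    obtain ⟨m, t, hm, ht⟩ := exists_eq_mul_pow_of_mul_eq_mul_pow (n := 5) (by decide)
      (by norm_num) hmul hcopa hcop12
    exact h5a (five_dvd_of_reQuartic_eq (Or.inl ⟨rfl, rfl⟩) hm (by rw [ht, one_mul]))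
  · obtain ⟨H, hH⟩ := exists_reQuartic_eq_four_mul ha hb
    rw [hH] at hmul hcopa hcop3
    obtain ⟨m, t, hm, ht⟩ := exists_eq_mul_pow_of_mul_eq_mul_pow (n := 5) (κ := 3) (c := w)
      (by decide) (by norm_num) (by linarith) hcopa.of_mul_right_right hcop3.of_mul_left_right
    exact h5a (five_dvd_of_reQuartic_eq (Or.inr ⟨rfl, rfl⟩) hm (by rw [hH, ht]))

section imQuartic

variable {a b w : ℤ}

theorem ne_zero_of_mul_eq_mul_pow_five {c : ℤ} (hw : w ≠ 0) (h : b * c = 60 * w ^ 5) : b ≠ 0 := by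
  rintro rfl
  rw [zero_mul] at h
  exact mul_ne_zero (by norm_num) (pow_ne_zero 5 hw) h.symm

theorem mul_imQuartic_ne_of_odd_add (hw : w ≠ 0) (hab : IsCoprime a b) (ha : ¬ 5 ∣ a)
    (hpar : Odd (a + b)) : b * imQuartic (-5) a b ≠ 60 * w ^ 5 := by
  intro h
  have h30 := isCoprime_imQuartic_thirty (Or.inr rfl) hab ha hpar
  have h60 := (h30.pow_right (n := 2)).of_isCoprime_of_dvd_right (by norm_num : (60 : ℤ) ∣ 30 ^ 2)
  obtain ⟨m, t, hm, ht⟩ := exists_eq_mul_pow_of_mul_eq_mul_pow (n := 5) (by decide) (by norm_num) h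
    (isCoprime_imQuartic hab) h60
  have hodd : Odd (a ^ 2 + -5 * b ^ 2) := by
    have h5 : ¬ Even (-5 : ℤ) := by decide
    simp only [← Int.not_even_iff_odd, Int.even_add, Int.even_mul, Int.even_pow] at hpar ⊢
    tauto
  refine sq_sub_five_mul_sq_ne_pow_five (R := a ^ 2 + -5 * b ^ 2) (S := 2 * b ^ 2) (t := t)
    (m := m ^ 2) (κ := 288) (N := 5) ?_ (hodd.add_even (even_two_mul _)) (by norm_num)
    (by rw [hm]; ring) ?_ (by rw [← ht, imQuartic_eq_sq_sub_five_mul_sq (Or.inr rfl)])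
  · exact (Int.isCoprime_two_right.2 hodd).mul_right (isCoprime_sq_add_mul_sq (-5) hab).pow_right
  · exact mul_ne_zero two_ne_zero (pow_ne_zero 2 (ne_zero_of_mul_eq_mul_pow_five hw h))

theorem mul_imQuartic_ne_of_odd (hw : w ≠ 0) (hab : IsCoprime a b) (h5 : ¬ 5 ∣ a)
    (ha : Odd a) (hb : Odd b) : b * imQuartic (-5) a b ≠ 60 * w ^ 5 := by
  intro h
  obtain ⟨x, hx⟩ := Int.eight_dvd_sq_sub_one_of_odd ha
  obtain ⟨y, hy⟩ := Int.eight_dvd_sq_sub_one_of_odd hb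
  set R := 2 * (2 * x - 10 * y - 1) with hR
  have hRS : a ^ 2 + -5 * b ^ 2 = 2 * R := by linear_combination hx - 5 * hy
  have hH : imQuartic (-5) a b = 4 * (R ^ 2 - 5 * (b ^ 2) ^ 2) := by
    rw [imQuartic_eq_sq_sub_five_mul_sq (Or.inr rfl), hRS]; ring
  have h15 : IsCoprime (4 * (R ^ 2 - 5 * (b ^ 2) ^ 2)) (3 * 5) := hH ▸
    (isCoprime_imQuartic_three (Or.inr rfl) hab).mul_right
      (isCoprime_imQuartic_five (Or.inr rfl) h5)
  have hcop := isCoprime_imQuartic (d := -5) hab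
  rw [hH] at hcop h
  obtain ⟨m, t, hm, ht⟩ := exists_eq_mul_pow_of_mul_eq_mul_pow (n := 5) (κ := 15) (c := w)
    (by decide) (by norm_num) (by linarith) hcop.of_mul_right_right h15.of_mul_left_right
  have hcopR : IsCoprime (2 * R) b := hRS ▸ isCoprime_sq_add_mul_sq (-5) hab
  exact sq_sub_five_mul_sq_ne_pow_five (m := m ^ 2) (κ := 9) (N := 2)
    hcopR.of_mul_left_right.pow_right ((even_two_mul _).add_odd hb.pow) (by norm_num)
    (by rw [hm]; ring) (pow_ne_zero 2 (ne_zero_of_mul_eq_mul_pow_five hw h)) ht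

end imQuartic

theorem pow_five_ne_sq_add_five_mul_sq {p r w : ℤ} (hw : w ≠ 0) (hpw : IsCoprime p w)
    (h3 : ¬ 3 ∣ p) (h5 : ¬ 5 ∣ p) : p ^ 5 ≠ r ^ 2 + 5 * (300 * w ^ 5) ^ 2 := by
  intro h
  have hp : p ≠ 0 := by rintro rfl; exact h5 (dvd_zero 5)
  have hcop : IsCoprime p (3 * 5 ^ 3 * w ^ 5) := ((isCoprime_three_iff.2 h3).mul_right
    (isCoprime_five_iff.2 h5).pow_right).mul_right hpw.pow_right
  obtain ⟨a, b, -, hb, hab⟩ := exists_eq_of_sq_add_five_mul_sq_eq_pow_five (u := r)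
    (v := 300 * w ^ 5) hp (by linear_combination -h) fun l hl _ hlv hlp => by
      rw [show 5 * (300 * w ^ 5) = 2 ^ 2 * (3 * 5 ^ 3 * w ^ 5) by ring] at hlv
      rcases hl.dvd_or_dvd hlv with h2 | hlw
      · exact hl.dvd_of_dvd_pow h2
      · exact absurd (hcop.isUnit_of_dvd' hlp hlw) hl.not_isUnit
  have hab_cop : IsCoprime a b := isCoprime_of_sq_add_five_mul_sq_eq (c := 300) hpw hp hab
    (by norm_num) fun l hla hlb => hb ▸ pow_five_dvd_mul_imQuartic hla hlb
  have h5a : ¬ 5 ∣ a := not_five_dvd_of_sq_add_five_mul_sq_eq h5 hab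
  have hmul : b * imQuartic (-5) a b = 60 * w ^ 5 := by linarith
  rcases odd_add_or_odd_of_isCoprime hab_cop with hpar | ⟨ha, hb⟩
  · exact mul_imQuartic_ne_of_odd_add hw hab_cop h5a hpar hmul
  · exact mul_imQuartic_ne_of_odd hw hab_cop h5a ha hb hmul

/-! ## A quintic order -/

/-- The order `ℤ + ℤω₁ + ℤω₂ + ℤω₃ + ℤω₄`, which turns out to be the ring of integers of the quintic
field generated by a root of `X⁵ - 10X⁴ + 10X³ + 100X² - 100X - 80`. Elements are stored by their
coordinates, so that arithmetic in the order can be evaluated. The multiplication table comes from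
the realisation of the `ωᵢ` by `QuinticField.ω₁`, …, `QuinticField.ω₄`. -/
@[ext] structure QuinticOrder where
  a : ℤ
  b : ℤ
  c : ℤ
  d : ℤ
  e : ℤ
  deriving DecidableEq

namespace QuinticOrder

instance : Zero QuinticOrder := ⟨⟨0, 0, 0, 0, 0⟩⟩

instance : One QuinticOrder := ⟨⟨1, 0, 0, 0, 0⟩⟩

instance : Add QuinticOrder :=
  ⟨fun x y => ⟨x.a + y.a, x.b + y.b, x.c + y.c, x.d + y.d, x.e + y.e⟩⟩

instance : Neg QuinticOrder := ⟨fun x => ⟨-x.a, -x.b, -x.c, -x.d, -x.e⟩⟩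

/-- The multiplication table of `QuinticOrder`. -/
protected def mul (x y : QuinticOrder) : QuinticOrder :=
  ⟨x.a * y.a + 12 * (x.b * y.b) + 6 * (x.b * y.d + x.d * y.b) + 12 * (x.c * y.c)
      + 6 * (x.c * y.e + x.e * y.c) + 18 * (x.d * y.d) + 18 * (x.e * y.e),
   x.a * y.b + x.b * y.a - 3 * (x.b * y.e + x.e * y.b) - 2 * (x.c * y.c)
      + 3 * (x.c * y.d + x.d * y.c) + (x.c * y.e + x.e * y.c) + 4 * (x.e * y.e),
   x.a * y.c + x.c * y.a + 2 * (x.b * y.b) - 2 * (x.b * y.c + x.c * y.b)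
      + 3 * (x.b * y.d + x.d * y.b) + (x.b * y.e + x.e * y.b) + (x.c * y.d + x.d * y.c)
      + 4 * (x.d * y.e + x.e * y.d),
   x.a * y.d + x.d * y.a + 2 * (x.b * y.c + x.c * y.b) + 2 * (x.b * y.e + x.e * y.b)
      + 2 * (x.c * y.c) + 2 * (x.c * y.e + x.e * y.c) + 3 * (x.d * y.e + x.e * y.d) - x.e * y.e,
   x.a * y.e + x.e * y.a - 2 * (x.b * y.b) + 2 * (x.b * y.c + x.c * y.b)
      + 2 * (x.b * y.e + x.e * y.b) + 2 * (x.c * y.d + x.d * y.c) + 3 * (x.d * y.d)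
      - (x.d * y.e + x.e * y.d)⟩

instance : Mul QuinticOrder := ⟨QuinticOrder.mul⟩

instance : SMul ℕ QuinticOrder := ⟨fun n x => ⟨n * x.a, n * x.b, n * x.c, n * x.d, n * x.e⟩⟩

instance : SMul ℤ QuinticOrder := ⟨fun n x => ⟨n * x.a, n * x.b, n * x.c, n * x.d, n * x.e⟩⟩

instance : NatCast QuinticOrder := ⟨fun n => ⟨n, 0, 0, 0, 0⟩⟩

instance : IntCast QuinticOrder := ⟨fun n => ⟨n, 0, 0, 0, 0⟩⟩

theorem zero_def : (0 : QuinticOrder) = ⟨0, 0, 0, 0, 0⟩ := rfl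

theorem one_def : (1 : QuinticOrder) = ⟨1, 0, 0, 0, 0⟩ := rfl

theorem add_def (x y : QuinticOrder) :
    x + y = ⟨x.a + y.a, x.b + y.b, x.c + y.c, x.d + y.d, x.e + y.e⟩ := rfl

theorem neg_def (x : QuinticOrder) : -x = ⟨-x.a, -x.b, -x.c, -x.d, -x.e⟩ := rfl

theorem mul_def (x y : QuinticOrder) : x * y = QuinticOrder.mul x y := rfl

theorem nsmul_def (n : ℕ) (x : QuinticOrder) :
    n • x = ⟨n * x.a, n * x.b, n * x.c, n * x.d, n * x.e⟩ := rfl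

theorem zsmul_def (n : ℤ) (x : QuinticOrder) :
    n • x = ⟨n * x.a, n * x.b, n * x.c, n * x.d, n * x.e⟩ := rfl

theorem natCast_def (n : ℕ) : (n : QuinticOrder) = ⟨n, 0, 0, 0, 0⟩ := rfl

theorem intCast_def (n : ℤ) : (n : QuinticOrder) = ⟨n, 0, 0, 0, 0⟩ := rfl

instance : CommRing QuinticOrder where
  add_assoc x y z := by simp only [add_def]; ext <;> simp only <;> ring
  zero_add x := by simp only [add_def, zero_def]; ext <;> simp only <;> ring
  add_zero x := by simp only [add_def, zero_def]; ext <;> simp only <;> ring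
  add_comm x y := by simp only [add_def]; ext <;> simp only <;> ring
  neg_add_cancel x := by simp only [add_def, neg_def, zero_def]; ext <;> simp only <;> ring
  mul_assoc x y z := by simp only [mul_def, QuinticOrder.mul]; ext <;> simp only <;> ring
  mul_comm x y := by simp only [mul_def, QuinticOrder.mul]; ext <;> simp only <;> ring
  one_mul x := by simp only [mul_def, QuinticOrder.mul, one_def]; ext <;> simp only <;> ring
  mul_one x := by simp only [mul_def, QuinticOrder.mul, one_def]; ext <;> simp only <;> ring
  left_distrib x y z := by
    simp only [mul_def, QuinticOrder.mul, add_def]; ext <;> simp only <;> ring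
  right_distrib x y z := by
    simp only [mul_def, QuinticOrder.mul, add_def]; ext <;> simp only <;> ring
  zero_mul x := by simp only [mul_def, QuinticOrder.mul, zero_def]; ext <;> simp only <;> ring
  mul_zero x := by simp only [mul_def, QuinticOrder.mul, zero_def]; ext <;> simp only <;> ring
  nsmul n x := n • x
  nsmul_zero x := by simp only [nsmul_def, zero_def]; ext <;> simp
  nsmul_succ n x := by simp only [add_def, nsmul_def]; ext <;> push_cast <;> ring
  zsmul n x := n • x
  zsmul_zero' x := by simp only [zsmul_def, zero_def]; ext <;> simp
  zsmul_succ' n x := by simp only [add_def, zsmul_def]; ext <;> push_cast <;> ring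
  zsmul_neg' n x := by
    simp only [neg_def, zsmul_def]; ext <;> simp only [Int.negSucc_eq] <;> push_cast <;> ring
  natCast n := n
  natCast_zero := rfl
  natCast_succ n := by simp only [add_def, one_def, natCast_def]; ext <;> simp
  intCast n := n
  intCast_ofNat n := rfl
  intCast_negSucc n := by
    simp only [neg_def, intCast_def, natCast_def]; ext <;> simp [Int.negSucc_eq]

theorem sub_def (x y : QuinticOrder) :
    x - y = ⟨x.a - y.a, x.b - y.b, x.c - y.c, x.d - y.d, x.e - y.e⟩ := by
  rw [sub_eq_add_neg, neg_def, add_def]; simp only [sub_eq_add_neg]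

theorem intCast_mul (n : ℤ) (x : QuinticOrder) :
    (n : QuinticOrder) * x = ⟨n * x.a, n * x.b, n * x.c, n * x.d, n * x.e⟩ := by
  rw [← zsmul_eq_mul]; rfl

/-- The coordinate isomorphism of `QuinticOrder` with `ℤ⁵`. -/
def equivFun : QuinticOrder ≃ₗ[ℤ] (Fin 5 → ℤ) where
  toFun x := ![x.a, x.b, x.c, x.d, x.e]
  invFun v := ⟨v 0, v 1, v 2, v 3, v 4⟩
  left_inv x := rfl
  right_inv v := by ext i; fin_cases i <;> rfl
  map_add' x y := by ext i; fin_cases i <;> rfl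
  map_smul' n x := by ext i; fin_cases i <;> rfl

theorem equivFun_apply (x : QuinticOrder) : equivFun x = ![x.a, x.b, x.c, x.d, x.e] := rfl

/-- The basis vectors `1, ω₁, ω₂, ω₃, ω₄` of `QuinticOrder`, in a form that evaluates. -/
def ω : Fin 5 → QuinticOrder :=
  ![⟨1, 0, 0, 0, 0⟩, ⟨0, 1, 0, 0, 0⟩, ⟨0, 0, 1, 0, 0⟩, ⟨0, 0, 0, 1, 0⟩, ⟨0, 0, 0, 0, 1⟩]

/-- The `ℤ`-basis `1, ω₁, ω₂, ω₃, ω₄` of `QuinticOrder`. -/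
noncomputable def basis : Module.Basis (Fin 5) ℤ QuinticOrder := Module.Basis.ofEquivFun equivFun

instance : Module.Finite ℤ QuinticOrder := Module.Finite.of_basis basis

instance : Module.Free ℤ QuinticOrder := Module.Free.of_basis basis

theorem basis_apply (j : Fin 5) : basis j = ω j := by
  rw [basis, Module.Basis.coe_ofEquivFun]
  fin_cases j <;> rfl

theorem eq_add_mul_ω (x : QuinticOrder) :
    x = (x.a : QuinticOrder) + x.b * ω 1 + x.c * ω 2 + x.d * ω 3 + x.e * ω 4 := by
  simp only [intCast_mul, add_def]
  ext <;> simp [ω, intCast_def]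

/-- The minor of two columns in the last two coordinates. -/
def minor₂ (x y : QuinticOrder) : ℤ := x.d * y.e - x.e * y.d

/-- The minor of three columns in the last three coordinates. -/
def minor₃ (x y z : QuinticOrder) : ℤ := x.c * minor₂ y z - y.c * minor₂ x z + z.c * minor₂ x y

/-- The minor of four columns in the last four coordinates. -/
def minor₄ (x y z w : QuinticOrder) : ℤ :=
  x.b * minor₃ y z w - y.b * minor₃ x z w + z.b * minor₃ x y w - w.b * minor₃ x y z

/-- The determinant of five columns, by Laplace expansion; unlike `Matrix.det` it evaluates fast. -/
def det₅ (f : Fin 5 → QuinticOrder) : ℤ :=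
  (f 0).a * minor₄ (f 1) (f 2) (f 3) (f 4) - (f 1).a * minor₄ (f 0) (f 2) (f 3) (f 4)
    + (f 2).a * minor₄ (f 0) (f 1) (f 3) (f 4) - (f 3).a * minor₄ (f 0) (f 1) (f 2) (f 4)
    + (f 4).a * minor₄ (f 0) (f 1) (f 2) (f 3)

theorem det_of_equivFun (f : Fin 5 → QuinticOrder) :
    (Matrix.of fun i j => equivFun (f j) i : Matrix (Fin 5) (Fin 5) ℤ).det = det₅ f := by
  simp only [equivFun_apply]
  rw [Matrix.det_succ_row_zero]
  simp [Fin.sum_univ_succ, Matrix.det_succ_row_zero, Fin.succAbove, det₅, minor₄, minor₃, minor₂]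
  ring

/-- The matrix of multiplication by `x` in the basis `ω`. -/
def mulMatrix (x : QuinticOrder) : Matrix (Fin 5) (Fin 5) ℤ :=
  Matrix.of fun i j => equivFun (x * ω j) i

/-- The norm of `x` to `ℤ`, in a form that evaluates. -/
def normForm (x : QuinticOrder) : ℤ := det₅ fun j => x * ω j

theorem det_mulMatrix (x : QuinticOrder) : (mulMatrix x).det = normForm x :=
  det_of_equivFun fun j => x * ω j

theorem trace_mulMatrix (x : QuinticOrder) : (mulMatrix x).trace = 5 * x.a := by
  rw [Matrix.trace]
  simp only [mulMatrix, ω, mul_def, QuinticOrder.mul, equivFun_apply, Matrix.diag_apply,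
    Matrix.of_apply, Fin.sum_univ_five, Matrix.cons_val_zero, Matrix.cons_val_one, Matrix.cons_val,
    mul_one, mul_zero, add_zero, zero_add, sub_zero, zero_sub, sub_self]
  ring

theorem leftMulMatrix_basis (x : QuinticOrder) :
    Algebra.leftMulMatrix basis x = mulMatrix x := by
  ext i j
  rw [Algebra.leftMulMatrix_eq_repr_mul, basis_apply]
  rfl

theorem norm_eq_normForm (x : QuinticOrder) : Algebra.norm ℤ x = normForm x := by
  rw [Algebra.norm_eq_matrix_det basis, leftMulMatrix_basis, det_mulMatrix]

theorem trace_eq_five_mul (x : QuinticOrder) : Algebra.trace ℤ QuinticOrder x = 5 * x.a := by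
  rw [Algebra.trace_eq_matrix_trace basis, leftMulMatrix_basis, trace_mulMatrix]

theorem normForm_mul (x y : QuinticOrder) : normForm (x * y) = normForm x * normForm y := by
  rw [← norm_eq_normForm, ← norm_eq_normForm, ← norm_eq_normForm, map_mul]

theorem normForm_pow (x : QuinticOrder) (n : ℕ) : normForm (x ^ n) = normForm x ^ n := by
  rw [← norm_eq_normForm, ← norm_eq_normForm, map_pow]

theorem isUnit_iff_isUnit_normForm {x : QuinticOrder} : IsUnit x ↔ IsUnit (normForm x) := by
  rw [← norm_eq_normForm]
  refine ⟨fun h => h.map (Algebra.norm ℤ), fun h => ?_⟩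
  have hbij := (Module.End.isUnit_iff _).1 ((LinearMap.isUnit_iff_isUnit_det _).2 h)
  obtain ⟨y, hy⟩ := hbij.surjective 1
  exact IsUnit.of_mul_eq_one y hy

end QuinticOrder

/-! ## The quintic field -/

section QuinticField

open Polynomial NumberField

/-- The minimal polynomial of the generator of the quintic field. -/
noncomputable def quinticPoly : ℤ[X] :=
  X ^ 5 + (C (-10) * X ^ 4 + C 10 * X ^ 3 + C 100 * X ^ 2 + C (-100) * X + C (-80))

theorem aeval_quinticPoly {A : Type*} [CommRing A] (y : A) :
    aeval y quinticPoly = y ^ 5 - 10 * y ^ 4 + 10 * y ^ 3 + 100 * y ^ 2 - 100 * y - 80 := by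
  simp [quinticPoly, map_ofNat]
  ring

theorem natDegree_quinticPoly : quinticPoly.natDegree = 5 := by
  unfold quinticPoly; compute_degree!

theorem monic_quinticPoly : quinticPoly.Monic := by
  unfold quinticPoly; monicity!

theorem irreducible_quinticPoly : Irreducible quinticPoly := by
  have hprime : (Ideal.span {(5 : ℤ)}).IsPrime := by
    rw [Ideal.span_singleton_prime (by norm_num)]
    exact Int.prime_iff_natAbs_prime.2 (by norm_num)
  refine IsEisensteinAt.irreducible (𝓟 := Ideal.span {(5 : ℤ)}) ⟨?_, fun {n} hn => ?_, ?_⟩ hprime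
    monic_quinticPoly.isPrimitive (by rw [natDegree_quinticPoly]; norm_num)
  · rw [monic_quinticPoly.leadingCoeff, Ideal.mem_span_singleton]; norm_num
  · rw [natDegree_quinticPoly] at hn
    rw [Ideal.mem_span_singleton]
    interval_cases n <;> simp [quinticPoly, coeff_X, coeff_X_pow]
  · rw [Ideal.span_singleton_pow, Ideal.mem_span_singleton]
    simp [quinticPoly]

theorem irreducible_map_quinticPoly : Irreducible (quinticPoly.map (Int.castRingHom ℚ)) :=
  (IsPrimitive.Int.irreducible_iff_irreducible_map_cast monic_quinticPoly.isPrimitive).1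
    irreducible_quinticPoly

theorem natDegree_map_quinticPoly : (quinticPoly.map (Int.castRingHom ℚ)).natDegree = 5 := by
  rw [monic_quinticPoly.natDegree_map, natDegree_quinticPoly]

instance : Fact (Irreducible (quinticPoly.map (Int.castRingHom ℚ))) :=
  ⟨irreducible_map_quinticPoly⟩

/-- The quintic field `ℚ[X] / (X⁵ - 10X⁴ + 10X³ + 100X² - 100X - 80)`. -/
abbrev QuinticField : Type := AdjoinRoot (quinticPoly.map (Int.castRingHom ℚ))

namespace QuinticField

/-- The power basis of the quintic field given by its generator. -/
noncomputable def powerBasis : PowerBasis ℚ QuinticField :=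
  AdjoinRoot.powerBasis irreducible_map_quinticPoly.ne_zero

/-- The generator of the quintic field. -/
noncomputable def θ : QuinticField := AdjoinRoot.root _

theorem gen_powerBasis : powerBasis.gen = θ := AdjoinRoot.powerBasis_gen _

theorem dim_powerBasis : powerBasis.dim = 5 := by
  rw [powerBasis, AdjoinRoot.powerBasis_dim, natDegree_map_quinticPoly]

theorem finrank_eq_five : Module.finrank ℚ QuinticField = 5 := by
  rw [powerBasis.finrank, dim_powerBasis]

instance : FiniteDimensional ℚ QuinticField := powerBasis.finite

instance : CharZero QuinticField :=
  charZero_of_injective_algebraMap (algebraMap ℚ QuinticField).injective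

instance : NumberField QuinticField where
  to_charZero := inferInstance
  to_finiteDimensional := inferInstance

theorem θ_relation : θ ^ 5 - 10 * θ ^ 4 + 10 * θ ^ 3 + 100 * θ ^ 2 - 100 * θ - 80 = 0 := by
  rw [← aeval_quinticPoly, ← aeval_map_algebraMap ℚ]
  exact (AdjoinRoot.aeval_eq _).trans AdjoinRoot.mk_self

theorem eq_zero_of_sum_θ_pow_eq_zero {v : Fin 5 → ℚ}
    (h : ∑ i, (v i : QuinticField) * θ ^ (i : ℕ) = 0) : v = 0 := by
  have hli := Fintype.linearIndependent_iff.1 powerBasis.basis.linearIndependent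
    (fun i => v (Fin.cast dim_powerBasis i)) (by
      rw [← h, ← (finCongr dim_powerBasis).symm.sum_comp]
      simp [Rat.smul_def, gen_powerBasis])
  exact funext fun i => by simpa using hli (Fin.cast dim_powerBasis.symm i)

/-- The first of the elements completing `1` to an integral basis. -/
noncomputable def ω₁ : QuinticField := -2 + θ

/-- The second of the elements completing `1` to an integral basis. -/
noncomputable def ω₂ : QuinticField := -14 / 3 + θ + θ ^ 2 - 1 / 6 * θ ^ 3

/-- The third of the elements completing `1` to an integral basis. -/
noncomputable def ω₃ : QuinticField := 2 / 3 - 16 / 3 * θ + 2 / 3 * θ ^ 3 - 1 / 12 * θ ^ 4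

/-- The fourth of the elements completing `1` to an integral basis. -/
noncomputable def ω₄ : QuinticField := -2 / 3 + 3 * θ + 1 / 2 * θ ^ 2 - 1 / 6 * θ ^ 3

theorem ω₁_mul_ω₁ : ω₁ * ω₁ = 12 + 2 * ω₂ - 2 * ω₄ := by
  unfold ω₁ ω₂ ω₄; ring

theorem ω₁_mul_ω₂ : ω₁ * ω₂ = -2 * ω₂ + 2 * ω₃ + 2 * ω₄ := by
  unfold ω₁ ω₂ ω₃ ω₄; ring

theorem ω₁_mul_ω₃ : ω₁ * ω₃ = 6 + 3 * ω₂ := by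
  unfold ω₁ ω₂ ω₃; linear_combination (-1 / 12) * θ_relation

theorem ω₁_mul_ω₄ : ω₁ * ω₄ = -3 * ω₁ + ω₂ + 2 * ω₃ + 2 * ω₄ := by
  unfold ω₁ ω₂ ω₃ ω₄; ring

theorem ω₂_mul_ω₂ : ω₂ * ω₂ = 12 - 2 * ω₁ + 2 * ω₃ := by
  unfold ω₁ ω₂ ω₃; linear_combination (-1 / 18 + 1 / 36 * θ) * θ_relation

theorem ω₂_mul_ω₃ : ω₂ * ω₃ = 3 * ω₁ + ω₂ + 2 * ω₄ := by
  unfold ω₁ ω₂ ω₃ ω₄; linear_combination (-1 / 9 - 1 / 18 * θ + 1 / 72 * θ ^ 2) * θ_relation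

theorem ω₂_mul_ω₄ : ω₂ * ω₄ = 6 + ω₁ + 2 * ω₃ := by
  unfold ω₁ ω₂ ω₃ ω₄; linear_combination (1 / 36 + 1 / 36 * θ) * θ_relation

theorem ω₃_mul_ω₃ : ω₃ * ω₃ = 18 + 3 * ω₄ := by
  unfold ω₃ ω₄
  linear_combination (7 / 36 - 1 / 24 * θ - 1 / 24 * θ ^ 2 + 1 / 144 * θ ^ 3) * θ_relation

theorem ω₃_mul_ω₄ : ω₃ * ω₄ = 4 * ω₂ + 3 * ω₃ - ω₄ := by
  unfold ω₂ ω₃ ω₄; linear_combination (-7 / 36 - 1 / 72 * θ + 1 / 72 * θ ^ 2) * θ_relation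

theorem ω₄_mul_ω₄ : ω₄ * ω₄ = 18 + 4 * ω₁ - ω₃ := by
  unfold ω₁ ω₃ ω₄; linear_combination (1 / 9 + 1 / 36 * θ) * θ_relation

theorem linearIndependent_ω : LinearIndependent ℚ ![1, ω₁, ω₂, ω₃, ω₄] := by
  rw [Fintype.linearIndependent_iff]
  intro g hg
  have hθ := eq_zero_of_sum_θ_pow_eq_zero
    (v := ![g 0 - 2 * g 1 - 14 / 3 * g 2 + 2 / 3 * g 3 - 2 / 3 * g 4,
      g 1 + g 2 - 16 / 3 * g 3 + 3 * g 4, g 2 + 1 / 2 * g 4,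
      -1 / 6 * g 2 + 2 / 3 * g 3 - 1 / 6 * g 4, -1 / 12 * g 3]) (by
      rw [← hg]
      simp [Fin.sum_univ_five, Rat.smul_def, ω₁, ω₂, ω₃, ω₄]
      ring)
  have hcoeff := fun i => congrFun hθ i
  simp only [Fin.forall_fin_succ, Matrix.cons_val_zero, Matrix.cons_val_succ, Pi.zero_apply,
    IsEmpty.forall_iff, and_true] at hcoeff
  obtain ⟨h0, h1, h2, h3, h4⟩ := hcoeff
  intro i
  fin_cases i <;> simp only [Fin.zero_eta, Fin.mk_one, Fin.reduceFinMk] <;> linarith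

end QuinticField

namespace QuinticOrder

open QuinticField

/-- The embedding of the quintic order into the quintic field. -/
noncomputable def toField : QuinticOrder →+* QuinticField where
  toFun x := x.a + x.b * ω₁ + x.c * ω₂ + x.d * ω₃ + x.e * ω₄
  map_one' := by simp [one_def]
  map_zero' := by simp [zero_def]
  map_add' x y := by simp only [add_def]; push_cast; ring
  map_mul' x y := by
    simp only [mul_def, QuinticOrder.mul]; push_cast
    linear_combination (-(x.b : QuinticField) * y.b) * ω₁_mul_ω₁
      - ((x.b : QuinticField) * y.c + x.c * y.b) * ω₁_mul_ω₂
      - ((x.b : QuinticField) * y.d + x.d * y.b) * ω₁_mul_ω₃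
      - ((x.b : QuinticField) * y.e + x.e * y.b) * ω₁_mul_ω₄
      - ((x.c : QuinticField) * y.c) * ω₂_mul_ω₂
      - ((x.c : QuinticField) * y.d + x.d * y.c) * ω₂_mul_ω₃
      - ((x.c : QuinticField) * y.e + x.e * y.c) * ω₂_mul_ω₄
      - ((x.d : QuinticField) * y.d) * ω₃_mul_ω₃
      - ((x.d : QuinticField) * y.e + x.e * y.d) * ω₃_mul_ω₄
      - ((x.e : QuinticField) * y.e) * ω₄_mul_ω₄

theorem toField_apply (x : QuinticOrder) :
    toField x = x.a + x.b * ω₁ + x.c * ω₂ + x.d * ω₃ + x.e * ω₄ := rfl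

theorem toField_ω (j : Fin 5) : toField (ω j) = ![1, ω₁, ω₂, ω₃, ω₄] j := by
  fin_cases j <;> simp [ω, toField_apply]

/-- The image of the basis of the quintic order, as a basis of the quintic field. -/
noncomputable def fieldBasis : Module.Basis (Fin 5) ℚ QuinticField :=
  basisOfLinearIndependentOfCardEqFinrank linearIndependent_ω (by rw [finrank_eq_five]; rfl)

theorem fieldBasis_apply (j : Fin 5) : fieldBasis j = toField (ω j) := by
  rw [toField_ω, fieldBasis, coe_basisOfLinearIndependentOfCardEqFinrank]

theorem fieldBasis_repr (x : QuinticOrder) (i : Fin 5) :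
    fieldBasis.repr (toField x) i = (equivFun x i : ℚ) := by
  have hsum : toField x = ∑ j, (equivFun x j : ℚ) • fieldBasis j := by
    simp only [fieldBasis_apply, toField_ω, Fin.sum_univ_five, Rat.smul_def, equivFun_apply]
    simp [toField_apply]
  rw [hsum, Module.Basis.repr_sum_self]

theorem toField_injective : Function.Injective toField := fun x y h =>
  equivFun.injective <| funext fun i => by
    have hi := fieldBasis_repr x i
    rw [h, fieldBasis_repr] at hi
    exact_mod_cast hi.symm

theorem leftMulMatrix_toField (x : QuinticOrder) :
    Algebra.leftMulMatrix fieldBasis (toField x) = (mulMatrix x).map (Int.cast : ℤ → ℚ) := by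
  ext i j
  rw [Algebra.leftMulMatrix_eq_repr_mul, fieldBasis_apply, ← map_mul, fieldBasis_repr]
  rfl

theorem norm_toField (x : QuinticOrder) : Algebra.norm ℚ (toField x) = normForm x := by
  rw [Algebra.norm_eq_matrix_det fieldBasis, leftMulMatrix_toField, ← det_mulMatrix, Int.cast_det]

theorem trace_toField (x : QuinticOrder) :
    Algebra.trace ℚ QuinticField (toField x) = 5 * x.a := by
  rw [Algebra.trace_eq_matrix_trace fieldBasis, leftMulMatrix_toField]
  have h := congrArg (Int.cast : ℤ → ℚ) (trace_mulMatrix x)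
  push_cast at h
  rw [← h]
  exact (AddMonoidHom.map_trace (Int.castAddHom ℚ) _).symm

theorem isIntegral_toField (x : QuinticOrder) : IsIntegral ℤ (toField x) :=
  (IsIntegral.of_finite ℤ x).map toField.toIntAlgHom

end QuinticOrder

end QuinticField

/-! ## The ring of integers -/

theorem exists_eq_intCast_of_isIntegral {q : ℚ} (h : IsIntegral ℤ q) : ∃ n : ℤ, q = n := by
  obtain ⟨n, hn⟩ := IsIntegrallyClosed.isIntegral_iff.1 h
  exact ⟨n, by rw [← hn, eq_intCast]⟩

namespace QuinticOrder

open QuinticField NumberField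

/-- The traces of `β`, `ω₁β`, …, `ω₄β` determine the coordinates of `β` up to the denominators of
the inverse of the trace matrix, all of which divide `150`. -/
theorem exists_mul_eq_toField_of_isIntegral {β : QuinticField} (h : IsIntegral ℤ β) :
    ∃ r : QuinticOrder, 150 * β = toField r := by
  have htrace : ∀ j, ∃ n : ℤ,
      ∑ i, fieldBasis.repr β i * (5 * ((ω i * ω j).a : ℚ)) = n := fun j => by
    obtain ⟨n, hn⟩ := exists_eq_intCast_of_isIntegral
      (Algebra.isIntegral_trace (L := ℚ) (h.mul (isIntegral_toField (ω j))))
    refine ⟨n, ?_⟩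
    conv_rhs => rw [← hn, ← fieldBasis.sum_repr β, Finset.sum_mul, map_sum]
    refine Finset.sum_congr rfl fun i _ => ?_
    rw [smul_mul_assoc, map_smul, fieldBasis_apply, ← map_mul, trace_toField, smul_eq_mul]
  choose n hn using htrace
  have h0 := hn 0
  have h1 := hn 1
  have h2 := hn 2
  have h3 := hn 3
  have h4 := hn 4
  simp only [Fin.sum_univ_five, ω, mul_def, QuinticOrder.mul, Matrix.cons_val_zero,
    Matrix.cons_val_one, Matrix.cons_val, mul_one, mul_zero, add_zero, zero_add, sub_zero, zero_sub,
    sub_self, Int.cast_one, Int.cast_zero, Int.cast_add, Int.cast_mul, Int.cast_ofNat]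
    at h0 h1 h2 h3 h4
  refine ⟨⟨30 * n 0, 3 * n 1 - n 3, 3 * n 2 - n 4, 2 * n 3 - n 1, 2 * n 4 - n 2⟩,
    fieldBasis.ext_elem fun i => ?_⟩
  have hsmul : (150 : QuinticField) * β = (150 : ℚ) • β := by rw [Rat.smul_def]; norm_cast
  rw [fieldBasis_repr, hsmul, map_smul]
  fin_cases i <;> simp [equivFun_apply] <;> linarith

/-- Divisibility conditions on `r` saying that the traces of `(r / p)²` and `ω₁(r / p)²` and the
norms of `r / p` and `r / p + ω₄` are integers. -/
def PassesIntegralityTests (p : ℕ) (r : QuinticOrder) : Prop :=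
  (p : ℤ) ^ 2 ∣ 5 * (r * r).a ∧ (p : ℤ) ^ 2 ∣ 5 * (r * r * ω 1).a ∧
    (p : ℤ) ^ 5 ∣ normForm r ∧ (p : ℤ) ^ 5 ∣ normForm (r + p * ω 4)

instance (p : ℕ) (r : QuinticOrder) : Decidable (PassesIntegralityTests p r) := by
  unfold PassesIntegralityTests; infer_instance

/-- No nonzero reduced residue modulo `p` passes the integrality tests at `p`; this implies that the
quintic order has index prime to `p` in the ring of integers. -/
def IsSaturatedAt (p : ℕ) : Prop :=
  ∀ a < p, ∀ b < p, ∀ c < p, ∀ d < p, ∀ e < p,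
    PassesIntegralityTests p ⟨a, b, c, d, e⟩ → (⟨a, b, c, d, e⟩ : QuinticOrder) = 0

set_option synthInstance.maxSize 1000 in
instance (p : ℕ) : Decidable (IsSaturatedAt p) := by
  unfold IsSaturatedAt; infer_instance

theorem isSaturatedAt_two : IsSaturatedAt 2 := by decide +kernel

theorem isSaturatedAt_three : IsSaturatedAt 3 := by decide +kernel

theorem isSaturatedAt_five : IsSaturatedAt 5 := by decide +kernel

section

variable {p : ℕ} {γ : QuinticField} {r : QuinticOrder}

theorem pow_five_dvd_normForm (h : IsIntegral ℤ γ) (hr : p * γ = toField r) :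
    (p : ℤ) ^ 5 ∣ normForm r := by
  obtain ⟨n, hn⟩ := exists_eq_intCast_of_isIntegral (Algebra.isIntegral_norm ℚ h)
  have hp : Algebra.norm ℚ (p : QuinticField) = (p : ℚ) ^ 5 := by
    have hnorm := Algebra.norm_algebraMap (R := ℚ) (S := QuinticField) (p : ℚ)
    rwa [finrank_eq_five, map_natCast] at hnorm
  have hmul := congrArg (Algebra.norm ℚ) hr
  rw [norm_toField, map_mul, hn, hp] at hmul
  exact ⟨n, by exact_mod_cast hmul.symm⟩

theorem sq_dvd_five_mul_mul (h : IsIntegral ℤ γ) (hr : p * γ = toField r) (s : QuinticOrder) :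
    (p : ℤ) ^ 2 ∣ 5 * (r * r * s).a := by
  obtain ⟨n, hn⟩ := exists_eq_intCast_of_isIntegral
    (Algebra.isIntegral_trace (L := ℚ) ((h.mul h).mul (isIntegral_toField s)))
  have hmul : toField (r * r * s) = ((p : ℚ) ^ 2) • (γ * γ * toField s) := by
    rw [map_mul, map_mul, ← hr, Rat.smul_def]; push_cast; ring
  have htrace := trace_toField (r * r * s)
  rw [hmul, map_smul, hn, smul_eq_mul] at htrace
  exact ⟨n, by exact_mod_cast htrace.symm⟩

theorem passesIntegralityTests (h : IsIntegral ℤ γ) (hr : p * γ = toField r) :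
    PassesIntegralityTests p r := by
  refine ⟨?_, sq_dvd_five_mul_mul h hr _, pow_five_dvd_normForm h hr,
    pow_five_dvd_normForm (h.add (isIntegral_toField (ω 4))) ?_⟩
  · simpa only [mul_one] using sq_dvd_five_mul_mul h hr 1
  · rw [mul_add, hr, map_add, map_mul, map_natCast]

end

theorem exists_eq_mul_add_of_pos {p : ℕ} (hp : 0 < p) (r : QuinticOrder) :
    ∃ s : QuinticOrder, ∃ a < p, ∃ b < p, ∃ c < p, ∃ d < p, ∃ e < p,
      r = p * s + ⟨a, b, c, d, e⟩ := by
  have hdiv : ∀ x : ℤ, ∃ q : ℤ, ∃ n < p, x = p * q + (n : ℕ) := fun x => by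
    refine ⟨x / p, (x % p).toNat, ?_, ?_⟩
    · have := Int.emod_lt_of_pos x (Int.natCast_pos.2 hp)
      lia
    · rw [Int.toNat_of_nonneg (Int.emod_nonneg _ (by lia)), Int.mul_ediv_add_emod]
  obtain ⟨qa, a, ha, hra⟩ := hdiv r.a
  obtain ⟨qb, b, hb, hrb⟩ := hdiv r.b
  obtain ⟨qc, c, hc, hrc⟩ := hdiv r.c
  obtain ⟨qd, d, hd, hrd⟩ := hdiv r.d
  obtain ⟨qe, e, he, hre⟩ := hdiv r.e
  refine ⟨⟨qa, qb, qc, qd, qe⟩, a, ha, b, hb, c, hc, d, hd, e, he, ?_⟩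
  rw [← Int.cast_natCast, intCast_mul, add_def]
  ext <;> assumption

theorem mem_range_toField_of_mul_mem {p : ℕ} (hp : 0 < p) (hsat : IsSaturatedAt p)
    {γ : QuinticField} (h : IsIntegral ℤ γ) (hγ : p * γ ∈ toField.range) : γ ∈ toField.range := by
  obtain ⟨r, hr⟩ := hγ
  obtain ⟨s, a, ha, b, hb, c, hc, d, hd, e, he, rfl⟩ := exists_eq_mul_add_of_pos hp r
  have hrem : p * (γ - toField s) = toField ⟨a, b, c, d, e⟩ := by
    rw [mul_sub, ← hr, map_add, map_mul, map_natCast, add_sub_cancel_left]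
  rw [hsat a ha b hb c hc d hd e he (passesIntegralityTests (h.sub (isIntegral_toField s)) hrem),
    map_zero, mul_eq_zero, sub_eq_zero] at hrem
  exact ⟨s, (hrem.resolve_left (Nat.cast_ne_zero.2 hp.ne')).symm⟩

theorem mem_range_toField_of_isIntegral {β : QuinticField} (h : IsIntegral ℤ β) :
    β ∈ toField.range := by
  obtain ⟨r, hr⟩ := exists_mul_eq_toField_of_isIntegral h
  have hmul : ∀ n : ℕ, IsIntegral ℤ (n * β) := fun n => (isIntegral_natCast n).mul h
  refine mem_range_toField_of_mul_mem two_pos isSaturatedAt_two h ?_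
  refine mem_range_toField_of_mul_mem three_pos isSaturatedAt_three (hmul 2) ?_
  rw [show ((3 : ℕ) : QuinticField) * ((2 : ℕ) * β) = ((6 : ℕ) : QuinticField) * β by
    push_cast; ring]
  refine mem_range_toField_of_mul_mem (by norm_num) isSaturatedAt_five (hmul 6) ?_
  rw [show ((5 : ℕ) : QuinticField) * ((6 : ℕ) * β) = ((30 : ℕ) : QuinticField) * β by
    push_cast; ring]
  refine mem_range_toField_of_mul_mem (by norm_num) isSaturatedAt_five (hmul 30) ⟨r, ?_⟩
  rw [← hr]; push_cast; ring

noncomputable instance : Algebra QuinticOrder QuinticField := toField.toAlgebra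

instance : IsIntegralClosure QuinticOrder ℤ QuinticField where
  algebraMap_injective := toField_injective
  isIntegral_iff :=
    ⟨mem_range_toField_of_isIntegral, by rintro ⟨x, rfl⟩; exact isIntegral_toField x⟩

instance : IsDomain QuinticOrder := toField_injective.isDomain toField

instance : IsDedekindDomain QuinticOrder :=
  IsIntegralClosure.isDedekindDomain ℤ ℚ QuinticField QuinticOrder

/-- The quintic order is the ring of integers of the quintic field. -/
noncomputable def equivRingOfIntegers : QuinticOrder ≃ₐ[ℤ] 𝓞 QuinticField :=
  IsIntegralClosure.equiv ℤ QuinticOrder QuinticField (𝓞 QuinticField)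

theorem traceMatrix_basis : Algebra.traceMatrix ℤ basis = Matrix.of fun i j => equivFun
    ((![⟨5, 0, 0, 0, 0⟩, ⟨0, 60, 0, 30, 0⟩, ⟨0, 0, 60, 0, 30⟩, ⟨0, 30, 0, 90, 0⟩,
      ⟨0, 0, 30, 0, 90⟩] : Fin 5 → QuinticOrder) j) i := by
  ext i j
  rw [Algebra.traceMatrix_apply, Algebra.traceForm_apply, trace_eq_five_mul, basis_apply,
    basis_apply]
  fin_cases i <;> fin_cases j <;> rfl

theorem discr_quinticField : discr QuinticField = 101250000 := by
  have hbasis : ⇑(basis.map equivRingOfIntegers.toLinearEquiv) = equivRingOfIntegers ∘ basis := by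
    ext; simp
  rw [← discr_eq_discr QuinticField (basis.map equivRingOfIntegers.toLinearEquiv), hbasis,
    ← Algebra.discr_eq_discr_of_algEquiv, Algebra.discr_def, traceMatrix_basis, det_of_equivFun]
  rfl

end QuinticOrder

/-! ## Units modulo powers in number fields of odd degree -/

section UnitExponents

open NumberField NumberField.Units

variable (K : Type*) [Field K] [NumberField K]

/-- The torsion part of a unit and its exponents with respect to the fundamental system. -/
noncomputable def unitExponents (u : (𝓞 K)ˣ) : torsion K × (Fin (rank K) → ℤ) :=
  (exist_unique_eq_mul_prod K u).choose

theorem eq_unitExponents_mul_prod (u : (𝓞 K)ˣ) :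
    u = (unitExponents K u).1 * ∏ i, fundSystem K i ^ (unitExponents K u).2 i :=
  (exist_unique_eq_mul_prod K u).choose_spec.1

theorem unitExponents_mul (u v : (𝓞 K)ˣ) :
    unitExponents K (u * v) = ((unitExponents K u).1 * (unitExponents K v).1,
      (unitExponents K u).2 + (unitExponents K v).2) := by
  refine ((exist_unique_eq_mul_prod K (u * v)).choose_spec.2 _ ?_).symm
  simp only [Pi.add_apply, zpow_add, Finset.prod_mul_distrib]
  nth_rewrite 1 [eq_unitExponents_mul_prod K u, eq_unitExponents_mul_prod K v]
  push_cast
  exact mul_mul_mul_comm _ _ _ _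

/-- The exponents of a unit with respect to the fundamental system, reduced modulo `p`. -/
noncomputable def unitExponentsMod (p : ℕ) : Additive (𝓞 K)ˣ →+ (Fin (rank K) → ZMod p) :=
  AddMonoidHom.mk' (fun u i => ((unitExponents K u.toMul).2 i : ZMod p)) fun u v => by
    ext i
    rw [toMul_add, unitExponents_mul]
    exact Int.cast_add _ _

variable {K} {p : ℕ}

theorem exists_eq_pow_of_unitExponentsMod_eq_zero (hK : Odd (Module.finrank ℚ K)) (hp : Odd p)
    {u : (𝓞 K)ˣ} (h : unitExponentsMod K p (Additive.ofMul u) = 0) : ∃ η : (𝓞 K)ˣ, u = η ^ p := by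
  have hdvd : ∀ i, (p : ℤ) ∣ (unitExponents K u).2 i := fun i =>
    (ZMod.intCast_zmod_eq_zero_iff_dvd _ p).1 (congrFun h i)
  choose k hk using hdvd
  have htorsion : ((unitExponents K u).1 : (𝓞 K)ˣ) ^ p = (unitExponents K u).1 := by
    rcases torsion_eq_one_or_neg_one_of_odd_finrank hK (unitExponents K u).1 with h | h <;> rw [h]
    · exact one_pow p
    · exact hp.neg_one_pow
  refine ⟨(unitExponents K u).1 * ∏ i, fundSystem K i ^ k i, ?_⟩
  rw [mul_pow, htorsion, ← Finset.prod_pow]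
  nth_rewrite 1 [eq_unitExponents_mul_prod K u]
  congr 1
  refine Finset.prod_congr rfl fun i _ => ?_
  rw [hk, mul_comm, zpow_mul, zpow_natCast]

variable {ι : Type*} [Fintype ι]

theorem unitExponentsMod_prod_pow [NeZero p] (w : ι → (𝓞 K)ˣ) (f : ι → ZMod p) :
    unitExponentsMod K p (Additive.ofMul (∏ i, w i ^ (f i).val)) =
      ∑ i, f i • unitExponentsMod K p (Additive.ofMul (w i)) := by
  rw [ofMul_prod, map_sum]
  refine Finset.sum_congr rfl fun i _ => ?_
  rw [ofMul_pow, map_nsmul]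
  ext j
  simp

variable [Fact p.Prime]

theorem linearIndependent_unitExponentsMod (hK : Odd (Module.finrank ℚ K)) (hp : Odd p)
    {w : ι → (𝓞 K)ˣ}
    (hw : ∀ f : ι → ℕ, (∀ i, f i < p) → ∀ η : (𝓞 K)ˣ, ∏ i, w i ^ f i = η ^ p → ∀ i, f i = 0) :
    LinearIndependent (ZMod p) fun i => unitExponentsMod K p (Additive.ofMul (w i)) := by
  rw [Fintype.linearIndependent_iff]
  intro g hg i
  rw [← unitExponentsMod_prod_pow] at hg
  obtain ⟨η, hη⟩ := exists_eq_pow_of_unitExponentsMod_eq_zero hK hp hg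
  exact (ZMod.val_eq_zero _).1 (hw (fun i => (g i).val) (fun i => ZMod.val_lt _) η hη i)

theorem card_le_rank_of_independent (hK : Odd (Module.finrank ℚ K)) (hp : Odd p)
    {w : ι → (𝓞 K)ˣ}
    (hw : ∀ f : ι → ℕ, (∀ i, f i < p) → ∀ η : (𝓞 K)ˣ, ∏ i, w i ^ f i = η ^ p → ∀ i, f i = 0) :
    Fintype.card ι ≤ rank K := by
  simpa using (linearIndependent_unitExponentsMod hK hp hw).fintype_card_le_finrank

theorem exists_eq_prod_pow_mul_pow (hK : Odd (Module.finrank ℚ K)) (hp : Odd p)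
    {w : ι → (𝓞 K)ˣ}
    (hw : ∀ f : ι → ℕ, (∀ i, f i < p) → ∀ η : (𝓞 K)ˣ, ∏ i, w i ^ f i = η ^ p → ∀ i, f i = 0)
    (hrank : rank K ≤ Fintype.card ι) (u : (𝓞 K)ˣ) :
    ∃ (f : ι → ℕ) (η : (𝓞 K)ˣ), (∀ i, f i < p) ∧ u = (∏ i, w i ^ f i) * η ^ p := by
  have hli := linearIndependent_unitExponentsMod hK hp hw
  have hspan := hli.span_eq_top_of_card_eq_finrank' (le_antisymm hli.fintype_card_le_finrank
    (by simpa using hrank))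
  obtain ⟨c, hc⟩ := (Submodule.mem_span_range_iff_exists_fun _).1
    (hspan ▸ Submodule.mem_top : unitExponentsMod K p (Additive.ofMul u) ∈ _)
  rw [← unitExponentsMod_prod_pow] at hc
  obtain ⟨η, hη⟩ := exists_eq_pow_of_unitExponentsMod_eq_zero (p := p) hK hp
    (u := u * (∏ i, w i ^ (c i).val)⁻¹)
    (by rw [ofMul_mul, map_add, ofMul_inv, map_neg, hc, add_neg_cancel])
  refine ⟨fun i => (c i).val, η, fun i => ZMod.val_lt _, ?_⟩
  rw [← hη, mul_comm, inv_mul_cancel_right]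

end UnitExponents

/-! ## Arithmetic modulo `n` in the quintic order -/

namespace QuinticOrder

theorem intCast_dvd_iff (n : ℤ) (x : QuinticOrder) :
    (n : QuinticOrder) ∣ x ↔ n ∣ x.a ∧ n ∣ x.b ∧ n ∣ x.c ∧ n ∣ x.d ∧ n ∣ x.e := by
  constructor
  · rintro ⟨y, rfl⟩
    simp [intCast_mul]
  · rintro ⟨⟨a, ha⟩, ⟨b, hb⟩, ⟨c, hc⟩, ⟨d, hd⟩, ⟨e, he⟩⟩
    exact ⟨⟨a, b, c, d, e⟩, by rw [intCast_mul]; ext <;> assumption⟩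

/-- The residue ring of `QuinticOrder` modulo the natural number `n`. -/
abbrev Residue (n : ℕ) : Type := QuinticOrder ⧸ Ideal.span {(n : QuinticOrder)}

/-- Reduction modulo `n`, with values in the residue ring. -/
abbrev residue (n : ℕ) : QuinticOrder →+* Residue n := Ideal.Quotient.mk _

/-- The representative modulo `n` with coordinates in `[0, n)`, by which residues are computed. -/
def reduce (n : ℕ) (x : QuinticOrder) : QuinticOrder :=
  ⟨x.a % n, x.b % n, x.c % n, x.d % n, x.e % n⟩

variable {n : ℕ}

theorem residue_eq_iff_dvd {x y : QuinticOrder} :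
    residue n x = residue n y ↔ (n : QuinticOrder) ∣ x - y := by
  rw [Ideal.Quotient.eq, Ideal.mem_span_singleton]

theorem residue_eq_iff {x y : QuinticOrder} :
    residue n x = residue n y ↔ reduce n x = reduce n y := by
  rw [residue_eq_iff_dvd, ← Int.cast_natCast, intCast_dvd_iff, sub_def, QuinticOrder.ext_iff]
  simp only [reduce, Int.emod_eq_emod_iff_emod_sub_eq_zero, Int.dvd_iff_emod_eq_zero]

theorem reduce_reduce (x : QuinticOrder) : reduce n (reduce n x) = reduce n x := by
  simp only [reduce, Int.emod_emod]

theorem residue_reduce (x : QuinticOrder) : residue n (reduce n x) = residue n x :=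
  residue_eq_iff.2 (reduce_reduce x)

instance : CharP (Residue n) n where
  cast_eq_zero_iff m := by
    rw [← map_natCast (residue n), Ideal.Quotient.eq_zero_iff_mem, Ideal.mem_span_singleton,
      ← Int.cast_natCast, intCast_dvd_iff, natCast_def]
    simp [Int.natCast_dvd_natCast]

/-- The reduced product modulo `n`. -/
def mulMod (n : ℕ) (x y : QuinticOrder) : QuinticOrder := reduce n (x * y)

/-- Repeated squaring modulo `n`; the first argument of the recursion only bounds its depth. -/
def powModAux (n : ℕ) (x : QuinticOrder) : ℕ → ℕ → QuinticOrder
  | 0, _ => reduce n 1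
  | depth + 1, k =>
    if k = 0 then reduce n 1
    else if k % 2 = 1 then
      mulMod n (mulMod n (powModAux n x depth (k / 2)) (powModAux n x depth (k / 2))) x
    else mulMod n (powModAux n x depth (k / 2)) (powModAux n x depth (k / 2))

/-- The reduced power `x ^ k` modulo `n`. -/
def powMod (n : ℕ) (x : QuinticOrder) (k : ℕ) : QuinticOrder := powModAux n x k k

theorem residue_mulMod (x y : QuinticOrder) :
    residue n (mulMod n x y) = residue n x * residue n y := by
  rw [mulMod, residue_reduce, map_mul]

theorem residue_powModAux (x : QuinticOrder) {depth k : ℕ} (hk : k ≤ depth) :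
    residue n (powModAux n x depth k) = residue n x ^ k := by
  induction depth generalizing k with
  | zero => rw [Nat.le_zero.1 hk, powModAux, residue_reduce, map_one, pow_zero]
  | succ depth ih =>
    rw [powModAux]
    split_ifs with h0 h1
    · rw [h0, residue_reduce, map_one, pow_zero]
    · rw [residue_mulMod, residue_mulMod, ih (by lia), ← pow_add, ← pow_succ]
      congr 1; lia
    · rw [residue_mulMod, ih (by lia), ← pow_add]
      congr 1; lia

theorem residue_powMod (x : QuinticOrder) (k : ℕ) :
    residue n (powMod n x k) = residue n x ^ k :=
  residue_powModAux x le_rfl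

theorem reduce_powMod (x : QuinticOrder) (k : ℕ) : reduce n (powMod n x k) = powMod n x k := by
  have reduce_powModAux : ∀ d, reduce n (powModAux n x d k) = powModAux n x d k
    | 0 => reduce_reduce _
    | d + 1 => by rw [powModAux]; split_ifs <;> exact reduce_reduce _
  exact reduce_powModAux k

theorem ringHom_ext {R : Type*} [Ring R] {f g : QuinticOrder →+* R}
    (h : ∀ i, f (ω i) = g (ω i)) : f = g := by
  ext x
  rw [eq_add_mul_ω x]
  simp only [map_add, map_mul, map_intCast, h]

theorem map_mem_of_map_ω_mem {R : Type*} [Ring R] {f : QuinticOrder →+* R} {S : Subring R}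
    (h : ∀ i, f (ω i) ∈ S) (x : QuinticOrder) : f x ∈ S := by
  rw [eq_add_mul_ω x]
  simp only [map_add, map_mul, map_intCast]
  exact add_mem (add_mem (add_mem (add_mem (intCast_mem S _) (mul_mem (intCast_mem S _) (h 1)))
    (mul_mem (intCast_mem S _) (h 2))) (mul_mem (intCast_mem S _) (h 3)))
    (mul_mem (intCast_mem S _) (h 4))

/-- The squared Frobenius is trivial modulo the prime `l`, that is, `l` is unramified with residue
fields of degree at most two. -/
def SqFrobeniusTrivial (l : ℕ) : Prop := ∀ i, powMod l (ω i) (l ^ 2) = ω i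

instance (l : ℕ) : Decidable (SqFrobeniusTrivial l) := by
  unfold SqFrobeniusTrivial; infer_instance

theorem sqFrobeniusTrivial_eleven : SqFrobeniusTrivial 11 := by decide +kernel

theorem sqFrobeniusTrivial_twentyNine : SqFrobeniusTrivial 29 := by decide +kernel

theorem sqFrobeniusTrivial_thirtyOne : SqFrobeniusTrivial 31 := by decide +kernel

theorem SqFrobeniusTrivial.residue_pow_sq {l : ℕ} [Fact l.Prime] (h : SqFrobeniusTrivial l)
    (x : QuinticOrder) : residue l x ^ l ^ 2 = residue l x := by
  have frobenius_residue : (iterateFrobenius (Residue l) l 2).comp (residue l) = residue l :=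
    ringHom_ext fun i => by
      rw [RingHom.comp_apply, iterateFrobenius_def, ← residue_powMod, h i]
  exact congrArg (fun f => f x) frobenius_residue

theorem SqFrobeniusTrivial.residue_units_pow {l N : ℕ} [Fact l.Prime] (h : SqFrobeniusTrivial l)
    (hN : l ^ 2 = N + 1) (η : QuinticOrderˣ) : residue l η ^ N = 1 := by
  have hη : IsUnit (residue l η) := η.isUnit.map (residue l)
  refine hη.mul_left_cancel ?_
  rw [mul_one, ← pow_succ', ← hN, h.residue_pow_sq]

/-- `x` is congruent to a rational integer modulo `n`. -/
def IsScalarMod (n : ℕ) (x : QuinticOrder) : Prop :=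
  reduce n x = reduce n x.a

instance (n : ℕ) (x : QuinticOrder) : Decidable (IsScalarMod n x) := by
  unfold IsScalarMod; infer_instance

theorem isScalarMod_iff {x : QuinticOrder} :
    IsScalarMod n x ↔ residue n x ∈ (Int.castRingHom (Residue n)).range := by
  rw [IsScalarMod, ← residue_eq_iff, map_intCast]
  refine ⟨fun h => ⟨x.a, h.symm⟩, ?_⟩
  rintro ⟨c, hc⟩
  rw [eq_intCast, ← map_intCast (residue n), residue_eq_iff, reduce, reduce, intCast_def,
    QuinticOrder.mk.injEq] at hc
  rw [← map_intCast (residue n), residue_eq_iff]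
  simp only [reduce, intCast_def, ← hc.2.1, ← hc.2.2.1, ← hc.2.2.2.1, ← hc.2.2.2.2]

/-- The rational prime `5` is totally ramified, so the fifth power map is scalar-valued. -/
theorem residue_five_pow_five_mem (x : QuinticOrder) :
    residue 5 x ^ 5 ∈ (Int.castRingHom (Residue 5)).range := by
  have : Fact (Nat.Prime 5) := ⟨Nat.prime_five⟩
  have isScalarMod_ω : ∀ i, IsScalarMod 5 (powMod 5 (ω i) 5) := by decide +kernel
  refine map_mem_of_map_ω_mem (f := (frobenius (Residue 5) 5).comp (residue 5)) (fun i => ?_) x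
  rw [RingHom.comp_apply, frobenius_def, ← residue_powMod]
  exact isScalarMod_iff.1 (isScalarMod_ω i)

end QuinticOrder

/-! ## Units of the quintic order modulo fifth powers -/

namespace QuinticOrder

open NumberField NumberField.Units

/-- Four units that generate the unit group of `QuinticOrder` modulo fifth powers. -/
def unitGen : Fin 4 → QuinticOrderˣ :=
  ![.mkOfMulEqOne ⟨1, 0, 7, -3, -2⟩ ⟨-35, -17, -2, 4, 15⟩ (by decide +kernel),
    .mkOfMulEqOne ⟨1, 1, 1, 0, 0⟩ ⟨25, -9, 11, -2, -6⟩ (by decide +kernel),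
    .mkOfMulEqOne ⟨-1, 10, 15, 0, 5⟩ ⟨749, 115, -215, -275, 270⟩ (by decide +kernel),
    .mkOfMulEqOne ⟨-5849, 4690, 5840, -2005, 760⟩ ⟨4561651, 2039210, 90510, -646220, -1548585⟩
      (by decide +kernel)]

theorem residue_five_unitGen_two : residue 5 (unitGen 2) = -1 := by
  have h : residue 5 (unitGen 2) = residue 5 (-1) := residue_eq_iff.2 (by decide +kernel)
  rw [h, map_neg, map_one]

theorem residue_five_unitGen_three : residue 5 (unitGen 3) = 1 := by
  have h : residue 5 (unitGen 3) = residue 5 1 := residue_eq_iff.2 (by decide +kernel)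
  rw [h, map_one]

theorem eq_zero_of_isScalarMod_five : ∀ f < 5, ∀ g < 5,
    IsScalarMod 5 (mulMod 5 (powMod 5 (unitGen 0) f) (powMod 5 (unitGen 1) g)) →
      f = 0 ∧ g = 0 := by
  decide +kernel

theorem eq_zero_of_powMod_eleven_eq_one : ∀ f < 5, ∀ g < 5,
    powMod 11 (mulMod 11 (powMod 11 (unitGen 2) f) (powMod 11 (unitGen 3) g)) 24 = 1 →
      f = 0 ∧ g = 0 := by
  decide +kernel

variable {f : Fin 4 → ℕ} {η : QuinticOrderˣ}

theorem eq_zero_zero_of_prod_unitGen_pow_eq (hf : ∀ i, f i < 5)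
    (h : ∏ i, unitGen i ^ f i = η ^ 5) : f 0 = 0 ∧ f 1 = 0 := by
  refine eq_zero_of_isScalarMod_five _ (hf 0) _ (hf 1) (isScalarMod_iff.2 ?_)
  have hη : (η : QuinticOrder) ^ 5 = _ := congrArg Units.val h.symm
  have hmem := residue_five_pow_five_mem η
  rw [← map_pow, hη, Fin.prod_univ_four] at hmem
  simp only [Units.val_mul, Units.val_pow_eq_pow_val, map_mul, map_pow, residue_five_unitGen_two,
    residue_five_unitGen_three, one_pow, mul_one] at hmem
  rw [residue_mulMod, residue_powMod, residue_powMod]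
  rcases neg_one_pow_eq_or (Residue 5) (f 2) with hsign | hsign <;> rw [hsign] at hmem
  · simpa using hmem
  · simpa using neg_mem hmem

theorem eq_zero_of_prod_unitGen_pow_eq (hf : ∀ i, f i < 5)
    (h : ∏ i, unitGen i ^ f i = η ^ 5) (i : Fin 4) : f i = 0 := by
  obtain ⟨h0, h1⟩ := eq_zero_zero_of_prod_unitGen_pow_eq hf h
  have : Fact (Nat.Prime 11) := ⟨by norm_num⟩
  have hη : (η : QuinticOrder) ^ 5 = _ := congrArg Units.val h.symm
  have hpow := sqFrobeniusTrivial_eleven.residue_units_pow (N := 5 * 24) (by norm_num) η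
  rw [pow_mul, ← map_pow, hη, Fin.prod_univ_four, h0, h1] at hpow
  have hpow' : residue 11
      (powMod 11 (mulMod 11 (powMod 11 (unitGen 2) (f 2)) (powMod 11 (unitGen 3) (f 3))) 24)
        = residue 11 1 := by
    rw [residue_powMod, residue_mulMod, residue_powMod, residue_powMod, map_one, ← hpow]
    simp
  rw [residue_eq_iff, reduce_powMod] at hpow'
  obtain ⟨h2, h3⟩ := eq_zero_of_powMod_eleven_eq_one _ (hf 2) _ (hf 3) hpow'
  fin_cases i <;> assumption

/-- The isomorphism of the unit groups of `QuinticOrder` and of the maximal order. -/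
noncomputable def unitsEquiv : QuinticOrderˣ ≃* (𝓞 QuinticField)ˣ :=
  Units.mapEquiv equivRingOfIntegers.toMulEquiv

theorem eq_zero_of_prod_unitsEquiv_pow_eq (f : Fin 4 → ℕ) (hf : ∀ i, f i < 5)
    (η : (𝓞 QuinticField)ˣ) (h : ∏ i, unitsEquiv (unitGen i) ^ f i = η ^ 5) (i : Fin 4) :
    f i = 0 := by
  obtain ⟨η', rfl⟩ := unitsEquiv.surjective η
  simp only [← map_pow, ← map_prod] at h
  exact eq_zero_of_prod_unitGen_pow_eq hf (unitsEquiv.injective h) i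

theorem odd_finrank_quinticField : Odd (Module.finrank ℚ QuinticField) := by
  rw [QuinticField.finrank_eq_five]; decide

theorem rank_quinticField_le : rank QuinticField ≤ 4 := by
  have hplaces := InfinitePlace.card_eq_nrRealPlaces_add_nrComplexPlaces QuinticField
  have hdegree := InfinitePlace.card_add_two_mul_card_eq_rank QuinticField
  rw [QuinticField.finrank_eq_five] at hdegree
  unfold rank
  lia

theorem rank_quinticField : rank QuinticField = 4 := by
  have : Fact (Nat.Prime 5) := ⟨Nat.prime_five⟩
  refine le_antisymm rank_quinticField_le ?_
  simpa using card_le_rank_of_independent odd_finrank_quinticField (by decide : Odd 5)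
    eq_zero_of_prod_unitsEquiv_pow_eq

theorem exists_eq_prod_unitGen_pow_mul_pow_five (u : QuinticOrderˣ) :
    ∃ (f : Fin 4 → ℕ) (η : QuinticOrderˣ),
      (∀ i, f i < 5) ∧ u = (∏ i, unitGen i ^ f i) * η ^ 5 := by
  have : Fact (Nat.Prime 5) := ⟨Nat.prime_five⟩
  obtain ⟨f, η, hf, hu⟩ := exists_eq_prod_pow_mul_pow odd_finrank_quinticField
    (by decide : Odd 5) eq_zero_of_prod_unitsEquiv_pow_eq (by simpa using rank_quinticField_le)
    (unitsEquiv u)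
  obtain ⟨η, rfl⟩ := unitsEquiv.surjective η
  refine ⟨f, η, hf, unitsEquiv.injective ?_⟩
  rw [hu, map_mul, map_prod, map_pow]
  simp only [map_pow]

end QuinticOrder

/-! ## Prime ideals of the quintic order -/

namespace QuinticOrder

open Ideal

/-- The root of `quinticPoly` in the quintic order. -/
def θ : QuinticOrder := ⟨2, 1, 0, 0, 0⟩

theorem θ_relation : θ ^ 5 - 10 * θ ^ 4 + 10 * θ ^ 3 + 100 * θ ^ 2 - 100 * θ - 80 = 0 := by
  decide +kernel

/-- The value at `θ = t` of the polynomial in `ℤ[θ]` that represents `12 * x`. -/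
def twelveMulEval {R : Type*} [CommRing R] (x : QuinticOrder) (t : R) : R :=
  12 * x.a + x.b * (12 * t - 24) + x.c * (-56 + 12 * t + 12 * t ^ 2 - 2 * t ^ 3)
    + x.d * (8 - 64 * t + 8 * t ^ 3 - t ^ 4) + x.e * (-8 + 36 * t + 6 * t ^ 2 - 2 * t ^ 3)

theorem twelveMulEval_θ (x : QuinticOrder) : twelveMulEval x θ = 12 * x := by
  have h1 : 12 * θ - 24 = 12 * ω 1 := by decide +kernel
  have h2 : -56 + 12 * θ + 12 * θ ^ 2 - 2 * θ ^ 3 = 12 * ω 2 := by decide +kernel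
  have h3 : 8 - 64 * θ + 8 * θ ^ 3 - θ ^ 4 = 12 * ω 3 := by decide +kernel
  have h4 : -8 + 36 * θ + 6 * θ ^ 2 - 2 * θ ^ 3 = 12 * ω 4 := by decide +kernel
  rw [twelveMulEval, h1, h2, h3, h4]
  conv_rhs => rw [eq_add_mul_ω x]
  ring

theorem map_twelveMulEval {R S : Type*} [CommRing R] [CommRing S] (f : R →+* S)
    (x : QuinticOrder) (t : R) : f (twelveMulEval x t) = twelveMulEval x (f t) := by
  simp only [twelveMulEval, map_add, map_sub, map_neg, map_mul, map_pow, map_ofNat, map_intCast]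

/-- Generators of the primes of degree one above the rational primes `7 ≤ p < 387`. -/
def primeGenerators : List QuinticOrder :=
  [⟨-5, -3, 0, 1, 2⟩, ⟨-5, 0, 2, 2, -3⟩, ⟨13, -3, -10, 4, 3⟩, ⟨-1, 0, -1, 0, 0⟩, ⟨-1, -1, 1, 0, 0⟩,
   ⟨-5, -2, 1, 3, -2⟩, ⟨-1, 3, -2, 0, 0⟩, ⟨-1, 0, -1, 0, 1⟩, ⟨-5, -4, 0, -4, -4⟩, ⟨-1, -1, 0, 0, 1⟩,
   ⟨-11, 4, -3, 0, 2⟩, ⟨-47, 11, 8, -2, -2⟩, ⟨-1, -2, 1, 2, 3⟩, ⟨-1, -1, 2, 1, -2⟩,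
   ⟨-1, -1, 0, 0, 0⟩, ⟨-5, -1, -2, -2, -1⟩, ⟨-1, 1, 2, 0, 0⟩, ⟨-1, -4, 1, 0, 2⟩, ⟨-1, 1, -1, 0, 1⟩,
   ⟨-7, 2, 1, -2, 0⟩, ⟨17, -5, -3, 2, 0⟩, ⟨-5, 0, -2, -2, -1⟩, ⟨-5, -2, -1, 1, 2⟩,
   ⟨-5, 0, -1, 0, 0⟩, ⟨-1, -3, -4, 0, -1⟩, ⟨-1, 0, 0, 0, -1⟩, ⟨-1, 2, -1, 0, 0⟩, ⟨-17, 3, -5, 4, 1⟩,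
   ⟨-7, 2, 1, -1, 0⟩, ⟨-1, -2, -1, 2, 0⟩, ⟨-5, 0, 1, 0, -1⟩, ⟨-1, 4, 3, -2, -1⟩,
   ⟨-11, -6, 6, 7, -8⟩, ⟨-1, 1, 2, -1, 0⟩, ⟨-1, -2, 0, 3, -2⟩, ⟨-1, 0, -1, 1, 0⟩,
   ⟨13, 2, -3, -3, 2⟩, ⟨-5, 1, 2, -1, 0⟩, ⟨-5, -1, 0, 0, -1⟩, ⟨-1, 1, 0, 0, 0⟩, ⟨-1, 1, 2, 0, 1⟩,
   ⟨-1, 1, 0, 1, 0⟩, ⟨7, -2, 1, 0, -1⟩, ⟨-5, 2, 2, -1, 0⟩, ⟨7, 0, 0, 2, 1⟩, ⟨-13, -4, -1, 0, 1⟩,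
   ⟨-5, -1, -1, 0, 1⟩, ⟨25, 0, -6, -2, 6⟩, ⟨-5, 3, 4, -2, 0⟩, ⟨-5, 5, -4, 0, 1⟩,
   ⟨433, -73, -251, 64, 94⟩, ⟨-1, -3, 1, 2, -1⟩, ⟨-7, -1, 2, 3, -2⟩, ⟨-1, 2, -2, 0, 2⟩,
   ⟨-1, -1, 3, 2, -3⟩, ⟨-1, -4, -4, -1, -2⟩, ⟨-1, 0, 0, 1, 0⟩, ⟨-95, -22, 22, 46, -38⟩,
   ⟨13, 6, -5, -9, 8⟩, ⟨-1, -4, 2, 3, 4⟩, ⟨-1, 0, 2, 1, 2⟩, ⟨-1, -1, -2, -1, 0⟩, ⟨-5, 1, 0, 0, 0⟩,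
   ⟨-5, 2, -4, 1, 2⟩, ⟨-5, -2, 0, 2, 0⟩, ⟨-11, 1, 3, -1, -2⟩, ⟨-11, 4, 4, -4, 0⟩,
   ⟨-11, 2, -1, 1, 0⟩]

set_option synthInstance.maxSize 1000 in
theorem exists_mem_primeGenerators : ∀ p : ℕ, p < 387 → 7 ≤ p →
    (∀ d < 20, 1 < d → d < p → ¬ d ∣ p) → ∀ t : ℕ, t < p →
      (p : ℤ) ∣ t ^ 5 - 10 * t ^ 4 + 10 * t ^ 3 + 100 * t ^ 2 - 100 * t - 80 →
      ∃ g ∈ primeGenerators, (normForm g).natAbs = p ∧ (p : ℤ) ∣ twelveMulEval g (t : ℤ) := by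
  decide +kernel

variable {P : Ideal QuinticOrder} {p : ℕ} {g : QuinticOrder}

theorem absNorm_dvd_natAbs_normForm (hg : g ∈ P) : absNorm P ∣ (normForm g).natAbs := by
  rw [← norm_eq_normForm, ← absNorm_span_singleton]
  exact absNorm_dvd_absNorm_of_le ((span_singleton_le_iff_mem P).2 hg)

theorem isPrincipal_of_absNorm_eq (hP : P ≠ ⊥) (hg : g ∈ P)
    (h : absNorm P = (normForm g).natAbs) : P.IsPrincipal := by
  obtain ⟨J, hJ⟩ := dvd_span_singleton.2 hg
  have hnorm := congrArg absNorm hJ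
  rw [map_mul, absNorm_span_singleton, norm_eq_normForm, ← h, eq_comm,
    mul_eq_left₀ (absNorm_eq_zero_iff.not.2 hP), absNorm_eq_one_iff] at hnorm
  rw [hnorm, mul_top] at hJ
  exact ⟨g, hJ.symm⟩

theorem natCast_mem_of_charP [CharP (QuinticOrder ⧸ P) p] : (p : QuinticOrder) ∈ P := by
  rw [← Ideal.Quotient.eq_zero_iff_mem, map_natCast, CharP.cast_eq_zero]

theorem exists_lt_sub_natCast_mem [CharP (QuinticOrder ⧸ P) p] (hp : p.Prime)
    (hP : absNorm P = p) (x : QuinticOrder) : ∃ t < p, x - (t : QuinticOrder) ∈ P := by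
  have : NeZero p := ⟨hp.ne_zero⟩
  have : Finite (QuinticOrder ⧸ P) := (absNorm_ne_zero_iff P).1 (hP ▸ hp.ne_zero)
  let : Fintype (QuinticOrder ⧸ P) := Fintype.ofFinite _
  have hcard : Fintype.card (QuinticOrder ⧸ P) = p := by
    rw [← Nat.card_eq_fintype_card, ← hP, absNorm_apply, Submodule.cardQuot_apply]
  obtain ⟨t, ht⟩ := (ZMod.castHom_bijective (QuinticOrder ⧸ P) hcard).2 (Ideal.Quotient.mk P x)
  refine ⟨t.val, t.val_lt, ?_⟩
  rw [← Ideal.Quotient.eq, ← ht, map_natCast, ← map_natCast (ZMod.castHom dvd_rfl _),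
    ZMod.natCast_zmod_val]

variable [P.IsPrime]

theorem isPrincipal_of_prime_normForm (hg : g ∈ P) (h : (normForm g).natAbs.Prime) :
    P.IsPrincipal := by
  have hP : P ≠ ⊥ := by
    rintro rfl
    rw [mem_bot.1 hg] at h
    exact Nat.not_prime_zero h
  refine isPrincipal_of_absNorm_eq hP hg ?_
  exact ((Nat.dvd_prime h).1 (absNorm_dvd_natAbs_normForm hg)).resolve_left
    (absNorm_eq_one_iff.not.2 (IsPrime.ne_top ‹_›))

theorem pow_absNorm_sub_self_mem (hP : P ≠ ⊥) (x : QuinticOrder) : x ^ absNorm P - x ∈ P := by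
  have : P.IsMaximal := IsPrime.isMaximal ‹_› hP
  let : Field (QuinticOrder ⧸ P) := Ideal.Quotient.field P
  have : Finite (QuinticOrder ⧸ P) := (absNorm_ne_zero_iff P).1 (absNorm_eq_zero_iff.not.2 hP)
  let : Fintype (QuinticOrder ⧸ P) := Fintype.ofFinite _
  rw [← Ideal.Quotient.eq, map_pow, absNorm_apply, Submodule.cardQuot_apply,
    Nat.card_eq_fintype_card]
  exact FiniteField.pow_card _

theorem exists_charP_and_absNorm_eq_pow (hP : P ≠ ⊥) :
    ∃ p k : ℕ, p.Prime ∧ CharP (QuinticOrder ⧸ P) p ∧ 0 < k ∧ absNorm P = p ^ k := by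
  have : P.IsMaximal := IsPrime.isMaximal ‹_› hP
  let : Field (QuinticOrder ⧸ P) := Ideal.Quotient.field P
  have : Finite (QuinticOrder ⧸ P) := (absNorm_ne_zero_iff P).1 (absNorm_eq_zero_iff.not.2 hP)
  let : Fintype (QuinticOrder ⧸ P) := Fintype.ofFinite _
  obtain ⟨p, hchar, k, hp, hcard⟩ := FiniteField.card' (QuinticOrder ⧸ P)
  refine ⟨p, k, hp, hchar, k.pos, ?_⟩
  rw [absNorm_apply, Submodule.cardQuot_apply, Nat.card_eq_fintype_card, hcard]

section CharP

variable [CharP (QuinticOrder ⧸ P) p]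

theorem isPrincipal_of_absNorm_eq_prime (hp : p.Prime) (h7 : 7 ≤ p) (hlt : p < 387)
    (hP : absNorm P = p) : P.IsPrincipal := by
  obtain ⟨t, ht, hθ⟩ := exists_lt_sub_natCast_mem hp hP θ
  have mk_θ : Ideal.Quotient.mk P θ = t := by
    rwa [← map_natCast (Ideal.Quotient.mk P), Ideal.Quotient.eq]
  have hroot : (p : ℤ) ∣ t ^ 5 - 10 * t ^ 4 + 10 * t ^ 3 + 100 * t ^ 2 - 100 * t - 80 := by
    have h := congrArg (Ideal.Quotient.mk P) θ_relation
    simp only [map_add, map_sub, map_mul, map_pow, map_ofNat, map_zero, mk_θ] at h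
    rw [← CharP.intCast_eq_zero_iff (QuinticOrder ⧸ P)]
    exact_mod_cast h
  have hdiv : ∀ d < 20, 1 < d → d < p → ¬ d ∣ p := fun d _ hd hdp hdvd =>
    ((Nat.dvd_prime hp).1 hdvd).elim hd.ne' hdp.ne
  obtain ⟨g, -, hnorm, heval⟩ := exists_mem_primeGenerators p hlt h7 hdiv t ht hroot
  have h12 : 12 * g ∈ P := by
    rw [← twelveMulEval_θ, ← Ideal.Quotient.eq_zero_iff_mem, map_twelveMulEval, mk_θ,
      ← map_natCast (Int.castRingHom _), ← map_twelveMulEval, eq_intCast,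
      CharP.intCast_eq_zero_iff _ p]
    exact heval
  have h12' : (12 : QuinticOrder) ∉ P := by
    rw [← Ideal.Quotient.eq_zero_iff_mem, map_ofNat, ← Nat.cast_ofNat,
      CharP.cast_eq_zero_iff (QuinticOrder ⧸ P) p]
    intro h
    have hle := Nat.le_of_dvd (by norm_num) h
    interval_cases p <;> revert hp h <;> decide
  exact isPrincipal_of_prime_normForm ((IsPrime.mem_or_mem ‹_› h12).resolve_left h12')
    (hnorm ▸ hp)

/-- A certificate, verified modulo `p`, that `g` lies in every prime of norm `n` above `p`. -/
theorem mem_of_mulMod_eq {n : ℕ} (hP : P ≠ ⊥) (hn : absNorm P = n) {A : QuinticOrder}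
    (h : mulMod p (powMod p θ n - θ) A = reduce p g) : g ∈ P := by
  have hcong : residue p ((θ ^ n - θ) * A) = residue p g := by
    rw [← residue_reduce g, ← h, residue_mulMod, map_sub, residue_powMod, map_mul, map_sub, map_pow]
  obtain ⟨y, hy⟩ := residue_eq_iff_dvd.1 hcong
  rw [← sub_sub_cancel ((θ ^ n - θ) * A) g, hy]
  exact sub_mem (P.mul_mem_right _ (hn ▸ pow_absNorm_sub_self_mem hP θ))
    (P.mul_mem_right _ natCast_mem_of_charP)

end CharP

/-- The totally ramified case: `p` is a unit times the fifth power of an element of norm `±p`. -/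
theorem isPrincipal_of_eq_pow_five_mul (hp : p.Prime) (hpP : (p : QuinticOrder) ∈ P)
    {u : QuinticOrder} (hg : (normForm g).natAbs = p) (hu : (normForm u).natAbs = 1)
    (h : (p : QuinticOrder) = g ^ 5 * u) : P.IsPrincipal := by
  rw [h, P.mul_unit_mem_iff_mem
    (isUnit_iff_isUnit_normForm.2 (Int.isUnit_iff_natAbs_eq.2 hu))] at hpP
  exact isPrincipal_of_prime_normForm (IsPrime.mem_of_pow_mem ‹_› _ hpP) (hg ▸ hp)

end QuinticOrder

/-! ## Prime ideals of small norm -/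

namespace QuinticOrder

open Ideal NumberField NumberField.Units

/-- A prime element of norm `±2`. -/
def π₂ : QuinticOrder := ⟨4, 1, 1, 1, 0⟩

/-- A prime element of norm `±3`. -/
def π₃ : QuinticOrder := ⟨3, 1, 1, 2, 1⟩

/-- A prime element of norm `±4`. -/
def π₄ : QuinticOrder := ⟨1, 1, 0, 1, 1⟩

/-- A prime element of norm `±5`. -/
def π₅ : QuinticOrder := ⟨7, 0, 1, 0, 1⟩

theorem natAbs_normForm_π₂ : (normForm π₂).natAbs = 2 := by decide +kernel

theorem natAbs_normForm_π₃ : (normForm π₃).natAbs = 3 := by decide +kernel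

theorem natAbs_normForm_π₄ : (normForm π₄).natAbs = 4 := by decide +kernel

theorem natAbs_normForm_π₅ : (normForm π₅).natAbs = 5 := by decide +kernel

theorem isUnit_of_natAbs_normForm_eq_one {u : QuinticOrder} (hu : (normForm u).natAbs = 1) :
    IsUnit u :=
  isUnit_iff_isUnit_normForm.2 (Int.isUnit_iff_natAbs_eq.2 hu)

theorem two_eq : (2 : QuinticOrder) = π₂ * π₄ ^ 2 * ⟨-955, 351, 400, -298, -22⟩ := by
  decide +kernel

theorem three_eq : (3 : QuinticOrder) = π₃ ^ 5 *
    ⟨-5423609851, -2424910905, -107987985, 768048990, 1842073345⟩ := by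
  decide +kernel

theorem five_eq : (5 : QuinticOrder) = π₅ ^ 5 *
    ⟨900800491499, -331104316368, -377211028971, 281407796726, 20327372947⟩ := by
  decide +kernel

theorem eleven_eq : (11 : QuinticOrder) =
    ⟨-5, 0, 2, 2, -3⟩ * ⟨5, -1, 2, 0, -2⟩ * ⟨-7, 0, 2, 1, -2⟩ * ⟨65, 3, 18, 14, 8⟩ := by
  decide +kernel

variable {P : Ideal QuinticOrder} [P.IsPrime]

theorem absNorm_eq_four_of_π₄_mem (hP : P ≠ ⊥) (h : π₄ ∈ P) : absNorm P = 4 := by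
  have hdvd := absNorm_dvd_natAbs_normForm h
  rw [natAbs_normForm_π₄, show 4 = 2 ^ 2 by rfl] at hdvd
  obtain ⟨k, hk, hnorm⟩ := (Nat.dvd_prime_pow Nat.prime_two).1 hdvd
  interval_cases k
  · exact absurd (absNorm_eq_one_iff.1 hnorm) (IsPrime.ne_top ‹_›)
  · rw [pow_one] at hnorm
    have hfrob : ∀ x, x ^ 2 - x ∈ P := fun x => hnorm ▸ pow_absNorm_sub_self_mem hP x
    have htwo : (2 : QuinticOrder) ∈ P := by simpa [hnorm] using absNorm_mem P
    have hone : π₄ + (ω 1 ^ 2 - ω 1) + (ω 3 ^ 2 - ω 3) - 2 * ⟨15, 0, 1, 0, 1⟩ = 1 := by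
      decide +kernel
    refine absurd ((eq_top_iff_one P).2 (hone ▸ ?_)) (IsPrime.ne_top ‹_›)
    exact sub_mem (add_mem (add_mem h (hfrob _)) (hfrob _)) (P.mul_mem_right _ htwo)
  · exact hnorm

theorem isPrincipal_of_two_mem (hP : P ≠ ⊥) (h : (2 : QuinticOrder) ∈ P) : P.IsPrincipal := by
  rw [two_eq, P.mul_unit_mem_iff_mem (isUnit_of_natAbs_normForm_eq_one (by decide +kernel))] at h
  rcases IsPrime.mem_or_mem ‹_› h with h | h
  · exact isPrincipal_of_prime_normForm h (natAbs_normForm_π₂ ▸ Nat.prime_two)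
  · have hπ₄ := IsPrime.mem_of_pow_mem ‹_› _ h
    exact isPrincipal_of_absNorm_eq hP hπ₄
      ((absNorm_eq_four_of_π₄_mem hP hπ₄).trans natAbs_normForm_π₄.symm)

theorem isPrincipal_of_eleven_mem (hP : P ≠ ⊥) (hnorm : absNorm P = 121)
    (h : (11 : QuinticOrder) ∈ P) : P.IsPrincipal := by
  rw [eleven_eq,
    P.mul_unit_mem_iff_mem (isUnit_of_natAbs_normForm_eq_one (by decide +kernel))] at h
  rcases IsPrime.mem_or_mem ‹_› h with h | h
  · rcases IsPrime.mem_or_mem ‹_› h with h | h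
    · refine isPrincipal_of_prime_normForm h ?_
      rw [show (normForm ⟨-5, 0, 2, 2, -3⟩).natAbs = 11 by decide +kernel]
      norm_num
    · exact isPrincipal_of_absNorm_eq hP h (hnorm.trans (by decide +kernel))
  · exact isPrincipal_of_absNorm_eq hP h (hnorm.trans (by decide +kernel))

theorem prime_pow_eq_of_lt {p k : ℕ} (hp : p.Prime) (h7 : 7 ≤ p) (hk : 1 < k)
    (hlt : p ^ k < 387) : (p = 7 ∧ k = 2) ∨ (p = 7 ∧ k = 3) ∨ (p = 11 ∧ k = 2) ∨
      (p = 13 ∧ k = 2) ∨ (p = 17 ∧ k = 2) ∨ (p = 19 ∧ k = 2) := by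
  have hp20 : p < 20 := by
    by_contra! hle
    have := (Nat.pow_le_pow_left hle k).trans' (Nat.pow_le_pow_right (by norm_num) hk)
    lia
  have hk4 : k < 4 := by
    by_contra! hle
    have := (Nat.pow_le_pow_left h7 k).trans' (Nat.pow_le_pow_right (by norm_num) hle)
    lia
  interval_cases k <;> interval_cases p <;> simp_all <;> norm_num at hp

theorem isPrincipal_of_absNorm_eq_pow {p k : ℕ} [CharP (QuinticOrder ⧸ P) p] (hP : P ≠ ⊥)
    (hp : p.Prime) (h7 : 7 ≤ p) (hk : 1 < k) (hnorm : absNorm P = p ^ k) (hlt : p ^ k < 387) :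
    P.IsPrincipal := by
  have of_mem_prime (g : QuinticOrder) (hg : g ∈ P) (hN : (normForm g).natAbs = p) :
      P.IsPrincipal := isPrincipal_of_prime_normForm hg (hN ▸ hp)
  rcases prime_pow_eq_of_lt hp h7 hk hlt with ⟨rfl, rfl⟩ | ⟨rfl, rfl⟩ | ⟨rfl, rfl⟩ |
    ⟨rfl, rfl⟩ | ⟨rfl, rfl⟩ | ⟨rfl, rfl⟩
  · exact of_mem_prime ⟨-5, -3, 0, 1, 2⟩
      (mem_of_mulMod_eq (A := ⟨4, 2, 3, 0, 5⟩) hP hnorm (by decide +kernel)) (by decide +kernel)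
  · exact of_mem_prime ⟨-5, -3, 0, 1, 2⟩
      (mem_of_mulMod_eq (A := ⟨3, 4, 3, 3, 2⟩) hP hnorm (by decide +kernel)) (by decide +kernel)
  · exact isPrincipal_of_eleven_mem hP hnorm (natCast_mem_of_charP (p := 11))
  · exact of_mem_prime ⟨13, -3, -10, 4, 3⟩
      (mem_of_mulMod_eq (A := ⟨12, 10, 12, 12, 4⟩) hP hnorm (by decide +kernel)) (by decide +kernel)
  · exact of_mem_prime ⟨-1, 0, -1, 0, 0⟩
      (mem_of_mulMod_eq (A := ⟨16, 2, 11, 16, 15⟩) hP hnorm (by decide +kernel)) (by decide +kernel)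
  · have hone : (1 : QuinticOrder) ∈ P :=
      mem_of_mulMod_eq (A := ⟨7, 18, 1, 2, 14⟩) hP hnorm (by decide +kernel)
    exact absurd ((eq_top_iff_one P).2 hone) (IsPrime.ne_top ‹_›)

theorem isPrincipal_of_absNorm_lt (hP : P ≠ ⊥) (hlt : absNorm P < 387) : P.IsPrincipal := by
  obtain ⟨p, k, hp, hchar, hk, hnorm⟩ := exists_charP_and_absNorm_eq_pow hP
  have hpP : (p : QuinticOrder) ∈ P := natCast_mem_of_charP
  rcases Nat.lt_or_ge p 7 with h7 | h7
  · obtain rfl | rfl | rfl : p = 2 ∨ p = 3 ∨ p = 5 := by interval_cases p <;> revert hp <;> decide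
    · exact isPrincipal_of_two_mem hP hpP
    · exact isPrincipal_of_eq_pow_five_mul hp hpP natAbs_normForm_π₃ (by decide +kernel) three_eq
    · exact isPrincipal_of_eq_pow_five_mul hp hpP natAbs_normForm_π₅ (by decide +kernel) five_eq
  rcases Nat.lt_or_ge 1 k with hk1 | hk1
  · exact isPrincipal_of_absNorm_eq_pow hP hp h7 hk1 hnorm (hnorm ▸ hlt)
  · rw [show k = 1 by lia, pow_one] at hnorm
    exact isPrincipal_of_absNorm_eq_prime hp h7 (hnorm ▸ hlt) hnorm

end QuinticOrder

/-! ## Class number one -/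

namespace QuinticOrder

open Ideal NumberField NumberField.Units

theorem nrComplexPlaces_quinticField : InfinitePlace.nrComplexPlaces QuinticField = 0 := by
  have hrank := rank_quinticField
  have hplaces := InfinitePlace.card_eq_nrRealPlaces_add_nrComplexPlaces QuinticField
  have hdegree := InfinitePlace.card_add_two_mul_card_eq_rank QuinticField
  rw [QuinticField.finrank_eq_five] at hdegree
  unfold rank at hrank
  lia

theorem lt_of_le_minkowskiBound {n : ℕ}
    (h : (n : ℝ) ≤ (4 / Real.pi) ^ InfinitePlace.nrComplexPlaces QuinticField *
      ((Module.finrank ℚ QuinticField).factorial /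
        (Module.finrank ℚ QuinticField) ^ (Module.finrank ℚ QuinticField) *
          √|discr QuinticField|)) : n < 387 := by
  rw [nrComplexPlaces_quinticField, QuinticField.finrank_eq_five, discr_quinticField] at h
  have hsqrt : √|((101250000 : ℤ) : ℝ)| < 10063 := by
    rw [Real.sqrt_lt' (by norm_num)]; norm_num
  norm_num [Nat.factorial] at h hsqrt
  have : (n : ℝ) < 387 := by linarith
  exact_mod_cast this

theorem absNorm_comap_equivRingOfIntegers (I : Ideal (𝓞 QuinticField)) :
    absNorm (I.comap equivRingOfIntegers) = absNorm I := by
  simp only [absNorm_apply, Submodule.cardQuot_apply]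
  exact Nat.card_congr (quotientEquiv _ _ equivRingOfIntegers.toRingEquiv
    (map_comap_of_surjective _ equivRingOfIntegers.surjective I).symm).toEquiv

instance : IsPrincipalIdealRing (𝓞 QuinticField) := by
  refine RingOfIntegers.isPrincipalIdealRing_of_isPrincipal_of_norm_le_of_isPrime ?_
  intro I hI hle
  have hcomap : I.1.comap equivRingOfIntegers ≠ ⊥ := by
    rw [Ne, ← absNorm_eq_zero_iff, absNorm_comap_equivRingOfIntegers, absNorm_eq_zero_iff]
    exact nonZeroDivisors.coe_ne_zero I
  have hlt := lt_of_le_minkowskiBound hle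
  rw [← absNorm_comap_equivRingOfIntegers] at hlt
  have := (isPrincipal_of_absNorm_lt hcomap hlt).map_ringHom equivRingOfIntegers.toRingHom
  exact (map_comap_of_surjective _ equivRingOfIntegers.surjective I.1) ▸ this

instance : IsPrincipalIdealRing QuinticOrder :=
  IsPrincipalIdealRing.of_surjective equivRingOfIntegers.symm.toRingHom
    equivRingOfIntegers.symm.surjective

end QuinticOrder

/-! ## Congruence obstructions -/

section CharP

variable {R : Type*} [CommRing R] {n : ℕ} [CharP R n]

theorem exists_lt_intCast_eq_natCast [NeZero n] (c : ℤ) : ∃ m < n, (c : R) = m := by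
  have hn : (0 : ℤ) < n := by exact_mod_cast NeZero.pos n
  obtain ⟨m, hm⟩ := Int.eq_ofNat_of_zero_le (Int.emod_nonneg c hn.ne')
  refine ⟨m, by have := Int.emod_lt_of_pos c hn; lia, ?_⟩
  rw [← Int.cast_natCast (R := R), CharP.intCast_eq_intCast R n, ← Int.ofNat_eq_natCast, ← hm]
  exact (Int.mod_modEq c n).symm

theorem intCast_pow_eq_one_of_sq_eq [Fact n.Prime] {N : ℕ} (hN : n ^ 2 = N + 1) {c : ℤ}
    (hc : ¬ (n : ℤ) ∣ c) : (c : R) ^ N = 1 := by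
  have hpow : (c : ZMod n) ^ N = 1 := by
    refine mul_left_cancel₀ (mt (ZMod.intCast_zmod_eq_zero_iff_dvd c n).1 hc) ?_
    rw [← pow_succ', ← hN, sq, pow_mul, ZMod.pow_card, ZMod.pow_card, mul_one]
  simpa using congrArg (ZMod.castHom dvd_rfl R) hpow

end CharP

theorem mul_self_pow_of_pow_succ_eq {M : Type*} [CommMonoid M] {x : M} {k : ℕ} (hk : k ≠ 0)
    (h : x ^ (k + 1) = x) : x ^ k * x ^ k = x ^ k := by
  obtain ⟨j, rfl⟩ := Nat.exists_eq_succ_of_ne_zero hk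
  rw [Nat.succ_eq_add_one] at h ⊢
  nth_rewrite 2 [pow_succ']
  rw [← mul_assoc, ← pow_succ, h, ← pow_succ']

namespace QuinticOrder

/-- A root of `X⁵ + 10X⁴ - 50X³ - 100X² + 125X + 50` in the quintic order. -/
def ξ : QuinticOrder := ⟨-2, -1, 1, 1, -1⟩

/-- The quotient of `ξ` by `π₅ ^ 2`. -/
def ξDiv : QuinticOrder := ⟨14170, -5209, -5934, 4427, 320⟩

/-- The quotient of `5` by `π₅ ^ 2`. -/
def fiveDiv : QuinticOrder := ⟨60515, -22242, -25340, 18904, 1365⟩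

theorem ξ_eq : ξ = π₅ ^ 2 * ξDiv := by decide +kernel

theorem five_eq_sq_mul : (5 : QuinticOrder) = π₅ ^ 2 * fiveDiv := by decide +kernel

theorem π₅_ne_zero : π₅ ≠ 0 := by decide +kernel

/-- The product of the powers of the `unitGen i` with the given exponents, reduced modulo `n`. -/
def unitMod (n f₀ f₁ f₂ f₃ : ℕ) : QuinticOrder :=
  mulMod n (mulMod n (powMod n (unitGen 0) f₀) (powMod n (unitGen 1) f₁))
    (mulMod n (powMod n (unitGen 2) f₂) (powMod n (unitGen 3) f₃))

theorem residue_unitMod (n f₀ f₁ f₂ f₃ : ℕ) :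
    residue n (unitMod n f₀ f₁ f₂ f₃) =
      residue n (unitGen 0) ^ f₀ * residue n (unitGen 1) ^ f₁ *
        (residue n (unitGen 2) ^ f₂ * residue n (unitGen 3) ^ f₃) := by
  simp only [unitMod, residue_mulMod, residue_powMod]

theorem residue_prod_unitGen_pow (n : ℕ) (f : Fin 4 → ℕ) :
    residue n (∏ i, unitGen i ^ f i : QuinticOrderˣ) =
      residue n (unitMod n (f 0) (f 1) (f 2) (f 3)) := by
  rw [residue_unitMod, Fin.prod_univ_four]
  simp only [Units.val_mul, Units.val_pow_eq_pow_val, map_mul, map_pow, mul_assoc]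

/-- Some `aξ - 5b` with `a` prime to `5`, divided by `π₅ ^ 2`, is an integer multiple of `C`
modulo `5`. -/
def SolvableModFive (C : QuinticOrder) : Prop :=
  ∃ a < 5, a ≠ 0 ∧ ∃ b < 5, ∃ c < 5,
    reduce 5 ((a : ℕ) * ξDiv - (b : ℕ) * fiveDiv) = reduce 5 ((c : ℕ) * C)

instance (C : QuinticOrder) : Decidable (SolvableModFive C) := by
  unfold SolvableModFive; infer_instance

/-- For a prime `l` with `l ^ 2 = 5 * N + 1`, a condition that is necessary for some multiple
`m * P` by an integer `m` prime to `l` to be of the form `C * β ^ 5` modulo `l`; the number `c`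
stands for `m ^ N`. -/
def MeetsFifthPowers (l N : ℕ) (C P : QuinticOrder) : Prop :=
  ∃ c < l, c ^ 5 % l = 1 ∧
    reduce l ((c : ℕ) * powMod l P N) = mulMod l (powMod l C N) (powMod l P (5 * N))

instance (l N : ℕ) (C P : QuinticOrder) : Decidable (MeetsFifthPowers l N C P) := by
  unfold MeetsFifthPowers; infer_instance

/-- No `aξ - 5b` with `a`, `b` coprime is of the form `C * β ^ 5` modulo `l`, as tested on the
points `1` and `ξ - 5b` that represent the projective line over `ℤ/l`. -/
def Obstructs (l N : ℕ) (C : QuinticOrder) : Prop :=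
  powMod l C (5 * N) = 1 ∧ ¬ MeetsFifthPowers l N C 1 ∧
    ∀ b < l, ¬ MeetsFifthPowers l N C (ξ - (5 * b : ℕ))

instance (l N : ℕ) (C : QuinticOrder) : Decidable (Obstructs l N C) := by
  unfold Obstructs; infer_instance

theorem exists_obstructs : ∀ κ ∈ [π₂ ^ 2, π₄], ∀ f₀ < 5, ∀ f₁ < 5,
    SolvableModFive (mulMod 5 (unitMod 5 f₀ f₁ 0 0) (κ * π₃ ^ 2)) → ∀ f₂ < 5, ∀ f₃ < 5,
      Obstructs 11 24 (mulMod 11 (unitMod 11 f₀ f₁ f₂ f₃) (κ * π₃ ^ 2 * π₅ ^ 2)) ∨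
      Obstructs 31 192 (mulMod 31 (unitMod 31 f₀ f₁ f₂ f₃) (κ * π₃ ^ 2 * π₅ ^ 2)) ∨
      Obstructs 29 168 (mulMod 29 (unitMod 29 f₀ f₁ f₂ f₃) (κ * π₃ ^ 2 * π₅ ^ 2)) := by
  decide +kernel

section ModPrime

variable {l N : ℕ} [Fact l.Prime] {C P β : QuinticOrder}

/-- Raising `C * β ^ 5 = m * P` to the powers `N` and `5 * N` eliminates `β`, because
`β ^ (5 * N)` is idempotent modulo `l`. -/
theorem SqFrobeniusTrivial.pow_mul_residue_pow (hl : SqFrobeniusTrivial l)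
    (hN : l ^ 2 = 5 * N + 1) {m : ℤ} (hm : ¬ (l : ℤ) ∣ m) (hC : residue l C ^ (5 * N) = 1)
    (h : residue l C * residue l β ^ 5 = m * residue l P) :
    (m : Residue l) ^ N * residue l P ^ N = residue l C ^ N * residue l P ^ (5 * N) := by
  have hN0 : 5 * N ≠ 0 := by
    have : 2 ^ 2 ≤ l ^ 2 := Nat.pow_le_pow_left (Fact.out : l.Prime).two_le 2
    lia
  have idempotent : IsIdempotentElem (residue l β ^ (5 * N)) :=
    mul_self_pow_of_pow_succ_eq hN0 (by rw [← hN, hl.residue_pow_sq])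
  have pow_five_mul : residue l P ^ (5 * N) = residue l β ^ (5 * N) := by
    calc residue l P ^ (5 * N) = (m * residue l P) ^ (5 * N) := by
          rw [mul_pow, intCast_pow_eq_one_of_sq_eq hN hm, one_mul]
      _ = (residue l β ^ (5 * N)) ^ 5 := by
          rw [← h, mul_pow, hC, one_mul, ← pow_mul, ← pow_mul, mul_comm]
      _ = residue l β ^ (5 * N) := idempotent.pow_eq (by norm_num)
  rw [pow_five_mul, ← mul_pow, ← h, mul_pow, ← pow_mul]

theorem SqFrobeniusTrivial.meetsFifthPowers (hl : SqFrobeniusTrivial l)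
    (hN : l ^ 2 = 5 * N + 1) {m : ℤ} (hm : ¬ (l : ℤ) ∣ m) (hC : powMod l C (5 * N) = 1)
    (h : residue l C * residue l β ^ 5 = m * residue l P) : MeetsFifthPowers l N C P := by
  obtain ⟨c, hcl, hc⟩ := exists_lt_intCast_eq_natCast (R := Residue l) (n := l) (m ^ N)
  rw [Int.cast_pow] at hc
  have hc5 : ((c ^ 5 : ℕ) : Residue l) = (1 : ℕ) := by
    rw [Nat.cast_pow, ← hc, ← pow_mul, mul_comm, intCast_pow_eq_one_of_sq_eq hN hm, Nat.cast_one]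
  refine ⟨c, hcl, ?_, ?_⟩
  · rw [CharP.natCast_eq_natCast (Residue l) l, Nat.ModEq] at hc5
    rw [hc5, Nat.mod_eq_of_lt (Fact.out : l.Prime).one_lt]
  · rw [mulMod, ← residue_eq_iff, map_mul, map_mul, map_natCast]
    simp only [residue_powMod]
    rw [← hc, hl.pow_mul_residue_pow hN hm _ h]
    rw [← residue_powMod, hC, map_one]

/-- The point `a : b` of the projective line over `ℤ/l` is represented by `1` or by some
`ξ - 5k`. -/
theorem exists_residue_smul_ξ_sub_eq (hl5 : ¬ l ∣ 5) {a b : ℤ} (hab : IsCoprime a b) :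
    ∃ m : ℤ, ¬ (l : ℤ) ∣ m ∧
      (residue l (a * ξ - 5 * b) = m * residue l 1 ∨
        ∃ k < l, residue l (a * ξ - 5 * b) = m * residue l (ξ - (5 * k : ℕ))) := by
  have hp : Prime (l : ℤ) := Nat.prime_iff_prime_int.1 Fact.out
  have hl0 : (l : Residue l) = 0 := CharP.cast_eq_zero _ l
  by_cases ha : (l : ℤ) ∣ a
  · refine ⟨-5 * b, fun h => ?_, .inl ?_⟩
    · rcases hp.dvd_or_dvd h with h | h
      · exact hl5 (by exact_mod_cast (dvd_neg.1 h))
      · exact hp.not_isUnit (hab.isUnit_of_dvd' ha h)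
    · have ha0 : (a : Residue l) = 0 := (CharP.intCast_eq_zero_iff _ l a).2 ha
      simp only [map_sub, map_mul, map_intCast, map_ofNat, map_one, ha0]
      push_cast
      ring
  · obtain ⟨u, v, huv⟩ := hp.coprime_iff_not_dvd.2 ha
    obtain ⟨k, hk, hvb⟩ := exists_lt_intCast_eq_natCast (R := Residue l) (n := l) (v * b)
    refine ⟨a, ha, .inr ⟨k, hk, ?_⟩⟩
    have huv' := congrArg (Int.cast : ℤ → Residue l) huv
    push_cast [hl0] at huv' hvb
    simp only [map_sub, map_mul, map_intCast, map_natCast, Nat.cast_mul, Nat.cast_ofNat,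
      map_ofNat, ← hvb]
    linear_combination (5 * (b : Residue l)) * huv'

theorem Obstructs.smul_ξ_sub_ne (h : Obstructs l N C) (hl : SqFrobeniusTrivial l)
    (hN : l ^ 2 = 5 * N + 1) (hl5 : ¬ l ∣ 5) {a b : ℤ} (hab : IsCoprime a b) :
    residue l (a * ξ - 5 * b) ≠ residue l C * residue l β ^ 5 := by
  obtain ⟨hC, hone, hsub⟩ := h
  intro heq
  obtain ⟨m, hm, hpt | ⟨k, hk, hpt⟩⟩ := exists_residue_smul_ξ_sub_eq hl5 hab
  · exact hone (hl.meetsFifthPowers hN hm hC (heq.symm.trans hpt))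
  · exact hsub k hk (hl.meetsFifthPowers hN hm hC (heq.symm.trans hpt))

end ModPrime

variable {a b : ℤ} {f : Fin 4 → ℕ} {κ β : QuinticOrder}

theorem solvableModFive_of_eq (ha : ¬ 5 ∣ a)
    (h : a * ξ - 5 * b = (∏ i, unitGen i ^ f i : QuinticOrderˣ) * (κ * π₃ ^ 2 * π₅ ^ 2) * β ^ 5) :
    SolvableModFive (mulMod 5 (unitMod 5 (f 0) (f 1) 0 0) (κ * π₃ ^ 2)) := by
  have hdiv : a * ξDiv - b * fiveDiv =
      (∏ i, unitGen i ^ f i : QuinticOrderˣ) * (κ * π₃ ^ 2) * β ^ 5 := by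
    refine mul_left_cancel₀ (pow_ne_zero 2 π₅_ne_zero) ?_
    linear_combination h - a * ξ_eq + b * five_eq_sq_mul
  obtain ⟨c, hc⟩ := residue_five_pow_five_mem β
  obtain ⟨a', ha5, ha'⟩ := exists_lt_intCast_eq_natCast (R := Residue 5) (n := 5) a
  obtain ⟨b', hb5, hb'⟩ := exists_lt_intCast_eq_natCast (R := Residue 5) (n := 5) b
  obtain ⟨c', hc5, hc'⟩ := exists_lt_intCast_eq_natCast (R := Residue 5) (n := 5) ((-1) ^ f 2 * c)
  refine ⟨a', ha5, ?_, b', hb5, c', hc5, ?_⟩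
  · rintro rfl
    exact ha ((CharP.intCast_eq_zero_iff (Residue 5) 5 a).1 (by rw [ha', Nat.cast_zero]))
  · have hres := congrArg (residue 5) hdiv
    rw [map_sub, map_mul, map_mul, map_intCast, map_intCast, ha', hb', map_mul, map_mul, map_pow,
      residue_prod_unitGen_pow, residue_unitMod, residue_five_unitGen_two,
      residue_five_unitGen_three, ← hc, eq_intCast] at hres
    push_cast at hc'
    rw [← residue_eq_iff, map_sub, map_mul, map_mul, map_natCast, map_natCast, hres,
      map_mul (residue 5) (c' : QuinticOrder), map_natCast, ← hc', residue_mulMod, residue_unitMod]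
    ring

theorem smul_ξ_sub_ne (hab : IsCoprime a b) (ha : ¬ 5 ∣ a) (hf : ∀ i, f i < 5)
    (hκ : κ ∈ [π₂ ^ 2, π₄]) :
    a * ξ - 5 * b ≠ (∏ i, unitGen i ^ f i : QuinticOrderˣ) * (κ * π₃ ^ 2 * π₅ ^ 2) * β ^ 5 := by
  intro h
  have residue_eq (l : ℕ) : residue l (a * ξ - 5 * b) = residue l
      (mulMod l (unitMod l (f 0) (f 1) (f 2) (f 3)) (κ * π₃ ^ 2 * π₅ ^ 2)) * residue l β ^ 5 := by
    rw [h, map_mul, map_pow, map_mul, residue_prod_unitGen_pow, residue_mulMod]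
  have : Fact (Nat.Prime 11) := ⟨by norm_num⟩
  have : Fact (Nat.Prime 29) := ⟨by norm_num⟩
  have : Fact (Nat.Prime 31) := ⟨by norm_num⟩
  rcases exists_obstructs κ hκ _ (hf 0) _ (hf 1) (solvableModFive_of_eq ha h) _ (hf 2) _ (hf 3)
    with hobs | hobs | hobs
  · exact hobs.smul_ξ_sub_ne sqFrobeniusTrivial_eleven (by norm_num) (by norm_num) hab
      (residue_eq 11)
  · exact hobs.smul_ξ_sub_ne sqFrobeniusTrivial_thirtyOne (by norm_num) (by norm_num) hab
      (residue_eq 31)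
  · exact hobs.smul_ξ_sub_ne sqFrobeniusTrivial_twentyNine (by norm_num) (by norm_num) hab
      (residue_eq 29)

end QuinticOrder

/-! ## Factorisation at the primes dividing `30` -/

theorem exists_eq_mul_pow_of_mul_eq_mul_pow_of_prime_dvd {R : Type*} [CommRing R] [IsDomain R]
    [UniqueFactorizationMonoid R] {d : R} {n : ℕ} {w : R} (hw : w ≠ 0) {x y c : R}
    (h : x * y = c * w ^ n) (hc : ∀ p, Prime p → p ∣ c → p ∣ d)
    (hxy : ∀ p, Prime p → p ∣ x → p ∣ y → p ∣ d) :
    ∃ s β, x = s * β ^ n ∧ ∀ p, Prime p → p ∣ s → p ∣ d := by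
  induction w using UniqueFactorizationMonoid.induction_on_prime generalizing x y c with
  | h₁ => exact absurd rfl hw
  | h₂ w hunit =>
    refine ⟨x, 1, by rw [one_pow, mul_one], fun p hp hpx => hc p hp ?_⟩
    exact (hunit.pow n).dvd_mul_right.1 (h ▸ hpx.mul_right y)
  | h₃ w p hw0 hp ih =>
    have hpn : p ^ n ≠ 0 := pow_ne_zero n hp.ne_zero
    by_cases hpd : p ∣ d
    · refine ih hw0 (c := c * p ^ n) (by rw [h, mul_pow, mul_assoc]) (fun q hq hqc => ?_) hxy
      exact (hq.dvd_or_dvd hqc).elim (hc q hq) fun hqp => (hq.dvd_of_dvd_pow hqp).trans hpd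
    have hdvd : p ^ n ∣ x * y := ⟨c * w ^ n, by rw [h]; ring⟩
    by_cases hpx : p ∣ x
    · have hpy : ¬ p ∣ y := fun hpy => hpd (hxy p hp hpx hpy)
      obtain ⟨x, rfl⟩ := hp.pow_dvd_of_dvd_mul_right n hpy hdvd
      obtain ⟨s, β, rfl, hs⟩ := ih hw0 (mul_left_cancel₀ hpn (by linear_combination h)) hc
        fun q hq hqx => hxy q hq (hqx.mul_left _)
      exact ⟨s, p * β, by ring, hs⟩
    · obtain ⟨y, rfl⟩ := hp.pow_dvd_of_dvd_mul_left n hpx hdvd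
      exact ih hw0 (mul_left_cancel₀ hpn (by linear_combination h)) hc
        fun q hq hqx hqy => hxy q hq hqx (hqy.mul_left _)

theorem emod_eq_emod_of_mul_pow_eq {p c d e f n v w : ℕ} (hp : p.Prime) (hc : ¬ p ∣ c)
    (hd : ¬ p ∣ d) (hv : v ≠ 0) (hw : w ≠ 0) (h : p ^ e * c * v ^ n = p ^ f * d * w ^ n) :
    e % n = f % n := by
  have factorization_eq (e c v : ℕ) (hc : ¬ p ∣ c) (hv : v ≠ 0) :
      (p ^ e * c * v ^ n).factorization p = e + n * v.factorization p := by
    have hc0 : c ≠ 0 := by rintro rfl; exact hc (dvd_zero p)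
    have hpe : p ^ e ≠ 0 := pow_ne_zero e hp.ne_zero
    rw [Nat.factorization_mul (mul_ne_zero hpe hc0) (pow_ne_zero n hv),
      Nat.factorization_mul hpe hc0, hp.factorization_pow, Nat.factorization_pow]
    simp [Nat.factorization_eq_zero_of_not_dvd hc]
  have heq := congrArg (fun k => k.factorization p % n) h
  simpa only [factorization_eq _ _ _ hc hv, factorization_eq _ _ _ hd hw,
    Nat.add_mul_mod_self_left] using heq

theorem emod_five_eq_two_of_mul_pow_five_eq {i k l v w : ℕ} (hv : v ≠ 0) (hw : w ≠ 0)
    (h : 900 * v ^ 5 = 2 ^ i * 3 ^ k * 5 ^ l * w ^ 5) :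
    i % 5 = 2 ∧ k % 5 = 2 ∧ l % 5 = 2 := by
  have not_dvd {p q r : ℕ} (hp : p.Prime) (m n : ℕ) (hq : ¬ p ∣ q) (hr : ¬ p ∣ r) :
      ¬ p ∣ q ^ m * r ^ n := fun hdvd =>
    (hp.dvd_mul.1 hdvd).elim (fun h => hq (hp.dvd_of_dvd_pow h)) fun h =>
      hr (hp.dvd_of_dvd_pow h)
  refine ⟨(emod_eq_emod_of_mul_pow_eq (c := 225) (e := 2) (d := 3 ^ k * 5 ^ l) Nat.prime_two
      (by norm_num) (not_dvd Nat.prime_two k l (by norm_num) (by norm_num)) hv hw ?_).symm,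
    (emod_eq_emod_of_mul_pow_eq (c := 100) (e := 2) (d := 2 ^ i * 5 ^ l) Nat.prime_three
      (by norm_num) (not_dvd Nat.prime_three i l (by norm_num) (by norm_num)) hv hw ?_).symm,
    (emod_eq_emod_of_mul_pow_eq (c := 36) (e := 2) (d := 2 ^ i * 3 ^ k) Nat.prime_five
      (by norm_num) (not_dvd Nat.prime_five i k (by norm_num) (by norm_num)) hv hw ?_).symm⟩ <;>
  linarith

namespace QuinticOrder

open Ideal

variable {p g : QuinticOrder}

theorem natAbs_normForm_eq_one_of_isUnit (hg : IsUnit g) : (normForm g).natAbs = 1 :=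
  Int.isUnit_iff_natAbs_eq.1 (isUnit_iff_isUnit_normForm.1 hg)

theorem associated_of_dvd_of_natAbs_normForm_eq (h : p ∣ g) (hg : normForm g ≠ 0)
    (hpg : (normForm p).natAbs = (normForm g).natAbs) : Associated p g := by
  obtain ⟨r, rfl⟩ := h
  rw [normForm_mul, Int.natAbs_mul] at hpg
  rw [normForm_mul] at hg
  have hr : (normForm r).natAbs = 1 :=
    (Nat.eq_of_mul_eq_mul_left (Int.natAbs_pos.2 (left_ne_zero_of_mul hg))
      ((mul_one _).trans hpg)).symm
  exact associated_mul_unit_right p r (isUnit_of_natAbs_normForm_eq_one hr)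

theorem associated_of_dvd_of_prime_normForm (hp : Prime p) (h : p ∣ g)
    (hg : (normForm g).natAbs.Prime) : Associated p g := by
  refine associated_of_dvd_of_natAbs_normForm_eq h (Int.natAbs_ne_zero.1 hg.ne_zero) ?_
  obtain ⟨r, rfl⟩ := h
  rw [normForm_mul, Int.natAbs_mul] at hg ⊢
  rcases Nat.prime_mul_iff.1 hg with ⟨-, hr⟩ | ⟨-, hp1⟩
  · rw [hr, mul_one]
  · exact absurd (isUnit_of_natAbs_normForm_eq_one hp1) hp.not_isUnit

theorem associated_π₄_of_dvd (hp : Prime p) (h : p ∣ π₄) : Associated p π₄ := by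
  have : (span {p}).IsPrime := (span_singleton_prime hp.ne_zero).2 hp
  have hnorm := absNorm_eq_four_of_π₄_mem (mt span_singleton_eq_bot.1 hp.ne_zero)
    (mem_span_singleton.2 h)
  rw [absNorm_span_singleton, norm_eq_normForm] at hnorm
  exact associated_of_dvd_of_natAbs_normForm_eq h (by decide +kernel)
    (hnorm.trans natAbs_normForm_π₄.symm)

theorem associated_of_dvd_two (hp : Prime p) (h : p ∣ 2) :
    Associated p π₂ ∨ Associated p π₄ := by
  rw [two_eq, (isUnit_of_natAbs_normForm_eq_one (by decide +kernel)).dvd_mul_right] at h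
  rcases hp.dvd_or_dvd h with h | h
  · exact .inl (associated_of_dvd_of_prime_normForm hp h
      (natAbs_normForm_π₂ ▸ Nat.prime_two))
  · exact .inr (associated_π₄_of_dvd hp (hp.dvd_of_dvd_pow h))

theorem associated_of_dvd_three (hp : Prime p) (h : p ∣ 3) : Associated p π₃ := by
  rw [three_eq, (isUnit_of_natAbs_normForm_eq_one (by decide +kernel)).dvd_mul_right] at h
  exact associated_of_dvd_of_prime_normForm hp (hp.dvd_of_dvd_pow h)
    (natAbs_normForm_π₃ ▸ Nat.prime_three)

theorem associated_of_dvd_five (hp : Prime p) (h : p ∣ 5) : Associated p π₅ := by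
  rw [five_eq, (isUnit_of_natAbs_normForm_eq_one (by decide +kernel)).dvd_mul_right] at h
  exact associated_of_dvd_of_prime_normForm hp (hp.dvd_of_dvd_pow h)
    (natAbs_normForm_π₅ ▸ Nat.prime_five)

theorem associated_of_dvd_thirty (hp : Prime p) (h : p ∣ 30) :
    Associated p π₂ ∨ Associated p π₄ ∨ Associated p π₃ ∨ Associated p π₅ := by
  rw [show (30 : QuinticOrder) = 2 * 3 * 5 by norm_num] at h
  rcases hp.dvd_or_dvd h with h | h
  · rcases hp.dvd_or_dvd h with h | h
    · exact (associated_of_dvd_two hp h).imp_right .inl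
    · exact .inr (.inr (.inl (associated_of_dvd_three hp h)))
  · exact .inr (.inr (.inr (associated_of_dvd_five hp h)))

theorem exists_associated_of_forall_prime_dvd_thirty {s : QuinticOrder} (hs : s ≠ 0)
    (h : ∀ p, Prime p → p ∣ s → p ∣ 30) :
    ∃ i j k l, Associated s (π₂ ^ i * π₄ ^ j * π₃ ^ k * π₅ ^ l) := by
  induction s using UniqueFactorizationMonoid.induction_on_prime with
  | h₁ => exact absurd rfl hs
  | h₂ s hunit => exact ⟨0, 0, 0, 0, by simpa using associated_one_iff_isUnit.2 hunit⟩
  | h₃ s p hs0 hp ih =>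
    obtain ⟨i, j, k, l, hassoc⟩ := ih hs0 fun q hq hqs => h q hq (hqs.mul_left p)
    rcases associated_of_dvd_thirty hp (h p hp (dvd_mul_right p s)) with hp | hp | hp | hp
    · exact ⟨i + 1, j, k, l, (hp.mul_mul hassoc).trans (.of_eq (by ring))⟩
    · exact ⟨i, j + 1, k, l, (hp.mul_mul hassoc).trans (.of_eq (by ring))⟩
    · exact ⟨i, j, k + 1, l, (hp.mul_mul hassoc).trans (.of_eq (by ring))⟩
    · exact ⟨i, j, k, l + 1, (hp.mul_mul hassoc).trans (.of_eq (by ring))⟩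

end QuinticOrder

/-! ## A Thue equation -/

/-- The binary quintic form to which the curve is reduced by a descent in `ℤ[√-5]`. -/
def binaryQuintic (a b : ℤ) : ℤ :=
  2 * a ^ 5 + 25 * a ^ 4 * b - 100 * a ^ 3 * b ^ 2 - 250 * a ^ 2 * b ^ 3 + 250 * a * b ^ 4 +
    125 * b ^ 5

namespace QuinticOrder

theorem smul_ξ_sub_def (a b : ℤ) : a * ξ - 5 * b = ⟨-2 * a - 5 * b, -a, a, a, -a⟩ := by
  have hb : (5 : QuinticOrder) * b = (5 * b : ℤ) := by push_cast; ring
  rw [hb, intCast_mul, intCast_def, sub_def]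
  ext <;> simp [ξ, mul_comm]

theorem normForm_smul_ξ_sub (a b : ℤ) : normForm (a * ξ - 5 * b) = -25 * binaryQuintic a b := by
  rw [smul_ξ_sub_def]
  simp only [normForm, det₅, minor₄, minor₃, minor₂, mul_def, QuinticOrder.mul, binaryQuintic,
    show ω 0 = ⟨1, 0, 0, 0, 0⟩ from rfl, show ω 1 = ⟨0, 1, 0, 0, 0⟩ from rfl,
    show ω 2 = ⟨0, 0, 1, 0, 0⟩ from rfl, show ω 3 = ⟨0, 0, 0, 1, 0⟩ from rfl,
    show ω 4 = ⟨0, 0, 0, 0, 1⟩ from rfl, mul_zero, mul_one, add_zero, zero_add, sub_zero, zero_sub]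
  ring

theorem normForm_intCast (c : ℤ) : normForm c = c ^ 5 := by
  rw [← norm_eq_normForm, ← eq_intCast (algebraMap ℤ QuinticOrder),
    Algebra.norm_algebraMap_of_basis basis, Fintype.card_fin]

theorem ξ_relation :
    ξ ^ 5 + 10 * ξ ^ 4 - 50 * ξ ^ 3 - 100 * ξ ^ 2 + 125 * ξ + 50 = 0 := by
  decide +kernel

/-- The first factor is the derivative at `ξ` of the minimal polynomial of `ξ`. -/
theorem deriv_ξ_mul :
    (5 * ξ ^ 4 + 40 * ξ ^ 3 - 150 * ξ ^ 2 - 200 * ξ + 125) * ⟨0, 6, 18, 3, 9⟩ = 30 ^ 3 := by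
  decide +kernel

/-- The product of the conjugates of `aξ - 5b`, written as the quotient
`(g(aξ) - g(5b)) / (aξ - 5b)` for the homogenised minimal polynomial `g` of `ξ`. -/
def cofactor (a b : QuinticOrder) : QuinticOrder :=
  ((a * ξ) ^ 4 + (a * ξ) ^ 3 * (5 * b) + (a * ξ) ^ 2 * (5 * b) ^ 2 + a * ξ * (5 * b) ^ 3 +
      (5 * b) ^ 4) +
    10 * a * ((a * ξ) ^ 3 + (a * ξ) ^ 2 * (5 * b) + a * ξ * (5 * b) ^ 2 + (5 * b) ^ 3) -
    50 * a ^ 2 * ((a * ξ) ^ 2 + a * ξ * (5 * b) + (5 * b) ^ 2) -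
    100 * a ^ 3 * (a * ξ + 5 * b) + 125 * a ^ 4

theorem smul_ξ_sub_mul_cofactor (a b : ℤ) :
    (a * ξ - 5 * b) * cofactor a b = (-25 * binaryQuintic a b : ℤ) := by
  rw [cofactor, binaryQuintic]
  push_cast
  linear_combination (a : QuinticOrder) ^ 5 * ξ_relation

theorem dvd_pow_four_mul_deriv {a b p : QuinticOrder} (hx : p ∣ a * ξ - 5 * b)
    (hy : p ∣ cofactor a b) :
    p ∣ a ^ 4 * (5 * ξ ^ 4 + 40 * ξ ^ 3 - 150 * ξ ^ 2 - 200 * ξ + 125) := by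
  have hsplit : a ^ 4 * (5 * ξ ^ 4 + 40 * ξ ^ 3 - 150 * ξ ^ 2 - 200 * ξ + 125) =
      cofactor a b + (a * ξ - 5 * b) *
        (4 * (a * ξ) ^ 3 + 3 * (a * ξ) ^ 2 * (5 * b) + 2 * (a * ξ) * (5 * b) ^ 2 + (5 * b) ^ 3 +
          10 * a * (3 * (a * ξ) ^ 2 + 2 * (a * ξ) * (5 * b) + (5 * b) ^ 2) -
          50 * a ^ 2 * (2 * (a * ξ) + 5 * b) - 100 * a ^ 3) := by
    rw [cofactor]; ring
  rw [hsplit]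
  exact dvd_add hy (hx.mul_right _)

variable {a b w : ℤ}

theorem dvd_thirty_of_dvd_of_dvd_cofactor (hab : IsCoprime a b) {p : QuinticOrder} (hp : Prime p)
    (hx : p ∣ a * ξ - 5 * b) (hy : p ∣ cofactor a b) : p ∣ 30 := by
  rcases hp.dvd_or_dvd (dvd_pow_four_mul_deriv hx hy) with h | h
  · have ha : p ∣ (a : QuinticOrder) := hp.dvd_of_dvd_pow h
    have h5b : p ∣ 5 * (b : QuinticOrder) := by simpa using dvd_sub (ha.mul_right ξ) hx
    rcases hp.dvd_or_dvd h5b with h5 | hb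
    · exact h5.trans ⟨6, by norm_num⟩
    · exact absurd ((hab.map (Int.castRingHom QuinticOrder)).isUnit_of_dvd' ha hb) hp.not_isUnit
  · exact hp.dvd_of_dvd_pow (deriv_ξ_mul ▸ h.mul_right _)

theorem not_π₄_dvd_smul_ξ_sub (ha : Odd a) (hb : Even b) : ¬ π₄ ∣ a * ξ - 5 * b := by
  intro h
  obtain ⟨c, rfl⟩ := hb.two_dvd
  have hπ₄ : π₄ ∣ 2 := ⟨π₂ * π₄ * ⟨-955, 351, 400, -298, -22⟩, by rw [two_eq]; ring⟩
  have hξ : π₄ ∣ a * ξ := by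
    refine (dvd_sub_left (hπ₄.mul_right (5 * (c : QuinticOrder)))).1 ?_
    convert h using 2; push_cast; ring
  obtain ⟨r, hr⟩ := hξ
  have hnorm := congrArg normForm hr
  rw [normForm_mul, normForm_mul, normForm_intCast, show normForm ξ = -50 by decide +kernel,
    show normForm π₄ = 4 by decide +kernel] at hnorm
  have := Int.odd_iff.1 (ha.pow (n := 5))
  lia

theorem not_π₂_dvd_smul_ξ_sub (hb : Odd b) : ¬ π₂ ∣ a * ξ - 5 * b := by
  intro h
  have hξ : π₂ ∣ ξ := ⟨⟨-29, 11, 11, -9, 0⟩, by decide +kernel⟩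
  have h5b : π₂ ∣ (5 * b : ℤ) := by simpa using dvd_sub (hξ.mul_left (a : QuinticOrder)) h
  obtain ⟨r, hr⟩ := h5b
  have hnorm := congrArg normForm hr
  rw [normForm_mul, normForm_intCast, show normForm π₂ = -2 by decide +kernel] at hnorm
  have := Int.odd_iff.1 ((Odd.mul (by decide : Odd (5 : ℤ)) hb).pow (n := 5))
  lia

theorem smul_ξ_sub_ne_units_mul (hab : IsCoprime a b) (ha : ¬ 5 ∣ a) {κ : QuinticOrder}
    (hκ : κ ∈ [π₂ ^ 2, π₄]) (u : QuinticOrderˣ) (β : QuinticOrder) :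
    a * ξ - 5 * b ≠ u * (κ * π₃ ^ 2 * π₅ ^ 2) * β ^ 5 := by
  obtain ⟨f, η, hf, rfl⟩ := exists_eq_prod_unitGen_pow_mul_pow_five u
  intro h
  refine smul_ξ_sub_ne (β := η * β) hab ha hf hκ (h.trans ?_)
  rw [Units.val_mul, Units.val_pow_eq_pow_val]
  ring

theorem exists_smul_ξ_sub_eq (hab : IsCoprime a b) (hw : w ≠ 0)
    (h : binaryQuintic a b = 36 * w ^ 5) : ∃ (u : QuinticOrderˣ) (i j k l : ℕ) (β : QuinticOrder),
      a * ξ - 5 * b = u * (π₂ ^ i * π₄ ^ j * π₃ ^ k * π₅ ^ l) * β ^ 5 := by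
  have hw0 : (w : QuinticOrder) ≠ 0 := by simpa [intCast_def, zero_def] using hw
  have hprod : (a * ξ - 5 * b) * cofactor a b = -30 ^ 2 * (w : QuinticOrder) ^ 5 := by
    rw [smul_ξ_sub_mul_cofactor, h]; push_cast; ring
  obtain ⟨s, β, hsβ, hs⟩ := exists_eq_mul_pow_of_mul_eq_mul_pow_of_prime_dvd hw0 hprod
    (fun p hp hdvd => hp.dvd_of_dvd_pow (dvd_neg.1 hdvd))
    (fun p hp => dvd_thirty_of_dvd_of_dvd_cofactor hab hp)
  have hs0 : s ≠ 0 := by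
    rintro rfl
    rw [hsβ, zero_mul, zero_mul] at hprod
    exact mul_ne_zero (by decide +kernel) (pow_ne_zero 5 hw0) hprod.symm
  obtain ⟨i, j, k, l, hassoc⟩ := exists_associated_of_forall_prime_dvd_thirty hs0 hs
  obtain ⟨u, hu⟩ := hassoc.symm
  exact ⟨u, i, j, k, l, β, by rw [hsβ, ← hu]; ring⟩

theorem exponents_of_smul_ξ_sub_eq (hw : w ≠ 0) (h : binaryQuintic a b = 36 * w ^ 5)
    {u : QuinticOrderˣ} {i j k l : ℕ} {β : QuinticOrder}
    (hx : a * ξ - 5 * b = u * (π₂ ^ i * π₄ ^ j * π₃ ^ k * π₅ ^ l) * β ^ 5) :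
    (i + 2 * j) % 5 = 2 ∧ k % 5 = 2 ∧ l % 5 = 2 := by
  have hnorm := congrArg (fun x => (normForm x).natAbs) hx
  simp only [normForm_smul_ξ_sub, h, normForm_mul, normForm_pow, Int.natAbs_mul, Int.natAbs_pow,
    natAbs_normForm_eq_one_of_isUnit u.isUnit, natAbs_normForm_π₂, natAbs_normForm_π₃,
    natAbs_normForm_π₄, natAbs_normForm_π₅, one_mul] at hnorm
  have hw0 : w.natAbs ≠ 0 := Int.natAbs_ne_zero.2 hw
  have heq : 900 * w.natAbs ^ 5 =
      2 ^ (i + 2 * j) * 3 ^ k * 5 ^ l * (normForm β).natAbs ^ 5 := by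
    rw [pow_add, pow_mul, show 2 ^ 2 = 4 by rfl, ← hnorm, ← mul_assoc]
    rfl
  refine emod_five_eq_two_of_mul_pow_five_eq hw0 (fun hβ => ?_) heq
  rw [hβ, zero_pow (by norm_num), mul_zero] at heq
  exact mul_ne_zero (by norm_num) (pow_ne_zero 5 hw0) heq

/-- The two cases are those of even and of odd `b`. -/
theorem exists_pow_mul_pow_eq_of_dvd {i j : ℕ} (ha : Odd a) (hij : (i + 2 * j) % 5 = 2)
    (h : π₂ ^ i * π₄ ^ j ∣ a * ξ - 5 * b) :
    ∃ κ ∈ [π₂ ^ 2, π₄], ∃ γ, π₂ ^ i * π₄ ^ j = κ * γ ^ 5 := by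
  rcases Int.even_or_odd b with hb | hb
  · have hj : j = 0 := by
      by_contra hj
      exact not_π₄_dvd_smul_ξ_sub ha hb (((dvd_pow_self π₄ hj).mul_left _).trans h)
    obtain ⟨m, rfl⟩ : ∃ m, i = 5 * m + 2 := ⟨i / 5, by lia⟩
    exact ⟨π₂ ^ 2, by simp, π₂ ^ m, by rw [hj]; ring⟩
  · have hi : i = 0 := by
      by_contra hi
      exact not_π₂_dvd_smul_ξ_sub hb (((dvd_pow_self π₂ hi).mul_right _).trans h)
    obtain ⟨m, rfl⟩ : ∃ m, j = 5 * m + 1 := ⟨j / 5, by lia⟩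
    exact ⟨π₄, by simp, π₄ ^ m, by rw [hi]; ring⟩

end QuinticOrder

open QuinticOrder in
theorem binaryQuintic_ne {a b w : ℤ} (hab : IsCoprime a b) (ha5 : ¬ 5 ∣ a) (ha : Odd a)
    (hw : w ≠ 0) : binaryQuintic a b ≠ 36 * w ^ 5 := by
  intro h
  obtain ⟨u, i, j, k, l, β, hx⟩ := exists_smul_ξ_sub_eq hab hw h
  obtain ⟨hij, hk, hl⟩ := exponents_of_smul_ξ_sub_eq hw h hx
  obtain ⟨κ, hκ, γ, hγ⟩ := exists_pow_mul_pow_eq_of_dvd ha hij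
    ⟨u * (π₃ ^ k * π₅ ^ l) * β ^ 5, by rw [hx]; ring⟩
  obtain ⟨k, rfl⟩ : ∃ m, k = 5 * m + 2 := ⟨k / 5, by lia⟩
  obtain ⟨l, rfl⟩ : ∃ m, l = 5 * m + 2 := ⟨l / 5, by lia⟩
  refine smul_ξ_sub_ne_units_mul hab ha5 hκ u (γ * π₃ ^ k * π₅ ^ l * β) ?_
  rw [hx, hγ]
  ring

section

variable {p r w : ℤ}

/-- The quintic form comes from `2u + 5v` when `u + v√-5` is the fifth power of `a + b√-5`. -/
theorem binaryQuintic_eq (a b : ℤ) :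
    binaryQuintic a b = 2 * (a * reQuartic (-5) a b) + 5 * (5 * b * imQuartic (-5) a b) := by
  simp only [binaryQuintic, reQuartic, imQuartic]
  ring

theorem odd_of_even_binaryQuintic {a b : ℤ} (hab : IsCoprime a b)
    (h : Even (binaryQuintic a b)) : Odd a := by
  rw [← Int.not_even_iff_odd]
  intro ha
  have hb : Even b := by
    have h125 : ¬ Even (125 : ℤ) := by decide
    simp only [binaryQuintic, Int.even_add, Int.even_sub, Int.even_mul, Int.even_pow] at h
    tauto
  exact Int.prime_two.not_isUnit (hab.isUnit_of_dvd' ha.two_dvd hb.two_dvd)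

/-- Multiplying `4w⁵ + r√-5` by `2 + √-5`, of norm `9`, makes its norm `(3p)⁵`. -/
theorem exists_eq_of_twentySeven_mul_pow_five_eq (hp : p ≠ 0) (hpw : IsCoprime p w)
    (h3 : ¬ 3 ∣ w) (hrw : 3 ∣ r + w ^ 5) (h : 27 * p ^ 5 = 5 * r ^ 2 + 16 * w ^ 10) :
    ∃ a b, 8 * w ^ 5 - 5 * r = a * reQuartic (-5) a b ∧
      4 * w ^ 5 + 2 * r = 5 * b * imQuartic (-5) a b ∧ a ^ 2 + 5 * b ^ 2 = 3 * p := by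
  refine exists_eq_of_sq_add_five_mul_sq_eq_pow_five (by lia) (by linear_combination -9 * h)
    fun l hl hlu hlv hlp => ?_
  have hdvd : l ∣ 2 ^ 2 * (3 ^ 2 * w ^ 5) := by
    have := dvd_add hlv (hlu.mul_left 2)
    rwa [show 5 * (4 * w ^ 5 + 2 * r) + 2 * (8 * w ^ 5 - 5 * r) = 2 ^ 2 * (3 ^ 2 * w ^ 5) by
      ring] at this
  rcases hl.dvd_or_dvd hdvd with hl2 | hdvd
  · exact hl.dvd_of_dvd_pow hl2
  rcases hl.dvd_or_dvd hdvd with hl3 | hlw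
  · have hassoc := hl.associated_of_dvd Int.prime_three (hl.dvd_of_dvd_pow hl3)
    have h3u := hassoc.dvd_iff_dvd_left.1 hlu
    exact absurd (Int.prime_three.dvd_of_dvd_pow (n := 5) (by lia)) h3
  · have hcop : IsCoprime (3 * p) w := (isCoprime_three_iff.2 h3).symm.mul_left hpw
    exact absurd (hcop.isUnit_of_dvd' hlp (hl.dvd_of_dvd_pow hlw)) hl.not_isUnit

theorem twentySeven_mul_pow_five_ne_five_mul_sq_add_of_three_dvd (hw : w ≠ 0)
    (hpw : IsCoprime p w) (h3 : ¬ 3 ∣ w) (h5 : ¬ 5 ∣ w) (hrw : 3 ∣ r + w ^ 5) :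
    27 * p ^ 5 ≠ 5 * r ^ 2 + 16 * w ^ 10 := by
  intro h
  have hp : p ≠ 0 := by
    rintro rfl
    have : 0 < w ^ 10 := by positivity
    nlinarith [sq_nonneg r]
  obtain ⟨a, b, ha, hb, hab⟩ := exists_eq_of_twentySeven_mul_pow_five_eq hp hpw h3 hrw h
  have hform : binaryQuintic a b = 36 * w ^ 5 := by
    rw [binaryQuintic_eq, ← ha, ← hb]
    ring
  have hab_cop : IsCoprime a b := isCoprime_of_sq_add_five_mul_sq_eq (c := 36)
    ((isCoprime_three_iff.2 h3).symm.mul_left hpw) (by lia) hab (by norm_num) fun l hla hlb => by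
      rw [← hform, binaryQuintic_eq]
      exact dvd_add ((pow_five_dvd_mul_reQuartic hla hlb).mul_left 2)
        ((pow_five_dvd_mul_imQuartic hla hlb).mul_left 5)
  have ha5 : ¬ 5 ∣ a := fun h5a => by
    have h5u : 5 ∣ 8 * w ^ 5 - 5 * r := ha ▸ h5a.mul_right _
    exact h5 ((by norm_num : Prime (5 : ℤ)).dvd_of_dvd_pow (n := 5) (by lia))
  have ha2 : Odd a := odd_of_even_binaryQuintic hab_cop ⟨18 * w ^ 5, by rw [hform]; ring⟩
  exact binaryQuintic_ne hab_cop ha5 ha2 hw hform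

theorem twentySeven_mul_pow_five_ne_five_mul_sq_add (hw : w ≠ 0) (hpw : IsCoprime p w)
    (h3 : ¬ 3 ∣ w) (h5 : ¬ 5 ∣ w) : 27 * p ^ 5 ≠ 5 * r ^ 2 + 16 * w ^ 10 := by
  intro h
  have hdvd : 3 ∣ (r + w ^ 5) * (-r + w ^ 5) :=
    ⟨9 * p ^ 5 - 2 * r ^ 2 - 5 * w ^ 10, by linear_combination -h⟩
  rcases Int.prime_three.dvd_or_dvd hdvd with hrw | hrw
  · exact twentySeven_mul_pow_five_ne_five_mul_sq_add_of_three_dvd hw hpw h3 h5 hrw h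
  · exact twentySeven_mul_pow_five_ne_five_mul_sq_add_of_three_dvd hw hpw h3 h5 hrw
      (by rw [h]; ring)

end

/-! ## Rational points on the curve -/

section

variable {p r w : ℤ}

theorem nine_dvd_of_dvd_sq (h : 27 ∣ r ^ 2) : 9 ∣ r := by
  obtain ⟨s, rfl⟩ : 3 ∣ r := Int.prime_three.dvd_of_dvd_pow ((by norm_num : (3 : ℤ) ∣ 27).trans h)
  obtain ⟨t, rfl⟩ : 3 ∣ s := Int.prime_three.dvd_of_dvd_pow (n := 2) (by
    rw [show (3 * s) ^ 2 = 9 * s ^ 2 by ring] at h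
    lia)
  exact ⟨t, by ring⟩

theorem not_three_dvd_of_twentySeven_mul_pow_five_eq {c e : ℤ} (hpw : IsCoprime p w)
    (hc : IsCoprime 3 c) (h : 27 * p ^ 5 = c * r ^ 2 + e * w ^ 10) : ¬ 3 ∣ w := by
  intro hw
  suffices hp : 3 ∣ p from Int.prime_three.not_isUnit (hpw.isUnit_of_dvd' hp hw)
  obtain ⟨x, rfl⟩ := hw
  have hdvd : 3 ^ 3 ∣ c * r ^ 2 :=
    ⟨p ^ 5 - e * 3 ^ 7 * x ^ 10, by linear_combination -h⟩
  obtain ⟨s, rfl⟩ := nine_dvd_of_dvd_sq ((hc.pow_left (m := 3)).dvd_of_dvd_mul_left hdvd)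
  refine Int.prime_three.dvd_of_dvd_pow (n := 5) ⟨c * s ^ 2 + e * 3 ^ 6 * x ^ 10, ?_⟩
  linarith

theorem five_mul_sq_ne_sub (hw : w ≠ 0) (hpw : IsCoprime p w) :
    5 * r ^ 2 ≠ 27 * p ^ 5 - 16 * (w ^ 2) ^ 5 := by
  intro h
  have heq : 27 * p ^ 5 = 5 * r ^ 2 + 16 * w ^ 10 := by linear_combination -h
  have h3 := not_three_dvd_of_twentySeven_mul_pow_five_eq hpw (by norm_num) heq
  have h5 : ¬ 5 ∣ w := by
    intro h5w
    have hprime : Prime (5 : ℤ) := by norm_num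
    have hdvd : 5 ∣ 27 * p ^ 5 :=
      heq ▸ dvd_add (dvd_mul_right 5 _) ((dvd_pow h5w (by norm_num)).mul_left 16)
    have h5p := hprime.dvd_of_dvd_pow ((hprime.dvd_or_dvd hdvd).resolve_left (by decide))
    exact hprime.not_isUnit (hpw.isUnit_of_dvd' h5p h5w)
  exact twentySeven_mul_pow_five_ne_five_mul_sq_add hw hpw h3 h5 heq

theorem five_mul_sq_ne_three_mul (hpw : IsCoprime p w) (hp : ¬ 3 ∣ p) :
    5 * r ^ 2 ≠ 3 * (27 * p ^ 5 - 16 * (w ^ 2 * 3) ^ 5) := by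
  intro h
  obtain ⟨s, rfl⟩ : 9 ∣ r := nine_dvd_of_dvd_sq (by
    have : 27 ∣ 5 * r ^ 2 := ⟨3 * p ^ 5 - 432 * w ^ 10, by linear_combination h⟩
    lia)
  have heq : p ^ 5 = 5 * s ^ 2 + 144 * w ^ 10 := by linarith
  have h5 : ¬ 5 ∣ p := by
    intro h5p
    have hprime : Prime (5 : ℤ) := by norm_num
    have hdvd : 5 ∣ 144 * w ^ 10 :=
      (dvd_add_right (dvd_mul_right 5 (s ^ 2))).1 (heq ▸ dvd_pow h5p (by norm_num))
    have h5w := hprime.dvd_of_dvd_pow ((hprime.dvd_or_dvd hdvd).resolve_left (by decide))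
    exact hprime.not_isUnit (hpw.isUnit_of_dvd' h5p h5w)
  exact pow_five_ne_five_mul_sq_add hpw hp h5 heq

theorem five_mul_sq_ne_five_mul (hpw : IsCoprime p w) (hp : ¬ 5 ∣ p) :
    5 * r ^ 2 ≠ 5 * (27 * p ^ 5 - 16 * (w ^ 2 * 5) ^ 5) := by
  intro h
  have heq : 27 * p ^ 5 = 1 * r ^ 2 + 50000 * w ^ 10 := by linarith
  have h3 := not_three_dvd_of_twentySeven_mul_pow_five_eq hpw isCoprime_one_right heq
  exact twentySeven_mul_pow_five_ne (r := r) hpw hp h3 (by linear_combination heq)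

theorem five_mul_sq_ne_fifteen_mul (hw : w ≠ 0) (hpw : IsCoprime p w) (h3 : ¬ 3 ∣ p)
    (h5 : ¬ 5 ∣ p) : 5 * r ^ 2 ≠ 15 * (27 * p ^ 5 - 16 * (w ^ 2 * 15) ^ 5) := by
  intro h
  obtain ⟨s, rfl⟩ : 9 ∣ r := nine_dvd_of_dvd_sq
    ⟨3 * p ^ 5 - 1350000 * w ^ 10, by linarith⟩
  exact pow_five_ne_sq_add_five_mul_sq (r := s) hw hpw h3 h5 (by linarith)

theorem five_mul_sq_ne {d : ℕ} (hd : d ∣ 15) (hw : w ≠ 0) (hpw : IsCoprime p w)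
    (hpd : IsCoprime p d) : 5 * r ^ 2 ≠ d * (27 * p ^ 5 - 16 * (w ^ 2 * d) ^ 5) := by
  have not_dvd (l : ℤ) (hl : Prime l) (hld : l ∣ d) : ¬ l ∣ p :=
    fun hlp => hl.not_isUnit (hpd.isUnit_of_dvd' hlp hld)
  have hmem : d ∈ Nat.divisors 15 := Nat.mem_divisors.2 ⟨hd, by norm_num⟩
  rw [show Nat.divisors 15 = {1, 3, 5, 15} by decide] at hmem
  simp only [Finset.mem_insert, Finset.mem_singleton] at hmem
  rcases hmem with rfl | rfl | rfl | rfl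
  · simpa only [Nat.cast_one, one_mul, mul_one] using five_mul_sq_ne_sub hw hpw
  · exact five_mul_sq_ne_three_mul hpw (not_dvd 3 (by norm_num) (by norm_num))
  · exact five_mul_sq_ne_five_mul hpw (not_dvd 5 (by norm_num) (by norm_num))
  · exact five_mul_sq_ne_fifteen_mul hw hpw (not_dvd 3 (by norm_num) (by norm_num))
      (not_dvd 5 (by norm_num) (by norm_num))

end

theorem dvd_fifteen_of_sq_eq {p q s d : ℤ} (hd : Squarefree d) (hpd : IsCoprime p d)
    (hdq : d ∣ q) (h : s ^ 2 = 5 * d * (27 * p ^ 5 - 16 * q ^ 5)) : d ∣ 15 := by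
  obtain ⟨t, rfl⟩ : d ∣ s := (hd.dvd_pow_iff_dvd two_ne_zero).1
    ⟨5 * (27 * p ^ 5 - 16 * q ^ 5), by rw [h]; ring⟩
  obtain ⟨m, rfl⟩ := hdq
  have h135 : d ∣ 135 * p ^ 5 := ⟨t ^ 2 + 80 * d ^ 4 * m ^ 5, mul_left_cancel₀ hd.ne_zero
    (by linear_combination -h)⟩
  have := hpd.symm.pow_right.dvd_of_dvd_mul_right h135
  exact (hd.dvd_pow_iff_dvd three_ne_zero).1 (this.trans (by norm_num))

theorem exists_eq_intCast_of_sq_eq {y : ℚ} {n : ℤ} (h : y ^ 2 = n) : ∃ m : ℤ, y = m := by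
  have hint : IsIntegral ℤ (y ^ 2) := h ▸ isIntegral_algebraMap
  obtain ⟨m, hm⟩ := IsIntegrallyClosed.isIntegral_iff.1 (hint.of_pow two_pos)
  exact ⟨m, hm.symm⟩

theorem exists_sq_eq_of_rational_point {X Y : ℚ} (h : Y ^ 2 = 3 ^ 3 * 5 * X ^ 5 - 2 ^ 4 * 5) :
    ∃ t : ℤ, t ^ 2 = 5 * X.den * (27 * X.num ^ 5 - 16 * (X.den : ℤ) ^ 5) := by
  have hden : (X.den : ℚ) ≠ 0 := mod_cast X.den_nz
  have hsq : (Y * X.den ^ 3) ^ 2 =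
      (5 * X.den * (27 * X.num ^ 5 - 16 * (X.den : ℤ) ^ 5) : ℤ) := by
    push_cast
    rw [mul_pow, h]
    nth_rw 1 [← Rat.num_div_den X]
    field_simp
    ring
  obtain ⟨t, ht⟩ := exists_eq_intCast_of_sq_eq hsq
  exact ⟨t, by rw [ht] at hsq; exact_mod_cast hsq⟩

theorem no_rational_points_case7 (X Y : ℚ) :
    Y ^ 2 ≠ 3 ^ 3 * 5 * X ^ 5 - 2 ^ 4 * 5 := by
  intro h
  obtain ⟨t, ht⟩ := exists_sq_eq_of_rational_point h
  obtain ⟨d, w, hden, hd⟩ := Nat.sq_mul_squarefree X.den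
  have hq : (X.den : ℤ) = w ^ 2 * d := by rw [← hden]; push_cast; ring
  have hcop : IsCoprime X.num (w ^ 2 * d) := hq ▸ X.isCoprime_num_den
  have hw : (w : ℤ) ≠ 0 := by
    rintro hw
    simp [hw] at hq
  obtain ⟨s, rfl⟩ : (w : ℤ) ∣ t := (Int.pow_dvd_pow_iff two_ne_zero).1
    ⟨5 * d * (27 * X.num ^ 5 - 16 * (X.den : ℤ) ^ 5), by rw [ht, hq]; ring⟩
  have hs : s ^ 2 = 5 * d * (27 * X.num ^ 5 - 16 * (w ^ 2 * d) ^ 5) :=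
    mul_left_cancel₀ (pow_ne_zero 2 hw) (by rw [hq] at ht; linear_combination ht)
  have hd15 : (d : ℤ) ∣ 15 := dvd_fifteen_of_sq_eq (Int.squarefree_natCast.2 hd)
    hcop.of_mul_right_right (dvd_mul_left _ _) hs
  obtain ⟨r, rfl⟩ : 5 ∣ s := (by norm_num : Prime (5 : ℤ)).dvd_of_dvd_pow
    ⟨d * (27 * X.num ^ 5 - 16 * (w ^ 2 * d) ^ 5), by rw [hs]; ring⟩
  exact five_mul_sq_ne (r := r) (mod_cast hd15) hw ((IsCoprime.pow_right_iff two_pos).1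
    hcop.of_mul_right_left) hcop.of_mul_right_right (by linarith)
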